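/- arXiv:2402.02575 — 2 statements merged into one kernel-verified Lean document; each statement's English description precedes it below -/
import Mathlib

section
/- For every ε > 0 there exists an fiid labelling f : X → (V → Fin 5) of the 6-regular tree T_6 (where 0, 1, 2, 3 are colors and 4 is 'red') such that: (1) for every vertex v, μ({x : f(x)(v) = 4}) < ε; (2) for μ-a.e. x, every connected component of the subgraph of G induced on the set B_1(f(x)⁻¹(4)) = {v : f(x)(v) = 4, or some neighbour u of v has f(x)(u) = 4} is finite; and (3) for μ-a.e. x, every vertex v with f(x)(v) ≠ 4 satisfies f(x)(u) ≠ f(x)(v) for every neighbour u of v. -/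
open MeasureTheory
open scoped ENNReal


structure T6 {V : Type} (G : SimpleGraph V) : Prop where
  tree : G.IsTree
  reg : ∀ v, (G.neighborSet v).ncard = 6

namespace T6
variable {V : Type} {G : SimpleGraph V}

lemma parent_unique (h : T6 G) {r w a b : V} (ha : G.Adj a w) (hb : G.Adj b w)
    (hda : G.dist r a + 1 = G.dist r w) (hdb : G.dist r b + 1 = G.dist r w) : a = b := by
  obtain ⟨p, hp, hpl⟩ := h.tree.connected.exists_path_of_dist r a
  obtain ⟨q, hq, hql⟩ := h.tree.connected.exists_path_of_dist r b
  have h1 : (p.concat ha).IsPath := by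
    apply SimpleGraph.Walk.isPath_of_length_eq_dist
    rw [SimpleGraph.Walk.length_concat]; omega
  have h2 : (q.concat hb).IsPath := by
    apply SimpleGraph.Walk.isPath_of_length_eq_dist
    rw [SimpleGraph.Walk.length_concat]; omega
  have := (h.tree.isAcyclic.subsingleton_path r w).elim ⟨_, h1⟩ ⟨_, h2⟩
  have h3 : p.concat ha = q.concat hb := congrArg Subtype.val this
  have h4 := congrArg SimpleGraph.Walk.penultimate h3
  simpa using h4

lemma exists_parent (h : T6 G) {r w : V} (hne : r ≠ w) :
    ∃ a, G.Adj a w ∧ G.dist r a + 1 = G.dist r w := by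
  obtain ⟨p, hp, hpl⟩ := h.tree.connected.exists_path_of_dist r w
  have hn : ¬ p.Nil := fun hn => hne hn.eq
  have hadj := p.adj_penultimate hn
  refine ⟨p.penultimate, hadj, ?_⟩
  have h1 : G.dist r p.penultimate ≤ p.length - 1 := by
    have := SimpleGraph.dist_le p.dropLast
    simpa using this
  have h0 : 0 < p.length := by
    rw [hpl]; exact h.tree.connected.pos_dist_of_ne hne
  rcases h.tree.dist_eq_dist_add_one_of_adj r hadj with h2 | h2 <;> omega

lemma fin_nb (h : T6 G) (v : V) : (G.neighborSet v).Finite :=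
  Set.finite_of_ncard_ne_zero (by rw [h.reg v]; norm_num)

lemma tri (h : T6 G) (a b c : V) : G.dist a c ≤ G.dist a b + G.dist b c :=
  h.tree.connected.dist_triangle

/-- a non-backtracking sequence -/
def NB (G : SimpleGraph V) (p : ℕ → V) (n : ℕ) : Prop :=
  (∀ i < n, G.Adj (p i) (p (i+1))) ∧ (∀ i, i + 2 ≤ n → p (i+2) ≠ p i)

lemma NB.dist_aux (h : T6 G) {p : ℕ → V} {n : ℕ} (hp : NB G p n) (i : ℕ) :
    ∀ k, i + k ≤ n → G.dist (p i) (p (i+k)) = k := by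
  intro k
  induction k using Nat.strong_induction_on with
  | _ k ih =>
    intro hk
    rcases k with _ | _ | k
    · simp
    · rw [SimpleGraph.dist_eq_one_iff_adj]; exact hp.1 i (by omega)
    · have h1 := ih (k+1) (by omega) (by omega)
      have h0 := ih k (by omega) (by omega)
      have a1 := hp.1 (i+k) (by omega)
      have a2 := hp.1 (i+k+1) (by omega)
      have := hp.2 (i+k) (by omega)
      rcases h.tree.dist_eq_dist_add_one_of_adj (p i) a2 with h2 | h2
      · exfalso
        apply this
        refine h.parent_unique (r := p i) (w := p (i+k+1)) a2.symm a1 ?_ ?_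
        · rw [h2]
        · rw [h0, show i + k + 1 = i + (k+1) by ring, h1]
      · rw [show i + (k+1+1) = i + k + 1 + 1 by ring, h2, show i + k + 1 = i + (k+1) by ring, h1]

lemma NB.dist (h : T6 G) {p : ℕ → V} {n : ℕ} (hp : NB G p n) {i k : ℕ} (hik : i ≤ k) (hk : k ≤ n) :
    G.dist (p i) (p k) = k - i := by
  have := NB.dist_aux h hp i (k - i) (by omega)
  rwa [show i + (k - i) = k by omega] at this

lemma NB.inj (h : T6 G) {p : ℕ → V} {n : ℕ} (hp : NB G p n) {i k : ℕ} (hi : i ≤ n) (hk : k ≤ n)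
    (he : p i = p k) : i = k := by
  rcases le_total i k with h1 | h1
  · have := NB.dist h hp h1 hk
    rw [he, SimpleGraph.dist_self] at this; omega
  · have := NB.dist h hp h1 hi
    rw [he, SimpleGraph.dist_self] at this; omega

/-- any two vertices are joined by a non-backtracking sequence -/
lemma exists_NB (h : T6 G) (u v : V) : ∃ p : ℕ → V, NB G p (G.dist u v) ∧ p 0 = u ∧ p (G.dist u v) = v := by
  obtain ⟨w, hw, hl⟩ := h.tree.connected.exists_path_of_dist u v
  refine ⟨w.getVert, ⟨?_, ?_⟩, by simp, by rw [← hl]; simp⟩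
  · intro i hi; exact w.adj_getVert_succ (by omega)
  · intro i hi he
    have := hw.getVert_injOn (by simp; omega) (by simp; omega) he
    omega

lemma ball_fin_card (h : T6 G) (v : V) (r : ℕ) :
    {w | G.dist v w ≤ r}.Finite ∧ {w | G.dist v w ≤ r}.ncard ≤ 7 ^ r := by
  induction r with
  | zero =>
    have : {w | G.dist v w ≤ 0} = {v} := by
      ext w; simp [h.tree.connected.dist_eq_zero_iff, eq_comm]
    rw [this]; simp
  | succ r ih =>
    classical
    obtain ⟨hf, hc⟩ := ih
    have hsub : {w | G.dist v w ≤ r + 1} ⊆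
        ((hf.toFinset.biUnion fun w => insert w (h.fin_nb w).toFinset : Finset V) : Set V) := by
      intro w hw
      simp only [Finset.coe_biUnion, Set.mem_iUnion]
      by_cases hvw : v = w
      · refine ⟨v, ?_, ?_⟩ <;> simp [hvw]
      · obtain ⟨a, ha, hd⟩ := h.exists_parent hvw
        refine ⟨a, ?_, ?_⟩
        · simp at hw ⊢; omega
        · simp; right; exact ha
    refine ⟨Set.Finite.subset (Finset.finite_toSet _) hsub, ?_⟩
    refine (Set.ncard_le_ncard hsub (Finset.finite_toSet _)).trans ?_
    rw [Set.ncard_coe_finset]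
    refine (Finset.card_biUnion_le_card_mul _ _ 7 ?_).trans ?_
    · intro w _
      refine (Finset.card_insert_le _ _).trans ?_
      rw [← Set.ncard_eq_toFinset_card _ (h.fin_nb w), h.reg w]
    · rw [← Set.ncard_eq_toFinset_card _ hf, pow_succ]
      exact Nat.mul_le_mul_right _ hc

end T6

open Classical in
/-- finite closed balls -/
noncomputable def Bl {V : Type} (G : SimpleGraph V) (v : V) (r : ℕ) : Finset V :=
  if h : {w | G.dist v w ≤ r}.Finite then h.toFinset else ∅

namespace T6
variable {V : Type} {G : SimpleGraph V}

lemma mem_Bl (h : T6 G) {v w : V} {r : ℕ} : w ∈ Bl G v r ↔ G.dist v w ≤ r := by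
  unfold Bl
  rw [dif_pos (h.ball_fin_card v r).1]; simp

lemma mem_Bl_comm (h : T6 G) {v w : V} {r : ℕ} : w ∈ Bl G v r ↔ v ∈ Bl G w r := by
  rw [h.mem_Bl, h.mem_Bl, SimpleGraph.dist_comm]

lemma card_Bl (h : T6 G) (v : V) (r : ℕ) : (Bl G v r).card ≤ 7 ^ r := by
  unfold Bl
  rw [dif_pos (h.ball_fin_card v r).1, ← Set.ncard_eq_toFinset_card _ (h.ball_fin_card v r).1]
  exact (h.ball_fin_card v r).2

lemma exists_far_nb (h : T6 G) (v w : V) : ∃ a, G.Adj w a ∧ G.dist v a = G.dist v w + 1 := by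
  by_contra! hc
  have : (G.neighborSet w).Subsingleton := by
    intro a ha b hb
    have ha' : G.Adj w a := ha
    have hb' : G.Adj w b := hb
    refine h.parent_unique (r := v) ha'.symm hb'.symm ?_ ?_
    · rcases h.tree.dist_eq_dist_add_one_of_adj v ha' with h1 | h1
      · exact h1.symm
      · exact absurd h1 (hc a ha')
    · rcases h.tree.dist_eq_dist_add_one_of_adj v hb' with h1 | h1
      · exact h1.symm
      · exact absurd h1 (hc b hb')
  have := (h.fin_nb w).to_subtype
  have h1 := Set.ncard_le_one_iff_subsingleton.mpr ‹_›
  have := h.reg w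
  have hf := h.fin_nb w
  omega

lemma exists_at_dist (h : T6 G) (v : V) (r : ℕ) : ∃ w, G.dist v w = r := by
  induction r with
  | zero => exact ⟨v, by simp⟩
  | succ r ih =>
    obtain ⟨w, hw⟩ := ih
    obtain ⟨a, _, ha⟩ := h.exists_far_nb v w
    exact ⟨a, by omega⟩

lemma le_card_Bl (h : T6 G) (v : V) (r : ℕ) : r + 1 ≤ (Bl G v r).card := by
  choose f hf using h.exists_at_dist v
  have := Finset.card_le_card_of_injOn (s := Finset.range (r+1)) (t := Bl G v r) f
    (by intro i hi; simp at hi; simp only [Finset.mem_coe]; rw [h.mem_Bl, hf]; omega)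
    (by intro i _ k _ he; rw [← hf i, ← hf k]; rw [he])
  simpa using this

lemma iso_dist (h : T6 G) (φ : G ≃g G) (u v : V) : G.dist (φ u) (φ v) = G.dist u v := by
  obtain ⟨p, hp, h0, h1⟩ := h.exists_NB u v
  have : NB G (fun i => φ (p i)) (G.dist u v) := by
    refine ⟨fun i hi => φ.map_adj_iff.mpr (hp.1 i hi), fun i hi he => hp.2 i hi (φ.injective he)⟩
  have := NB.dist h this (Nat.zero_le _) le_rfl
  simpa [h0, h1] using this

end T6

namespace T6
variable {V : Type} {G : SimpleGraph V}

/-- local bijections give automorphisms -/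
lemma iso_of_cover (h : T6 G) (φ : V → V)
    (hb : ∀ w, Set.BijOn φ (G.neighborSet w) (G.neighborSet (φ w))) :
    ∃ ψ : G ≃g G, ∀ w, ψ w = φ w := by
  have hadj : ∀ {a b}, G.Adj a b → G.Adj (φ a) (φ b) := fun {a b} hab => (hb a).mapsTo hab
  have hdist : ∀ a b, G.dist (φ a) (φ b) = G.dist a b := by
    intro a b
    obtain ⟨p, hp, h0, h1⟩ := h.exists_NB a b
    have : NB G (fun i => φ (p i)) (G.dist a b) := by
      refine ⟨fun i hi => hadj (hp.1 i hi), fun i hi he => hp.2 i hi ?_⟩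
      exact (hb (p (i+1))).injOn (hp.1 (i+1) (by omega)) (hp.1 i (by omega)).symm he
    have := NB.dist h this (Nat.zero_le _) le_rfl
    simpa [h0, h1] using this
  have hinj : Function.Injective φ := by
    intro a b hab
    have := hdist a b
    rw [hab, SimpleGraph.dist_self] at this
    exact h.tree.connected.dist_eq_zero_iff.mp this.symm
  have hsurj : Function.Surjective φ := by
    intro y
    have : Nonempty V := h.tree.connected.nonempty
    obtain ⟨a⟩ := this
    obtain ⟨p, hp, h0, h1⟩ := h.exists_NB (φ a) y
    have : ∀ i, i ≤ G.dist (φ a) y → ∃ b, φ b = p i := by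
      intro i
      induction i with
      | zero => intro _; exact ⟨a, h0.symm⟩
      | succ i ih =>
        intro hi
        obtain ⟨b, hb'⟩ := ih (by omega)
        have := hp.1 i (by omega)
        rw [← hb'] at this
        obtain ⟨c, _, hc⟩ := (hb b).surjOn this
        exact ⟨c, hc⟩
    obtain ⟨b, hb'⟩ := this _ le_rfl
    exact ⟨b, by rw [hb', h1]⟩
  refine ⟨⟨Equiv.ofBijective φ ⟨hinj, hsurj⟩, ?_⟩, fun w => rfl⟩
  intro a b
  change G.Adj (φ a) (φ b) ↔ G.Adj a b
  rw [← SimpleGraph.dist_eq_one_iff_adj, hdist, SimpleGraph.dist_eq_one_iff_adj]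

lemma bij0 (h : T6 G) (a b : V) : ∃ e : V → V, Set.BijOn e (G.neighborSet a) (G.neighborSet b) := by
  have : Nonempty V := ⟨a⟩
  apply (h.fin_nb a).exists_bijOn_of_encard_eq
  rw [← (h.fin_nb a).cast_ncard_eq, ← (h.fin_nb b).cast_ncard_eq, h.reg, h.reg]

lemma bij_swap [DecidableEq V] {S T : Set V} {e : V → V} (he : Set.BijOn e S T) {x y : V} (hx : x ∈ T) (hy : y ∈ T) :
    Set.BijOn (fun w => Equiv.swap x y (e w)) S T := by
  have : Set.BijOn (Equiv.swap x y) T T := by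
    refine ⟨?_, (Equiv.injective _).injOn, ?_⟩
    · intro z hz
      rw [Equiv.swap_apply_def]; split_ifs <;> assumption
    · intro z hz
      refine ⟨Equiv.swap x y z, ?_, by simp⟩
      rw [Equiv.swap_apply_def]; split_ifs <;> assumption
  exact this.comp he

lemma bij1 (h : T6 G) {a b p p' : V} (hp : G.Adj a p) (hp' : G.Adj b p') :
    ∃ e : V → V, Set.BijOn e (G.neighborSet a) (G.neighborSet b) ∧ e p = p' := by
  classical
  obtain ⟨e, he⟩ := h.bij0 a b
  exact ⟨_, bij_swap he (he.mapsTo hp) hp', by simp⟩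

lemma bij2 (h : T6 G) {a b p p' q q' : V} (hp : G.Adj a p) (hp' : G.Adj b p')
    (hq : G.Adj a q) (hq' : G.Adj b q') (hpq : q ≠ p) (hpq' : q' ≠ p') :
    ∃ e : V → V, Set.BijOn e (G.neighborSet a) (G.neighborSet b) ∧ e p = p' ∧ e q = q' := by
  classical
  obtain ⟨e, he, hep⟩ := h.bij1 hp hp'
  refine ⟨_, bij_swap he (he.mapsTo hq) hq', ?_, by simp⟩
  rw [hep]
  apply Equiv.swap_apply_of_ne_of_ne
  · intro hc
    rw [← hep] at hc
    exact hpq (he.injOn hq hp hc.symm)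
  · exact hpq'.symm

lemma exists_ch (h : T6 G) {P Q : ℕ → V} {n : ℕ} (hP : NB G P n) (hQ : NB G Q n) (w b w' b' : V) :
    ∃ e : V → V, Set.BijOn e (G.neighborSet w) (G.neighborSet b) ∧
      (G.Adj w w' → G.Adj b b' → e w' = b') ∧
      (∀ i < n, w = P i → b = Q i → (0 < i → w' = P (i-1) ∧ b' = Q (i-1)) →
        ¬ (i = 0 ∧ G.Adj w w') → e (P (i+1)) = Q (i+1)) := by
  by_cases hq : ∃ i < n, w = P i ∧ b = Q i ∧ (0 < i → w' = P (i-1) ∧ b' = Q (i-1)) ∧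
        ¬ (i = 0 ∧ G.Adj w w')
  · obtain ⟨i, hi, hw, hb, h1, h2⟩ := hq
    have key : ∃ e : V → V, Set.BijOn e (G.neighborSet w) (G.neighborSet b) ∧
      (G.Adj w w' → G.Adj b b' → e w' = b') ∧ e (P (i+1)) = Q (i+1) := by
      have aP := hP.1 i hi
      have aQ := hQ.1 i hi
      rw [← hw] at aP
      rw [← hb] at aQ
      by_cases hp : G.Adj w w' ∧ G.Adj b b'
      · have hi0 : 0 < i := by
          by_contra h0
          exact h2 ⟨by omega, hp.1⟩
        obtain ⟨hw', hb'⟩ := h1 hi0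
        have nP := hP.2 (i-1) (by omega)
        have nQ := hQ.2 (i-1) (by omega)
        rw [show i - 1 + 2 = i + 1 by omega, ← hw'] at nP
        rw [show i - 1 + 2 = i + 1 by omega, ← hb'] at nQ
        obtain ⟨e, he, h3, h4⟩ := h.bij2 hp.1 hp.2 aP aQ nP nQ
        exact ⟨e, he, fun _ _ => h3, h4⟩
      · obtain ⟨e, he, h3⟩ := h.bij1 aP aQ
        exact ⟨e, he, fun a b => absurd ⟨a, b⟩ hp, h3⟩
    obtain ⟨e, he, h3, h4⟩ := key
    refine ⟨e, he, h3, ?_⟩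
    intro k hk hwk _ _ _
    have : k = i := NB.inj h hP hk.le hi.le (by rw [← hwk, hw])
    rw [this]; exact h4
  · by_cases hp : G.Adj w w' ∧ G.Adj b b'
    · obtain ⟨e, he, h3⟩ := h.bij1 hp.1 hp.2
      exact ⟨e, he, fun _ _ => h3, fun i hi a b c d => absurd ⟨i, hi, a, b, c, d⟩ hq⟩
    · obtain ⟨e, he⟩ := h.bij0 w b
      exact ⟨e, he, fun a b => absurd ⟨a, b⟩ hp, fun i hi a b c d => absurd ⟨i, hi, a, b, c, d⟩ hq⟩

lemma exists_swap (h : T6 G) (u v : V) : ∃ ψ : G ≃g G, ψ u = v ∧ ψ v = u := by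
  classical
  obtain ⟨P, hP, hP0, hPn⟩ := h.exists_NB u v
  set n := G.dist u v with hn
  set Q : ℕ → V := fun i => P (n - i) with hQd
  have hQ : NB G Q n := by
    refine ⟨fun i hi => ?_, fun i hi => ?_⟩
    · have := hP.1 (n - (i+1)) (by omega)
      rw [show n - (i+1) + 1 = n - i by omega] at this
      exact this.symm
    · have := hP.2 (n - (i+2)) (by omega)
      rw [show n - (i+2) + 2 = n - i by omega] at this
      exact this.symm
  choose ch hch1 hch2 hch3 using h.exists_ch hP hQ
  have hpar : ∀ w, ∃ a, (w = u → a = u) ∧ (w ≠ u → G.Adj a w ∧ G.dist u a + 1 = G.dist u w) := by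
    intro w
    by_cases hw : w = u
    · exact ⟨u, fun _ => rfl, fun hh => absurd hw hh⟩
    · obtain ⟨a, ha⟩ := h.exists_parent (r := u) (w := w) (fun hh => hw hh.symm)
      exact ⟨a, fun hh => absurd hh hw, fun _ => ha⟩
  choose par hpar1 hpar2 using hpar
  have hparle : ∀ w, G.dist u (par w) ≤ G.dist u w := by
    intro w
    by_cases hw : w = u
    · rw [hpar1 w hw, hw]
    · have := (hpar2 w hw).2; omega
  let F : ℕ → V → V := fun k => Nat.rec (fun _ => v)
    (fun k φ w => if G.dist u w ≤ k then φ w else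
      ch (par w) (φ (par w)) (par (par w)) (φ (par (par w))) w) k
  have F0 : ∀ w, F 0 w = v := fun w => rfl
  have FS : ∀ k w, F (k+1) w = if G.dist u w ≤ k then F k w else
      ch (par w) (F k (par w)) (par (par w)) (F k (par (par w))) w := fun k w => rfl
  have Fst : ∀ w k, G.dist u w ≤ k → F k w = F (G.dist u w) w := by
    intro w k hk
    induction k with
    | zero => rw [show G.dist u w = 0 by omega]
    | succ k ih =>
      rcases Nat.lt_or_ge k (G.dist u w) with h1 | h1
      · rw [show G.dist u w = k + 1 by omega]
      · rw [FS, if_pos h1, ih h1]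
  set φ : V → V := fun w => F (G.dist u w) w with hφ
  have hφu : φ u = v := by simp only [hφ]; rw [SimpleGraph.dist_self]; exact F0 u
  have hφw : ∀ w, w ≠ u → φ w = ch (par w) (φ (par w)) (par (par w)) (φ (par (par w))) w := by
    intro w hw
    have h1 := (hpar2 w hw).2
    have h2 := hparle (par w)
    simp only [hφ]
    rw [← h1, FS, if_neg (by omega), Fst (par w) _ le_rfl, Fst (par (par w)) _ h2]
  have hadj : ∀ w, w ≠ u → G.Adj (φ w) (φ (par w)) := by
    intro w hw
    have h1 : ch (par w) (φ (par w)) (par (par w)) (φ (par (par w))) w ∈ G.neighborSet (φ (par w)) :=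
      (hch1 (par w) (φ (par w)) (par (par w)) (φ (par (par w)))).mapsTo (hpar2 w hw).1
    rw [← hφw w hw] at h1
    exact SimpleGraph.Adj.symm h1
  have heq : ∀ w c, G.Adj w c → φ c = ch w (φ w) (par w) (φ (par w)) c := by
    intro w c hwc
    rcases h.tree.dist_eq_dist_add_one_of_adj u hwc with h1 | h1
    · have hw : w ≠ u := by
        rintro rfl; simp at h1
      have : par w = c := h.parent_unique (r := u) (hpar2 w hw).1 hwc.symm (hpar2 w hw).2 h1.symm
      rw [← this]
      exact (hch2 w (φ w) (par w) (φ (par w)) (hpar2 w hw).1.symm (hadj w hw)).symm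
    · have hc : c ≠ u := by
        rintro rfl; simp at h1
      have : par c = w := h.parent_unique (r := u) (hpar2 c hc).1 hwc (hpar2 c hc).2 h1.symm
      have h2 := hφw c hc
      rw [this] at h2; exact h2
  have hcov : ∀ w, Set.BijOn φ (G.neighborSet w) (G.neighborSet (φ w)) := by
    intro w
    exact (hch1 w (φ w) (par w) (φ (par w))).congr (fun c hc => (heq w c hc).symm)
  obtain ⟨ψ, hψ⟩ := h.iso_of_cover φ hcov
  have hpath : ∀ i, i ≤ n → φ (P i) = Q i := by
    intro i
    induction i using Nat.strong_induction_on with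
    | _ i ih =>
      intro hi
      rcases i with _ | i
      · rw [hP0, hφu]; simp [hQd, hPn]
      · rw [heq (P i) (P (i+1)) (hP.1 i (by omega))]
        have hd : ∀ k, k ≤ n → G.dist u (P k) = k := by
          intro k hk
          have := NB.dist h hP (Nat.zero_le k) hk
          rwa [hP0] at this
        apply hch3 _ _ _ _ i (by omega) rfl (ih i (by omega) (by omega))
        · intro hi0
          have hne : P i ≠ u := by
            intro hc
            have := hd i (by omega)
            rw [hc, SimpleGraph.dist_self] at this
            omega
          have hpp : par (P i) = P (i-1) := by
            refine h.parent_unique (r := u) (hpar2 _ hne).1 ?_ (hpar2 _ hne).2 ?_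
            · have := hP.1 (i-1) (by omega)
              rwa [show i - 1 + 1 = i by omega] at this
            · rw [hd i (by omega), hd (i-1) (by omega)]; omega
          rw [hpp]
          exact ⟨rfl, ih (i-1) (by omega) (by omega)⟩
        · rintro ⟨h0, h1⟩
          subst h0
          rw [hP0, hpar1 u rfl] at h1
          exact G.loopless.irrefl _ h1
  refine ⟨ψ, by rw [hψ, hφu], ?_⟩
  rw [hψ]
  have := hpath n le_rfl
  rw [hPn] at this
  rw [this]
  simp [hQd, hP0]

end T6


def act {V : Type} {G : SimpleGraph V} (φ : G ≃g G) (x : V → ℝ) : V → ℝ := fun u => x (φ.symm u)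

noncomputable def kap (n : ℕ) (t : ℝ) : ℕ := min ⌊(n:ℝ) * t⌋₊ n

lemma kap_meas (n : ℕ) : Measurable (kap n) := by
  unfold kap
  have : Measurable (fun t : ℝ => ⌊(n:ℝ) * t⌋₊) := Nat.measurable_floor.comp (by fun_prop)
  exact this.min measurable_const

/-- the facts about the measure that we use -/
structure Mu {V : Type} (G : SimpleGraph V) (μ : Measure (V → ℝ)) : Prop where
  t6 : T6 G
  prob : IsProbabilityMeasure μ
  inv : ∀ φ : G ≃g G, MeasurePreserving (act φ) μ μ
  coll : ∀ a b : V, a ≠ b → ∀ n q : ℕ, 0 < n →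
    μ {x | kap n (x a) = q ∧ kap n (x b) = q} ≤ (n:ℝ≥0∞)⁻¹ * (n:ℝ≥0∞)⁻¹

lemma kap_vol (n q : ℕ) (hn : 0 < n) :
    (volume.restrict (Set.Icc (0:ℝ) 1)) {t | kap n t = q} ≤ (n:ℝ≥0∞)⁻¹ := by
  have hm : MeasurableSet {t | kap n t = q} := kap_meas n (measurableSet_singleton q)
  rw [Measure.restrict_apply hm]
  have hn' : (0:ℝ) < n := by exact_mod_cast hn
  have : {t | kap n t = q} ∩ Set.Icc (0:ℝ) 1 ⊆ Set.Icc ((q:ℝ)/n) (((q:ℝ)+1)/n) := by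
    rintro t ⟨h1, h0, h2⟩
    simp only [kap, Set.mem_ofPred_eq] at h1
    have h3 : (0:ℝ) ≤ n * t := by positivity
    have h4 : ⌊(n:ℝ)*t⌋₊ ≤ n := by
      apply Nat.floor_le_of_le
      nlinarith
    rw [min_eq_left h4] at h1
    have h5 := Nat.floor_le h3
    have h6 := Nat.lt_floor_add_one ((n:ℝ)*t)
    rw [h1] at h5 h6
    constructor
    · rw [div_le_iff₀ hn']; linarith
    · rw [le_div_iff₀ hn']; linarith
  refine (measure_mono this).trans ?_
  rw [Real.volume_Icc, show ((q:ℝ)+1)/n - q/n = (n:ℝ)⁻¹ by field_simp; ring, ENNReal.ofReal_inv_of_pos hn']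
  simp

lemma Mu.mk' {V : Type} {G : SimpleGraph V} (h : T6 G) (μ : Measure (V → ℝ)) [IsProbabilityMeasure μ]
    (hμ : ∀ s : Finset V,
      Measure.map (fun (x : V → ℝ) (v : s) => x v) μ
        = Measure.pi (fun _ : s => volume.restrict (Set.Icc (0:ℝ) 1))) : Mu G μ := by
  have hp : IsProbabilityMeasure (volume.restrict (Set.Icc (0:ℝ) 1)) := ⟨by simp⟩
  have hinf : μ = Measure.infinitePi (fun _ : V => volume.restrict (Set.Icc (0:ℝ) 1)) := by
    refine IsProjectiveLimit.unique (P := fun I : Finset V => Measure.pi (fun _ : I => volume.restrict (Set.Icc (0:ℝ) 1))) ?_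
      (Measure.isProjectiveLimit_infinitePi _)
    intro s
    exact hμ s
  refine ⟨h, inferInstance, ?_, ?_⟩
  · intro φ
    refine ⟨by unfold act; fun_prop, ?_⟩
    have := Measure.infinitePi_map_piCongrLeft (X := fun _ : V => ℝ)
      (μ := fun _ : V => volume.restrict (Set.Icc (0:ℝ) 1)) φ.toEquiv
    rw [← hinf] at this
    convert this using 2
    ext x u
    have := MeasurableEquiv.piCongrLeft_apply_apply (β := fun _ : V => ℝ) φ.toEquiv x (φ.symm u)
    have h2 : φ.toEquiv (φ.symm u) = u := φ.apply_symm_apply u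
    rw [h2] at this
    exact this.symm
  · intro a b hab n q hn
    classical
    have h1 : μ {x | kap n (x a) = q ∧ kap n (x b) = q} =
        μ (Set.pi (({a, b} : Finset V) : Set V) (fun _ => {t | kap n t = q})) := by
      congr 1
      ext x
      simp
    have hm : MeasurableSet {t | kap n t = q} := kap_meas n (measurableSet_singleton q)
    rw [h1, hinf, Measure.infinitePi_pi _ (fun _ _ => hm), Finset.prod_pair hab]
    exact mul_le_mul' (kap_vol n q hn) (kap_vol n q hn)

/-- equivariance of a labelling -/
def Eqv {V A : Type} (G : SimpleGraph V) (f : (V → ℝ) → V → A) : Prop :=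
  ∀ (φ : G ≃g G) x v, f (act φ x) (φ v) = f x v

namespace Mu
variable {V : Type} {G : SimpleGraph V} {μ : Measure (V → ℝ)}

lemma map_Bl (h : T6 G) (φ : G ≃g G) (v : V) (r : ℕ) :
    Bl G (φ v) r = (Bl G v r).map φ.toEquiv.toEmbedding := by
  ext w
  rw [Finset.mem_map_equiv, h.mem_Bl, h.mem_Bl]
  have := h.iso_dist φ v (φ.symm w)
  rw [φ.apply_symm_apply] at this
  rw [this]; rfl

lemma const (h : Mu G μ) {F : (V → ℝ) → V → ℝ≥0∞} (hF : ∀ u, Measurable (fun x => F x u))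
    (he : Eqv G F) (u v : V) : ∫⁻ x, F x u ∂μ = ∫⁻ x, F x v ∂μ := by
  obtain ⟨φ, h1, h2⟩ := h.t6.exists_swap u v
  rw [← (h.inv φ).lintegral_comp (hF v)]
  congr 1; ext x
  rw [← h1, he]

lemma const_prob (h : Mu G μ) {F : (V → ℝ) → V → Prop} (hF : ∀ u, Measurable (fun x => F x u))
    (he : Eqv G F) (u v : V) : μ {x | F x u} = μ {x | F x v} := by
  obtain ⟨φ, h1, h2⟩ := h.t6.exists_swap u v
  rw [← (h.inv φ).measure_preimage (measurableSet_setOfPred.2 (hF v)).nullMeasurableSet]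
  congr 1; ext x
  simp only [Set.mem_ofPred_eq, Set.mem_preimage]
  have := he φ x u
  rw [h1] at this
  rw [this]

lemma mtp_pair (h : Mu G μ) {F : (V → ℝ) → V → V → ℝ≥0∞}
    (hF : ∀ u v, Measurable (fun x => F x u v))
    (he : ∀ (φ : G ≃g G) x u v, F (act φ x) (φ u) (φ v) = F x u v) (u v : V) :
    ∫⁻ x, F x u v ∂μ = ∫⁻ x, F x v u ∂μ := by
  obtain ⟨φ, h1, h2⟩ := h.t6.exists_swap u v
  rw [← (h.inv φ).lintegral_comp (hF v u)]
  congr 1; ext x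
  have := he φ x u v
  rw [h1, h2] at this
  exact this.symm

lemma mtp (h : Mu G μ) {F : (V → ℝ) → V → V → ℝ≥0∞}
    (hF : ∀ u v, Measurable (fun x => F x u v))
    (he : ∀ (φ : G ≃g G) x u v, F (act φ x) (φ u) (φ v) = F x u v) (o : V) (r : ℕ) :
    ∫⁻ x, ∑ v ∈ Bl G o r, F x o v ∂μ = ∫⁻ x, ∑ v ∈ Bl G o r, F x v o ∂μ := by
  rw [lintegral_finsetSum _ (fun v _ => hF _ _), lintegral_finsetSum _ (fun v _ => hF _ _)]
  exact Finset.sum_congr rfl (fun v _ => h.mtp_pair hF he o v)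

end Mu


open Classical in
noncomputable def ind (p : Prop) : ℝ≥0∞ := if p then 1 else 0

lemma ind_true {p : Prop} (h : p) : ind p = 1 := by simp [ind, h]
lemma ind_false {p : Prop} (h : ¬ p) : ind p = 0 := by simp [ind, h]
lemma ind_le_one (p : Prop) : ind p ≤ 1 := by unfold ind; split_ifs <;> simp
lemma ind_mono {p q : Prop} (h : p → q) : ind p ≤ ind q := by
  by_cases hp : p
  · rw [ind_true hp, ind_true (h hp)]
  · rw [ind_false hp]; simp

lemma ind_meas {X : Type} [MeasurableSpace X] {p : X → Prop} (hp : Measurable p) :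
    Measurable (fun x => ind (p x)) := by
  unfold ind
  exact Measurable.ite (measurableSet_setOfPred.2 hp) measurable_const measurable_const

lemma lint_ind {X : Type} [MeasurableSpace X] (μ : Measure X) {p : X → Prop} (hp : Measurable p) :
    ∫⁻ x, ind (p x) ∂μ = μ {x | p x} := by
  rw [← lintegral_indicator_one (measurableSet_setOfPred.2 hp)]
  congr 1

section
variable {V : Type}

/-- validity -/
def Val (G : SimpleGraph V) (P : ℕ → ℕ → ℕ → Prop) (J : ℕ) (ℓ : V → ℕ) : Prop :=
  (∀ w w', w ≠ w' → P (G.dist w w') (ℓ w) (ℓ w')) ∧ ∀ w, ℓ w < J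

structure Pars where
  P : ℕ → ℕ → ℕ → Prop
  D : ℕ
  J : ℕ
  wt : ℕ → ℕ
  R : ℕ
  m : ℕ
  far : ∀ d a b, a < J → b < J → D ≤ d → P d a b
  wt2 : ∀ a, wt a ≤ 2

open Classical in
def ImpTo (G : SimpleGraph V) (s : Pars) (ℓ : V → ℕ) (v : V) (ℓ' : V → ℕ) : Prop :=
  Val G s.P s.J ℓ' ∧ (∑ w ∈ Bl G v s.R, if ℓ' w = ℓ w then 0 else 1) ≤ s.m ∧
    ∑ w ∈ Bl G v s.R, s.wt (ℓ' w) + 1 ≤ ∑ w ∈ Bl G v s.R, s.wt (ℓ w)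

noncomputable def patch (G : SimpleGraph V) (R : ℕ) (v : V) (a ℓ : V → ℕ) : V → ℕ :=
  fun w => if G.dist v w ≤ R then a w else ℓ w

def Imp (G : SimpleGraph V) (s : Pars) (ℓ : V → ℕ) (v : V) : Prop :=
  ∃ a : V →₀ ℕ, ImpTo G s ℓ v (patch G s.R v a ℓ)

structure Fi (G : SimpleGraph V) (s : Pars) (f : (V → ℝ) → V → ℕ) : Prop where
  meas : ∀ v, Measurable (fun x => f x v)
  eqv : Eqv G f
  val : ∀ x, Val G s.P s.J (f x)

variable {G : SimpleGraph V}

lemma act_symm_act (φ : G ≃g G) (x : V → ℝ) : act φ.symm (act φ x) = x := by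
  ext u; simp [act]

lemma eqv_of_imp {S : (V → ℝ) → V → Prop} (h : ∀ (φ : G ≃g G) x v, S x v → S (act φ x) (φ v)) :
    Eqv G S := by
  intro φ x v
  refine propext ⟨fun hs => ?_, h φ x v⟩
  have := h φ.symm _ _ hs
  rwa [act_symm_act, φ.symm_apply_apply] at this

lemma eqv_of_imp2 {S : (V → ℝ) → V → V → Prop}
    (h : ∀ (φ : G ≃g G) x v w, S x v w → S (act φ x) (φ v) (φ w)) :
    ∀ (φ : G ≃g G) x v w, S (act φ x) (φ v) (φ w) = S x v w := by
  intro φ x v w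
  refine propext ⟨fun hs => ?_, h φ x v w⟩
  have := h φ.symm _ _ _ hs
  rwa [act_symm_act, φ.symm_apply_apply, φ.symm_apply_apply] at this

lemma Eqv.comp {f : (V → ℝ) → V → ℕ} (h : Eqv G f) (φ : G ≃g G) (x : V → ℝ) :
    f (act φ x) = f x ∘ φ.symm := by
  ext w
  have := h φ x (φ.symm w)
  rwa [φ.apply_symm_apply] at this

lemma Eqv.pred {f : (V → ℝ) → V → ℕ} (h : Eqv G f) {I : (V → ℕ) → V → Prop}
    (hI : ∀ (φ : G ≃g G) ℓ v, I ℓ v → I (ℓ ∘ φ.symm) (φ v)) : Eqv G (fun x v => I (f x) v) := by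
  apply eqv_of_imp
  intro φ x v hs
  rw [h.comp]; exact hI φ _ _ hs

lemma symm_dist (h : T6 G) (φ : G ≃g G) (v w : V) : G.dist v (φ.symm w) = G.dist (φ v) w := by
  rw [← h.iso_dist φ, φ.apply_symm_apply]

lemma sum_Bl_iso (h : T6 G) {A : Type} [AddCommMonoid A] (φ : G ≃g G) (v : V) (r : ℕ) (F : V → A) :
    ∑ w ∈ Bl G (φ v) r, F (φ.symm w) = ∑ w ∈ Bl G v r, F w := by
  rw [Mu.map_Bl h, Finset.sum_map]
  apply Finset.sum_congr rfl
  intro w _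
  congr 1
  exact φ.symm_apply_apply w

lemma Val.iso (h : T6 G) {P J} {ℓ : V → ℕ} (hv : Val G P J ℓ) (φ : G ≃g G) : Val G P J (ℓ ∘ φ.symm) := by
  refine ⟨fun w w' hne => ?_, fun w => hv.2 _⟩
  have := hv.1 (φ.symm w) (φ.symm w') (fun he => hne (φ.symm.injective he))
  rwa [h.iso_dist φ.symm] at this

lemma ImpTo.iso (h : T6 G) {s : Pars} {ℓ ℓ' : V → ℕ} {v : V} (hi : ImpTo G s ℓ v ℓ') (φ : G ≃g G) :
    ImpTo G s (ℓ ∘ φ.symm) (φ v) (ℓ' ∘ φ.symm) := by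
  classical
  obtain ⟨h1, h2, h3⟩ := hi
  refine ⟨h1.iso h φ, ?_, ?_⟩
  · have := sum_Bl_iso h φ v s.R (fun w => if ℓ' w = ℓ w then 0 else 1)
    refine le_trans (le_of_eq ?_) h2
    convert this using 3
    exact Iff.rfl
  · have e1 := sum_Bl_iso h φ v s.R (fun w => s.wt (ℓ' w))
    have e2 := sum_Bl_iso h φ v s.R (fun w => s.wt (ℓ w))
    simp only [Function.comp]
    rw [e1, e2]; exact h3

lemma patch_iso (h : T6 G) (φ : G ≃g G) (R : ℕ) (v : V) (a ℓ : V → ℕ) :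
    patch G R v a ℓ ∘ φ.symm = patch G R (φ v) (a ∘ φ.symm) (ℓ ∘ φ.symm) := by
  ext w
  simp only [patch, Function.comp, symm_dist h]

lemma Imp.iso (h : T6 G) {s : Pars} (φ : G ≃g G) (ℓ : V → ℕ) (v : V) (hi : Imp G s ℓ v)  :
    Imp G s (ℓ ∘ φ.symm) (φ v) := by
  obtain ⟨a, ha⟩ := hi
  refine ⟨Finsupp.equivMapDomain φ.toEquiv a, ?_⟩
  have := ha.iso h φ
  rw [patch_iso h] at this
  convert this using 2
  ext w; rfl

lemma val_meas [Countable V] {P J} {g : (V → ℝ) → V → ℕ} (hg : ∀ v, Measurable (fun x => g x v)) :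
    Measurable (fun x => Val G P J (g x)) := by
  refine Measurable.and ?_ ?_
  · refine Measurable.forall fun w => Measurable.forall fun w' => Measurable.forall fun _ => ?_
    exact (Measurable.of_discrete (f := fun p : ℕ × ℕ => P (G.dist w w') p.1 p.2)).comp
      ((hg w).prodMk (hg w'))
  · refine Measurable.forall fun w => ?_
    exact (Measurable.of_discrete (f := fun p : ℕ => p < J)).comp (hg w)

lemma le_meas {a b : (V → ℝ) → ℕ} (ha : Measurable a) (hb : Measurable b) :
    Measurable (fun x => a x ≤ b x) :=
  (Measurable.of_discrete (f := fun p : ℕ × ℕ => p.1 ≤ p.2)).comp (ha.prodMk hb)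

lemma eq_meas {a b : (V → ℝ) → ℕ} (ha : Measurable a) (hb : Measurable b) :
    Measurable (fun x => a x = b x) :=
  (Measurable.of_discrete (f := fun p : ℕ × ℕ => p.1 = p.2)).comp (ha.prodMk hb)

lemma impTo_meas [Countable V] {s : Pars} {g g' : (V → ℝ) → V → ℕ} (hg : ∀ v, Measurable (fun x => g x v))
    (hg' : ∀ v, Measurable (fun x => g' x v)) (v : V) :
    Measurable (fun x => ImpTo G s (g x) v (g' x)) := by
  classical
  refine Measurable.and (val_meas hg') (Measurable.and ?_ ?_)
  · refine le_meas ?_ measurable_const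
    refine Finset.measurable_sum _ fun w _ => ?_
    exact Measurable.ite (measurableSet_setOfPred.2 (eq_meas (hg' w) (hg w))) measurable_const measurable_const
  · refine le_meas ?_ ?_
    · refine Measurable.add (M := ℕ) (Finset.measurable_sum _ fun w _ => ?_) measurable_const
      exact Measurable.of_discrete.comp (hg' w)
    · refine (Finset.measurable_sum _ fun w _ => ?_)
      exact Measurable.of_discrete.comp (hg w)

lemma imp_meas [Countable V] {s : Pars} {g : (V → ℝ) → V → ℕ} (hg : ∀ v, Measurable (fun x => g x v)) (v : V) :
    Measurable (fun x => Imp G s (g x) v) := by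
  refine Measurable.exists fun a => impTo_meas hg ?_ v
  intro w
  unfold patch
  split_ifs
  · exact measurable_const
  · exact hg w

/-- selection -/
def Sel (G : SimpleGraph V) (s : Pars) (R' n q : ℕ) (π : ℕ → ℕ) (g : (V → ℝ) → V → ℕ) (x : V → ℝ) (v : V) : Prop :=
  kap n (x v) = q ∧ (∀ a b, G.dist v a ≤ R' → G.dist v b ≤ R' → kap n (x a) = kap n (x b) → a = b) ∧
  ImpTo G s (g x) v (patch G s.R v (fun w => π (kap n (x w))) (g x))

open Classical in
noncomputable def upd (G : SimpleGraph V) (s : Pars) (R' n q : ℕ) (π : ℕ → ℕ) (g : (V → ℝ) → V → ℕ) (x : V → ℝ) (w : V) : ℕ :=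
  if ∃ v, Sel G s R' n q π g x v ∧ G.dist v w ≤ s.R then π (kap n (x w)) else g x w

variable {s : Pars} {R' n q : ℕ} {π : ℕ → ℕ} {g : (V → ℝ) → V → ℕ}

lemma kx_meas (n : ℕ) (w : V) : Measurable (fun x : V → ℝ => kap n (x w)) :=
  (kap_meas n).comp (measurable_pi_apply w)

lemma sel_meas [Countable V] (hg : ∀ v, Measurable (fun x => g x v)) (v : V) :
    Measurable (fun x => Sel G s R' n q π g x v) := by
  refine Measurable.and (eq_meas (kx_meas n v) measurable_const) (Measurable.and ?_ (impTo_meas hg ?_ v))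
  · refine Measurable.forall fun a => Measurable.forall fun b => Measurable.forall fun _ =>
      Measurable.forall fun _ => Measurable.imp (eq_meas (kx_meas n a) (kx_meas n b)) measurable_const
  · intro w
    unfold patch
    split_ifs
    · exact Measurable.of_discrete.comp (kx_meas n w)
    · exact hg w

lemma sel_eqv (h : T6 G) (hg : Eqv G g) : Eqv G (Sel G s R' n q π g) := by
  apply eqv_of_imp
  rintro φ x v ⟨h1, h2, h3⟩
  refine ⟨?_, ?_, ?_⟩
  · simpa [act] using h1
  · intro a b ha hb hab
    rw [← symm_dist h] at ha hb
    exact φ.symm.injective (h2 _ _ ha hb hab)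
  · have := h3.iso h φ
    rw [patch_iso h] at this
    rw [hg.comp]
    exact this

lemma upd_meas [Countable V] (hg : ∀ v, Measurable (fun x => g x v)) (w : V) :
    Measurable (fun x => upd G s R' n q π g x w) := by
  unfold upd
  refine Measurable.ite (measurableSet_setOfPred.2 ?_) ?_ (hg w)
  · exact Measurable.exists fun v => (sel_meas hg v).and measurable_const
  · exact Measurable.of_discrete.comp (kx_meas n w)

lemma near_eqv (h : T6 G) (hg : Eqv G g) :
    Eqv G (fun x w => ∃ v, Sel G s R' n q π g x v ∧ G.dist v w ≤ s.R) := by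
  apply eqv_of_imp
  rintro φ x w ⟨v, hv, hd⟩
  exact ⟨φ v, (sel_eqv h hg φ x v).symm ▸ hv, by rwa [h.iso_dist]⟩

lemma upd_eqv (h : T6 G) (hg : Eqv G g) : Eqv G (upd G s R' n q π g) := by
  classical
  intro φ x w
  unfold upd
  have := near_eqv (s := s) (R' := R') (n := n) (q := q) (π := π) h hg φ x w
  simp only at this
  simp only [this, hg φ x w]
  congr 2
  simp [act]

lemma sel_unique (hR : s.R + s.R + s.D ≤ R') {x v v'} (h1 : Sel G s R' n q π g x v) (h2 : Sel G s R' n q π g x v')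
    (hd : G.dist v v' ≤ s.R + s.R + s.D) : v = v' :=
  h1.2.1 v v' (by simp) (hd.trans hR) (by rw [h1.1, h2.1])

lemma upd_near {x v w} (hv : Sel G s R' n q π g x v) (hd : G.dist v w ≤ s.R) :
    upd G s R' n q π g x w = π (kap n (x w)) := by
  unfold upd; rw [if_pos ⟨v, hv, hd⟩]

lemma upd_patch (_h : T6 G) (_hR : s.R + s.R + s.D ≤ R') {x v w} (hv : Sel G s R' n q π g x v) 
    (hd : G.dist v w ≤ s.R ∨ ¬ ∃ v, Sel G s R' n q π g x v ∧ G.dist v w ≤ s.R) :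
    upd G s R' n q π g x w = patch G s.R v (fun w => π (kap n (x w))) (g x) w := by
  unfold patch
  rcases hd with hd | hd
  · rw [upd_near hv hd, if_pos hd]
  · rw [if_neg (fun hc => hd ⟨v, hv, hc⟩)]
    unfold upd
    rw [if_neg hd]

lemma upd_val (h : T6 G) (hg : Fi G s g) (hR : s.R + s.R + s.D ≤ R') (x : V → ℝ) :
    Val G s.P s.J (upd G s R' n q π g x) := by
  have hlt : ∀ w, upd G s R' n q π g x w < s.J := by
    intro w
    by_cases hw : ∃ v, Sel G s R' n q π g x v ∧ G.dist v w ≤ s.R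
    · obtain ⟨v, hv, hd⟩ := hw
      rw [upd_patch h hR hv (Or.inl hd)]
      exact hv.2.2.1.2 w
    · unfold upd; rw [if_neg hw]; exact (hg.val x).2 w
  refine ⟨fun w w' hne => ?_, hlt⟩
  by_cases hw : ∃ v, Sel G s R' n q π g x v ∧ G.dist v w ≤ s.R
  · obtain ⟨v, hv, hd⟩ := hw
    by_cases hw' : ∃ v, Sel G s R' n q π g x v ∧ G.dist v w' ≤ s.R
    · obtain ⟨v', hv', hd'⟩ := hw'
      by_cases hvv : v = v'
      · subst hvv
        rw [upd_patch h hR hv (Or.inl hd), upd_patch h hR hv (Or.inl hd')]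
        exact hv.2.2.1.1 w w' hne
      · apply s.far _ _ _ (hlt w) (hlt w')
        by_contra hc
        apply hvv
        apply sel_unique hR hv hv'
        have t1 := h.tri v w v'
        have t2 := h.tri w w' v'
        rw [SimpleGraph.dist_comm (u := w') (v := v')] at t2
        omega
    · rw [upd_patch h hR hv (Or.inl hd), upd_patch h hR hv (Or.inr hw')]
      exact hv.2.2.1.1 w w' hne
  · by_cases hw' : ∃ v, Sel G s R' n q π g x v ∧ G.dist v w' ≤ s.R
    · obtain ⟨v', hv', hd'⟩ := hw'
      rw [upd_patch h hR hv' (Or.inr hw), upd_patch h hR hv' (Or.inl hd')]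
      exact hv'.2.2.1.1 w w' hne
    · unfold upd; rw [if_neg hw, if_neg hw']; exact (hg.val x).1 w w' hne

lemma upd_fi [Countable V] (h : T6 G) (hg : Fi G s g) (hR : s.R + s.R + s.D ≤ R') :
    Fi G s (upd G s R' n q π g) :=
  ⟨upd_meas hg.meas, upd_eqv h hg.eqv, upd_val h hg hR⟩

end

section
variable {V : Type} {G : SimpleGraph V} {μ : Measure (V → ℝ)} {s : Pars} {R' n q : ℕ} {π : ℕ → ℕ} {g : (V → ℝ) → V → ℕ}

lemma wt_meas {g : (V → ℝ) → V → ℕ} (hg : ∀ v, Measurable (fun x => g x v)) (wt : ℕ → ℕ) (v : V) :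
    Measurable (fun x => (wt (g x v) : ℝ≥0∞)) :=
  (Measurable.of_discrete (f := fun a : ℕ => (wt a : ℝ≥0∞))).comp (hg v)

lemma ne_meas {a b : (V → ℝ) → ℕ} (ha : Measurable a) (hb : Measurable b) :
    Measurable (fun x => a x ≠ b x) :=
  (Measurable.of_discrete (f := fun p : ℕ × ℕ => p.1 ≠ p.2)).comp (ha.prodMk hb)

lemma round_dist [Countable V] (h : Mu G μ) (hg : Fi G s g) (hR : s.R + s.R + s.D ≤ R') (o : V) :
    μ {x | g x o ≠ upd G s R' n q π g x o} ≤ s.m * μ {x | Sel G s R' n q π g x o} := by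
  classical
  set g' := upd G s R' n q π g with hg'
  have fg' : Fi G s g' := upd_fi h.t6 hg hR
  set S := Sel G s R' n q π g with hS
  have mS : ∀ v, Measurable (fun x => S x v) := sel_meas hg.meas
  have eS : Eqv G S := sel_eqv h.t6 hg.eqv
  let F : (V → ℝ) → V → V → ℝ≥0∞ := fun x v w => ind (S x v ∧ G.dist v w ≤ s.R ∧ g x w ≠ g' x w)
  have mF : ∀ u v, Measurable (fun x => F x u v) := fun u v =>
    ind_meas ((mS u).and (measurable_const.and (ne_meas (hg.meas v) (fg'.meas v))))
  have eF : ∀ (φ : G ≃g G) x u v, F (act φ x) (φ u) (φ v) = F x u v := by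
    intro φ x u v
    simp only [F]
    rw [eS φ x u, h.t6.iso_dist, hg.eqv, fg'.eqv]
  rw [← lint_ind μ (ne_meas (hg.meas o) (fg'.meas o)), ← lint_ind μ (mS o),
    ← lintegral_const_mul _ (ind_meas (mS o))]
  calc ∫⁻ x, ind (g x o ≠ g' x o) ∂μ ≤ ∫⁻ x, ∑ v ∈ Bl G o s.R, F x v o ∂μ := by
        refine lintegral_mono fun x => ?_
        by_cases hx : g x o ≠ g' x o
        · have : ∃ v, S x v ∧ G.dist v o ≤ s.R := by
            by_contra hc
            apply hx
            rw [hg']; unfold upd; rw [if_neg hc]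
          obtain ⟨v, hv, hd⟩ := this
          have h1 : F x v o ≤ ∑ v ∈ Bl G o s.R, F x v o :=
            Finset.single_le_sum (f := fun v => F x v o) (fun _ _ => zero_le) (by rw [h.t6.mem_Bl, SimpleGraph.dist_comm]; exact hd)
          refine le_trans ?_ h1
          exact ind_mono fun _ => ⟨hv, hd, hx⟩
        · rw [ind_false hx]; exact zero_le
    _ = ∫⁻ x, ∑ v ∈ Bl G o s.R, F x o v ∂μ := (h.mtp mF eF o s.R).symm
    _ ≤ _ := by
        refine lintegral_mono fun x => ?_
        by_cases hx : S x o
        · rw [ind_true hx, mul_one]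
          have h1 : (((∑ w ∈ Bl G o s.R, if patch G s.R o (fun w => π (kap n (x w))) (g x) w = g x w then 0 else 1 : ℕ)) : ℝ≥0∞) ≤ s.m := by
            exact_mod_cast hx.2.2.2.1
          refine le_trans ?_ h1
          push_cast
          apply Finset.sum_le_sum
          intro w hw
          rw [h.t6.mem_Bl] at hw
          simp only [F]
          have e := upd_patch h.t6 hR hx (Or.inl hw)
          rw [← e]
          by_cases hgg : g' x w = g x w
          · rw [ind_false (fun hc => hc.2.2 hgg.symm)]; simp
          · rw [if_neg hgg]; exact ind_le_one _
        · rw [ind_false hx, mul_zero]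
          apply le_of_eq
          apply Finset.sum_eq_zero
          intro w _
          exact ind_false (fun hc => hx hc.1)

lemma round_wt [Countable V] (h : Mu G μ) (hg : Fi G s g) (hR : s.R + s.R + s.D ≤ R') (o : V) :
    ∫⁻ x, (s.wt (upd G s R' n q π g x o) : ℝ≥0∞) ∂μ + μ {x | Sel G s R' n q π g x o}
      ≤ ∫⁻ x, (s.wt (g x o) : ℝ≥0∞) ∂μ := by
  classical
  set g' := upd G s R' n q π g with hg'
  have fg' : Fi G s g' := upd_fi h.t6 hg hR
  set S := Sel G s R' n q π g with hS
  have mS : ∀ v, Measurable (fun x => S x v) := sel_meas hg.meas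
  have eS : Eqv G S := sel_eqv h.t6 hg.eqv
  let F : ((V → ℝ) → V → ℕ) → (V → ℝ) → V → V → ℝ≥0∞ := fun g x v w => ind (S x v ∧ G.dist v w ≤ s.R) * s.wt (g x w)
  have mF : ∀ g, Fi G s g → ∀ u v, Measurable (fun x => F g x u v) := fun g hg u v =>
    (ind_meas ((mS u).and measurable_const)).mul (wt_meas hg.meas _ _)
  have eF : ∀ g, Fi G s g → ∀ (φ : G ≃g G) x u v, F g (act φ x) (φ u) (φ v) = F g x u v := by
    intro g hg φ x u v
    simp only [F]
    rw [eS φ x u, h.t6.iso_dist, hg.eqv]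
  let N : (V → ℝ) → Prop := fun x => ∃ v, S x v ∧ G.dist v o ≤ s.R
  have mN : Measurable N := Measurable.exists fun v => (mS v).and measurable_const
  have mA : Measurable (fun x => ind (¬ N x) * (s.wt (g x o) : ℝ≥0∞)) :=
    (ind_meas mN.not).mul (wt_meas hg.meas _ _)
  have mSum : ∀ g, Fi G s g → Measurable (fun x => ∑ w ∈ Bl G o s.R, F g x o w) := fun g hg =>
    Finset.measurable_sum _ fun w _ => mF g hg o w
  rw [← lint_ind μ (mS o)]
  calc ∫⁻ x, (s.wt (g' x o) : ℝ≥0∞) ∂μ + ∫⁻ x, ind (S x o) ∂μ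
      ≤ ∫⁻ x, (ind (¬ N x) * (s.wt (g x o) : ℝ≥0∞) + ∑ v ∈ Bl G o s.R, F g' x v o) ∂μ + ∫⁻ x, ind (S x o) ∂μ := by
        gcongr with x
        by_cases hx : N x
        · obtain ⟨v, hv, hd⟩ := hx
          have h1 : F g' x v o ≤ ∑ v ∈ Bl G o s.R, F g' x v o :=
            Finset.single_le_sum (f := fun v => F g' x v o) (fun _ _ => zero_le) (by rw [h.t6.mem_Bl, SimpleGraph.dist_comm]; exact hd)
          refine le_trans ?_ (le_trans h1 le_add_self)
          simp only [F]
          rw [ind_true ⟨hv, hd⟩, one_mul]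
        · rw [ind_true hx, one_mul]
          have : g' x o = g x o := by rw [hg']; unfold upd; rw [if_neg hx]
          rw [this]; exact le_self_add
    _ = ∫⁻ x, ind (¬ N x) * (s.wt (g x o) : ℝ≥0∞) ∂μ + (∫⁻ x, ∑ w ∈ Bl G o s.R, F g' x o w ∂μ + ∫⁻ x, ind (S x o) ∂μ) := by
        rw [lintegral_add_left mA, h.mtp (mF g' fg') (eF g' fg'), add_assoc]
    _ = ∫⁻ x, ind (¬ N x) * (s.wt (g x o) : ℝ≥0∞) ∂μ + ∫⁻ x, (∑ w ∈ Bl G o s.R, F g' x o w + ind (S x o)) ∂μ := by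
        rw [lintegral_add_left (mSum g' fg')]
    _ ≤ ∫⁻ x, ind (¬ N x) * (s.wt (g x o) : ℝ≥0∞) ∂μ + ∫⁻ x, ∑ w ∈ Bl G o s.R, F g x o w ∂μ := by
        gcongr with x
        by_cases hx : S x o
        · have h3 := hx.2.2.2.2
          have h4 : ∑ w ∈ Bl G o s.R, s.wt (g' x w) + 1 ≤ ∑ w ∈ Bl G o s.R, s.wt (g x w) := by
            refine le_trans (le_of_eq ?_) h3
            congr 1
            apply Finset.sum_congr rfl
            intro w hw
            rw [h.t6.mem_Bl] at hw
            rw [hg', upd_patch h.t6 hR hx (Or.inl hw)]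
          have e : ∀ g, ∑ w ∈ Bl G o s.R, F g x o w = ((∑ w ∈ Bl G o s.R, s.wt (g x w) : ℕ) : ℝ≥0∞) := by
            intro g
            push_cast
            apply Finset.sum_congr rfl
            intro w hw
            rw [h.t6.mem_Bl] at hw
            simp only [F]
            rw [ind_true ⟨hx, hw⟩, one_mul]
          rw [e, e, ind_true hx]
          exact_mod_cast h4
        · rw [ind_false hx, add_zero]
          apply Finset.sum_le_sum
          intro w _
          simp only [F]
          rw [ind_false (fun hc => hx hc.1)]; simp
    _ = ∫⁻ x, (ind (¬ N x) * (s.wt (g x o) : ℝ≥0∞) + ∑ w ∈ Bl G o s.R, F g x w o) ∂μ := by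
        rw [h.mtp (mF g hg) (eF g hg), lintegral_add_left mA]
    _ ≤ _ := by
        refine lintegral_mono fun x => ?_
        by_cases hx : N x
        · obtain ⟨v, hv, hd⟩ := hx
          have hvo : v ∈ Bl G o s.R := by rw [h.t6.mem_Bl, SimpleGraph.dist_comm]; exact hd
          rw [ind_false (not_not.mpr ⟨v, hv, hd⟩), zero_mul, zero_add,
            Finset.sum_eq_single_of_mem v hvo]
          · simp only [F]; rw [ind_true ⟨hv, hd⟩, one_mul]
          · intro b hb hbv
            simp only [F]
            rw [ind_false, zero_mul]
            rintro ⟨h1, h2⟩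
            apply hbv
            apply sel_unique hR h1 hv
            have := h.t6.tri b o v
            rw [SimpleGraph.dist_comm (u := o) (v := v)] at this
            omega
        · have : ∑ w ∈ Bl G o s.R, F g x w o = 0 := by
            apply Finset.sum_eq_zero
            intro w _
            simp only [F]
            rw [ind_false (fun hc => hx ⟨w, hc⟩), zero_mul]
          rw [this, ind_true hx, one_mul, add_zero]
end

section
variable {V : Type} {G : SimpleGraph V} {μ : Measure (V → ℝ)} {s : Pars}

def InjB (G : SimpleGraph V) (R' n : ℕ) (o : V) (x : V → ℝ) : Prop :=
  ∀ a b, G.dist o a ≤ R' → G.dist o b ≤ R' → kap n (x a) = kap n (x b) → a = b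

lemma kap_le (n : ℕ) (t : ℝ) : kap n t ≤ n := min_le_right _ _

lemma noninj_le (h : Mu G μ) (R' : ℕ) (o : V) {n : ℕ} (hn : 0 < n) :
    μ {x | ¬ InjB G R' n o x} ≤ ((Bl G o R').card * (Bl G o R').card * 2 : ℕ) * (n:ℝ≥0∞)⁻¹ := by
  classical
  have hsub : {x | ¬ InjB G R' n o x} ⊆ ⋃ t ∈ (((Bl G o R') ×ˢ (Bl G o R')).filter (fun p => p.1 ≠ p.2)) ×ˢ Finset.range (n+1),
      {x | kap n (x t.1.1) = t.2 ∧ kap n (x t.1.2) = t.2} := by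
    intro x hx
    simp only [Set.mem_ofPred_eq, InjB] at hx
    push Not at hx
    obtain ⟨a, b, ha, hb, hk, hab⟩ := hx
    simp only [Set.mem_iUnion]
    refine ⟨((a, b), kap n (x a)), ?_, rfl, hk.symm⟩
    simp only [Finset.mem_product, Finset.mem_filter, Finset.mem_range, h.t6.mem_Bl]
    have := kap_le n (x a)
    exact ⟨⟨⟨ha, hb⟩, hab⟩, by omega⟩
  refine (measure_mono hsub).trans ((measure_biUnion_finset_le _ _).trans ?_)
  have hb : ∀ t ∈ (((Bl G o R') ×ˢ (Bl G o R')).filter (fun p => p.1 ≠ p.2)) ×ˢ Finset.range (n+1),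
      μ {x | kap n (x t.1.1) = t.2 ∧ kap n (x t.1.2) = t.2} ≤ (n:ℝ≥0∞)⁻¹ * (n:ℝ≥0∞)⁻¹ := by
    intro t ht
    simp only [Finset.mem_product, Finset.mem_filter] at ht
    exact h.coll _ _ ht.1.2 n t.2 hn
  refine (Finset.sum_le_card_nsmul _ _ _ hb).trans ?_
  rw [nsmul_eq_mul, ← mul_assoc]
  gcongr
  rw [← div_eq_mul_inv]
  apply ENNReal.div_le_of_le_mul
  norm_cast
  rw [Finset.card_product, Finset.card_range]
  have h1 : (((Bl G o R') ×ˢ (Bl G o R')).filter (fun p => p.1 ≠ p.2)).card ≤ (Bl G o R').card * (Bl G o R').card := by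
    refine (Finset.card_filter_le _ _).trans ?_
    rw [Finset.card_product]
  have h2 : n + 1 ≤ 2 * n := by omega
  calc _ ≤ (Bl G o R').card * (Bl G o R').card * (2 * n) := Nat.mul_le_mul h1 h2
    _ = _ := by ring

lemma exists_n (h : Mu G μ) (R' : ℕ) (o : V) {η : ℝ≥0∞} (hη : η ≠ 0) :
    ∃ n, μ {x | ¬ InjB G R' n o x} ≤ η := by
  obtain ⟨n, hn⟩ := ENNReal.exists_inv_nat_lt (a := η / (((Bl G o R').card * (Bl G o R').card * 2 : ℕ)))
    (ENNReal.div_ne_zero.mpr ⟨hη, ENNReal.natCast_ne_top _⟩)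
  have hn0 : 0 < n := by
    rcases Nat.eq_zero_or_pos n with h0 | h0
    · subst h0; simp at hn
    · exact h0
  refine ⟨n, (noninj_le h R' o hn0).trans ?_⟩
  rw [mul_comm]
  exact ENNReal.mul_le_of_le_div hn.le

/-- extend a finite map -/
def ext0 {n J : ℕ} (p : Fin (n+1) → Fin J) : ℕ → ℕ := fun k => if hk : k < n + 1 then (p ⟨k, hk⟩ : ℕ) else 0

lemma exists_sel (h : T6 G) {R' n : ℕ} (hR : s.R ≤ R') {g : (V → ℝ) → V → ℕ} {x : V → ℝ} {o : V}
    (hi : InjB G R' n o x) (him : Imp G s (g x) o) :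
    ∃ (q : Fin (n+1)) (p : Fin (n+1) → Fin s.J), Sel G s R' n q (ext0 p) g x o := by
  classical
  obtain ⟨a, ha⟩ := him
  set ℓ' := patch G s.R o a (g x) with hℓ
  have hJ := ha.1.2
  have hk : ∀ w, kap n (x w) < n + 1 := fun w => by have := kap_le n (x w); omega
  let p : Fin (n+1) → Fin s.J := fun k =>
    if hw : ∃ w, G.dist o w ≤ R' ∧ kap n (x w) = k then ⟨ℓ' hw.choose, hJ _⟩ else ⟨ℓ' o, hJ _⟩
  have hp : ∀ w, G.dist o w ≤ R' → ext0 p (kap n (x w)) = ℓ' w := by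
    intro w hw
    unfold ext0
    rw [dif_pos (hk w)]
    simp only [p]
    have hex : ∃ w', G.dist o w' ≤ R' ∧ kap n (x w') = kap n (x w) := ⟨w, hw, rfl⟩
    rw [dif_pos hex]
    have := hex.choose_spec
    simp only
    rw [hi _ _ this.1 hw this.2]
  refine ⟨⟨kap n (x o), hk o⟩, p, rfl, hi, ?_⟩
  have : patch G s.R o (fun w => ext0 p (kap n (x w))) (g x) = ℓ' := by
    ext w
    unfold patch
    split_ifs with hw
    · exact hp w (hw.trans hR)
    · rw [hℓ]; unfold patch; rw [if_neg hw]
  rw [this]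
  exact ha

lemma exists_delta [Countable V] (h : Mu G μ) (R' : ℕ) (hR : s.R ≤ R') (o : V) {η : ℝ≥0∞} (hη : η ≠ 0) :
    ∃ n, ∃ δ : ℝ≥0∞, δ ≠ 0 ∧ ∀ g, Fi G s g → μ {x | Imp G s (g x) o} ≤ η ∨
      ∃ q π, δ ≤ μ {x | Sel G s R' n q π g x o} := by
  classical
  have hη2 : η / 2 ≠ 0 := ENNReal.div_ne_zero.mpr ⟨hη, by simp⟩
  obtain ⟨n, hn⟩ := exists_n h R' o hη2
  refine ⟨n, η / 2 / (Fintype.card (Fin (n+1) × (Fin (n+1) → Fin s.J)) : ℕ), 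
    ENNReal.div_ne_zero.mpr ⟨hη2, ENNReal.natCast_ne_top _⟩, ?_⟩
  intro g hg
  by_contra hc
  push Not at hc
  obtain ⟨hc1, hc2⟩ := hc
  apply absurd hc1
  rw [not_lt]
  have hsub : {x | Imp G s (g x) o} ⊆ {x | ¬ InjB G R' n o x} ∪
      ⋃ t ∈ (Finset.univ : Finset (Fin (n+1) × (Fin (n+1) → Fin s.J))), {x | Sel G s R' n t.1 (ext0 t.2) g x o} := by
    intro x hx
    by_cases hi : InjB G R' n o x
    · right
      obtain ⟨q, p, hqp⟩ := exists_sel h.t6 hR hi hx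
      simp only [Set.mem_iUnion]
      exact ⟨(q, p), Finset.mem_univ _, hqp⟩
    · left; exact hi
  refine (measure_mono hsub).trans ((measure_union_le _ _).trans ?_)
  calc _ ≤ η / 2 + η / 2 := by
        gcongr
        refine (measure_biUnion_finset_le _ _).trans ?_
        refine (Finset.sum_le_card_nsmul _ _ _ (fun t _ => (hc2 t.1 (ext0 t.2)).le)).trans ?_
        rw [nsmul_eq_mul, Finset.card_univ]
        exact ENNReal.mul_div_le
    _ = η := ENNReal.add_halves η

lemma stage_opt [Countable V] (h : Mu G μ) {f : (V → ℝ) → V → ℕ} (hf : Fi G s f) (o : V) {η : ℝ≥0∞} (hη : η ≠ 0) :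
    ∃ g, Fi G s g ∧ μ {x | Imp G s (g x) o} ≤ η ∧
      μ {x | f x o ≠ g x o} + s.m * ∫⁻ x, (s.wt (g x o) : ℝ≥0∞) ∂μ ≤ s.m * ∫⁻ x, (s.wt (f x o) : ℝ≥0∞) ∂μ ∧
      ∫⁻ x, (s.wt (g x o) : ℝ≥0∞) ∂μ ≤ ∫⁻ x, (s.wt (f x o) : ℝ≥0∞) ∂μ := by
  have := h.prob
  set R' := s.R + s.R + s.D with hR'
  obtain ⟨n, δ, hδ, hd⟩ := exists_delta (s := s) h R' (by omega) o hη
  by_contra hc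
  have key : ∀ N : ℕ, ∃ g, Fi G s g ∧
      μ {x | f x o ≠ g x o} + s.m * ∫⁻ x, (s.wt (g x o) : ℝ≥0∞) ∂μ ≤ s.m * ∫⁻ x, (s.wt (f x o) : ℝ≥0∞) ∂μ ∧
      ∫⁻ x, (s.wt (g x o) : ℝ≥0∞) ∂μ + N * δ ≤ ∫⁻ x, (s.wt (f x o) : ℝ≥0∞) ∂μ := by
    intro N
    induction N with
    | zero => exact ⟨f, hf, by simp, by simp⟩
    | succ N ih =>
      obtain ⟨g, hg, h1, h2⟩ := ih
      rcases hd g hg with h3 | ⟨q, π, h3⟩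
      · exact absurd ⟨g, hg, h3, h1, le_self_add.trans h2⟩ hc
      · have r1 := round_dist (n := n) (q := q) (π := π) h hg hR'.ge o
        have r2 := round_wt (n := n) (q := q) (π := π) h hg hR'.ge o
        refine ⟨_, upd_fi (n := n) (q := q) (π := π) h.t6 hg hR'.ge, ?_, ?_⟩
        · have hsub : {x | f x o ≠ upd G s R' n q π g x o} ⊆
              {x | f x o ≠ g x o} ∪ {x | g x o ≠ upd G s R' n q π g x o} := by
            intro x hx
            by_cases h4 : f x o = g x o
            · right
              simp only [Set.mem_ofPred_eq] at hx ⊢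
              rwa [← h4]
            · left; exact h4
          calc _ ≤ (μ {x | f x o ≠ g x o} + s.m * μ {x | Sel G s R' n q π g x o})
                + s.m * ∫⁻ x, (s.wt (upd G s R' n q π g x o) : ℝ≥0∞) ∂μ := by
                gcongr
                refine (measure_mono hsub).trans ((measure_union_le _ _).trans ?_)
                gcongr
            _ = μ {x | f x o ≠ g x o} + s.m * (∫⁻ x, (s.wt (upd G s R' n q π g x o) : ℝ≥0∞) ∂μ + μ {x | Sel G s R' n q π g x o}) := by ring
            _ ≤ μ {x | f x o ≠ g x o} + s.m * ∫⁻ x, (s.wt (g x o) : ℝ≥0∞) ∂μ := by gcongr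
            _ ≤ _ := h1
        · calc _ = (∫⁻ x, (s.wt (upd G s R' n q π g x o) : ℝ≥0∞) ∂μ + δ) + N * δ := by push_cast; ring
            _ ≤ ∫⁻ x, (s.wt (g x o) : ℝ≥0∞) ∂μ + N * δ := by
              gcongr
              refine le_trans ?_ r2
              gcongr
            _ ≤ _ := h2
  have hf2 : ∫⁻ x, (s.wt (f x o) : ℝ≥0∞) ∂μ ≤ 2 := by
    calc _ ≤ ∫⁻ x, 2 ∂μ := by
          gcongr with x
          exact_mod_cast s.wt2 _
      _ = 2 := by simp
  obtain ⟨N, hN⟩ := ENNReal.exists_nat_mul_gt hδ (b := 2) (by simp)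
  obtain ⟨g, _, _, h2⟩ := key N
  have := le_add_self.trans (h2.trans hf2)
  exact absurd hN (not_lt.mpr this)
end


def Dk (C k : ℕ) : ℕ := C * (k+1) * (k+2)

lemma Dk_mono (C : ℕ) {k j : ℕ} (h : k ≤ j) : Dk C k ≤ Dk C j := by
  unfold Dk; gcongr

def OKd (C : ℕ) (d a b : ℕ) : Prop :=
  (d = 1 → a = b → 4 ≤ a) ∧ (∀ k, a = 5 + k → b = 5 + k → Dk C k ≤ d) ∧ (5 ≤ a → 5 ≤ b → 4 ≤ d)

def ps (C j L : ℕ) : Pars where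
  P := OKd C
  D := Dk C j + 4
  J := j + 6
  wt := fun a => if a = 4 then 2 else if a = j + 5 then 1 else 0
  R := 2 * L + 2
  m := 2 * L + 3
  far := by
    intro d a b ha hb hd
    refine ⟨by omega, ?_, by omega⟩
    intro k hk _
    have := Dk_mono C (show k ≤ j by omega)
    omega
  wt2 := by intro a; split_ifs <;> omega

section
variable {V : Type} {G : SimpleGraph V} {C J : ℕ} {ℓ : V → ℕ}

lemma Val.proper (hv : Val G (OKd C) J ℓ) {a b : V} (hab : G.Adj a b) (h4 : ℓ a < 4) : ℓ a ≠ ℓ b := by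
  intro he
  have := (hv.1 a b hab.ne).1 (SimpleGraph.dist_eq_one_iff_adj.mpr hab) he
  omega

open T6 in
lemma path_shift (h : T6 G) (hv : Val G (OKd C) J ℓ) (hJ : 4 < J) {r : ℕ → V} {n t : ℕ} (hr : NB G r n) (ht : t ≤ n)
    (hl : ∀ i < t, ℓ (r (i+1)) < 4) (hl' : ∀ i, t < i → i ≤ n → ℓ (r (i-1)) < 4)
    (hu : ∀ i < t, ∀ w, G.Adj (r i) w → ℓ w = ℓ (r (i+1)) → w = r (i+1) ∨ (0 < i ∧ w = r (i-1)))
    (hu' : ∀ i, t < i → i ≤ n → ∀ w, G.Adj (r i) w → ℓ w = ℓ (r (i-1)) → w = r (i-1) ∨ (i < n ∧ w = r (i+1))) :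
    ∃ ℓ1, Val G (OKd C) J ℓ1 ∧ ℓ1 (r t) = 4 ∧ (∀ i < t, ℓ1 (r i) = ℓ (r (i+1))) ∧
      (∀ i, t < i → i ≤ n → ℓ1 (r i) = ℓ (r (i-1))) ∧ ∀ w, (∀ i ≤ n, w ≠ r i) → ℓ1 w = ℓ w := by
  classical
  let ix : V → ℕ := fun w => G.dist (r 0) w
  have hix : ∀ i ≤ n, ix (r i) = i := fun i hi => by
    have := NB.dist h hr (Nat.zero_le i) hi
    simpa using this
  let ℓ1 : V → ℕ := fun w => if ix w ≤ n ∧ r (ix w) = w then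
    (if ix w < t then ℓ (r (ix w + 1)) else if ix w = t then 4 else ℓ (r (ix w - 1))) else ℓ w
  have A : ℓ1 (r t) = 4 := by
    simp only [ℓ1]; rw [hix t ht, if_pos ⟨ht, rfl⟩, if_neg (by omega), if_pos rfl]
  have B : ∀ i < t, ℓ1 (r i) = ℓ (r (i+1)) := by
    intro i hi
    simp only [ℓ1]; rw [hix i (by omega), if_pos ⟨by omega, rfl⟩, if_pos hi]
  have B' : ∀ i, t < i → i ≤ n → ℓ1 (r i) = ℓ (r (i-1)) := by
    intro i hi hin
    simp only [ℓ1]; rw [hix i (by omega), if_pos ⟨by omega, rfl⟩, if_neg (by omega), if_neg (by omega)]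
  have E : ∀ w, (∀ i ≤ n, w ≠ r i) → ℓ1 w = ℓ w := by
    intro w hw
    simp only [ℓ1]; rw [if_neg]
    rintro ⟨h1, h2⟩
    exact hw _ h1 h2.symm
  refine ⟨ℓ1, ?_, A, B, B', E⟩
  have on4 : ∀ i ≤ n, ℓ1 (r i) ≤ 4 := by
    intro i hi
    rcases lt_trichotomy i t with h1 | h1 | h1
    · rw [B i h1]; exact (hl i h1).le
    · rw [h1, A]
    · rw [B' i h1 hi]; exact (hl' i h1 hi).le
  have off5 : ∀ w, 5 ≤ ℓ1 w → ℓ1 w = ℓ w := by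
    intro w hw
    apply E
    rintro i hi rfl
    have := on4 i hi
    omega
  have key : ∀ i ≤ n, i ≠ t → ∀ w, w ≠ r t → G.Adj (r i) w → ℓ1 (r i) ≠ ℓ1 w := by
    intro i hi hit w hw hadj he
    by_cases hon : ∃ k ≤ n, w = r k
    · obtain ⟨k, hk, rfl⟩ := hon
      have hkt : k ≠ t := by rintro rfl; exact hw rfl
      have hd := SimpleGraph.dist_eq_one_iff_adj.mpr hadj
      have hcase : k = i + 1 ∨ i = k + 1 := by
        rcases le_total i k with h1 | h1
        · rw [NB.dist h hr h1 hk] at hd; omega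
        · rw [SimpleGraph.dist_comm, NB.dist h hr h1 hi] at hd; omega
      have main : ∀ a, a + 1 ≤ n → a ≠ t → a + 1 ≠ t → ℓ1 (r a) ≠ ℓ1 (r (a+1)) := by
        intro a ha h1 h2
        rcases lt_or_gt_of_ne h1 with h3 | h3
        · rw [B a h3, B (a+1) (by omega)]
          exact hv.proper (hr.1 (a+1) (by omega)) (hl a h3)
        · rw [B' a h3 (by omega), B' (a+1) (by omega) ha]
          have := hr.1 (a-1) (by omega)
          rw [show a - 1 + 1 = a by omega] at this
          simp only [Nat.add_sub_cancel]
          exact hv.proper this (hl' a h3 (by omega))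
      rcases hcase with h1 | h1
      · subst h1; exact main i hk hit hkt he
      · subst h1; exact main k hi hkt hit he.symm
    · push Not at hon
      rw [E w hon] at he
      rcases lt_or_gt_of_ne hit with h3 | h3
      · rw [B i h3] at he
        rcases hu i h3 w hadj he.symm with h4 | ⟨_, h4⟩
        · exact hon _ (by omega) h4
        · exact hon _ (by omega) h4
      · rw [B' i h3 hi] at he
        rcases hu' i h3 hi w hadj he.symm with h4 | ⟨_, h4⟩
        · exact hon _ (by omega) h4
        · exact hon _ (by omega) h4
  refine ⟨fun w w' hne => ⟨?_, ?_, ?_⟩, ?_⟩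
  · intro hd he
    by_contra hlt
    have hadj := SimpleGraph.dist_eq_one_iff_adj.mp hd
    have hw : w ≠ r t := by rintro rfl; omega
    have hw' : w' ≠ r t := by rintro rfl; omega
    by_cases h1 : ∃ i ≤ n, w = r i
    · obtain ⟨i, hi, rfl⟩ := h1
      exact key i hi (by rintro rfl; exact hw rfl) w' hw' hadj he
    · by_cases h2 : ∃ i ≤ n, w' = r i
      · obtain ⟨i, hi, rfl⟩ := h2
        exact key i hi (by rintro rfl; exact hw' rfl) w hw hadj.symm he.symm
      · push Not at h1 h2
        rw [E w h1] at he hlt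
        rw [E w' h2] at he
        exact hv.proper hadj (by omega) he
  · intro k hk hk'
    rw [off5 w (by omega)] at hk
    rw [off5 w' (by omega)] at hk'
    exact (hv.1 w w' hne).2.1 k hk hk'
  · intro h5 h5'
    have e1 := off5 w h5
    have e2 := off5 w' h5'
    exact (hv.1 w w' hne).2.2 (by omega) (by omega)
  · intro w
    by_cases h1 : ∃ i ≤ n, w = r i
    · obtain ⟨i, hi, rfl⟩ := h1
      have := on4 i hi; omega
    · push Not at h1
      rw [E w h1]; exact hv.2 w

lemma val_update [DecidableEq V] (hv : Val G (OKd C) J ℓ) {x : V} {c : ℕ} (hc : c < J)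
    (h1 : c < 4 → ∀ w, G.Adj x w → ℓ w ≠ c)
    (h2 : 5 ≤ c → ∀ w, w ≠ x → (ℓ w = c → Dk C (c-5) ≤ G.dist x w) ∧ (5 ≤ ℓ w → 4 ≤ G.dist x w)) :
    Val G (OKd C) J (Function.update ℓ x c) := by
  refine ⟨fun w w' hne => ?_, fun w => ?_⟩
  · by_cases hw : w = x
    · subst hw
      rw [Function.update_self, Function.update_of_ne hne.symm]
      refine ⟨fun hd he => ?_, fun k hk hk' => ?_, fun h5 h5' => ?_⟩
      · by_contra hlt
        exact h1 (by omega) w' (SimpleGraph.dist_eq_one_iff_adj.mp hd) he.symm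
      · have := (h2 (by omega) w' hne.symm).1 (by omega)
        rwa [show c - 5 = k by omega] at this
      · exact (h2 h5 w' hne.symm).2 h5'
    · by_cases hw' : w' = x
      · subst hw'
        rw [Function.update_self, Function.update_of_ne hne, SimpleGraph.dist_comm]
        refine ⟨fun hd he => ?_, fun k hk hk' => ?_, fun h5 h5' => ?_⟩
        · by_contra hlt
          exact h1 (by omega) w (SimpleGraph.dist_eq_one_iff_adj.mp hd) he
        · have := (h2 (by omega) w hne).1 (by omega)
          rwa [show c - 5 = k by omega] at this
        · exact (h2 h5' w hne).2 h5
      · rw [Function.update_of_ne hw, Function.update_of_ne hw']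
        exact hv.1 w w' hne
  · by_cases hw : w = x
    · rw [hw, Function.update_self]; exact hc
    · rw [Function.update_of_ne hw]; exact hv.2 w

open T6 in
lemma imp_path (h : T6 G) {s : Pars} {ℓ ℓ' : V → ℕ} (hv : Val G s.P s.J ℓ') {r : ℕ → V} {n t : ℕ} (hr : NB G r n)
    (ht : t ≤ n) (hnR : n ≤ s.R) (hnm : n + 1 ≤ s.m) (hoff : ∀ w, (∀ i ≤ n, w ≠ r i) → ℓ' w = ℓ w)
    (hz : ∀ i ≤ n, i ≠ t → s.wt (ℓ' (r i)) = 0)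
    (hw : s.wt (ℓ' (r t)) + 1 ≤ ∑ i ∈ Finset.range (n+1), s.wt (ℓ (r i))) : Imp G s ℓ (r 0) := by
  classical
  have hd : ∀ i ≤ n, G.dist (r 0) (r i) = i := fun i hi => by
    have := NB.dist h hr (Nat.zero_le i) hi
    simpa using this
  let a : V →₀ ℕ := Finsupp.onFinset (Bl G (r 0) s.R) (fun w => if w ∈ Bl G (r 0) s.R then ℓ' w else 0)
    (by intro w hw; by_contra hc; simp [hc] at hw)
  have ha : patch G s.R (r 0) a ℓ = ℓ' := by
    ext w
    unfold patch
    split_ifs with hw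
    · simp [a, h.mem_Bl, hw]
    · symm; apply hoff
      rintro i hi rfl
      rw [hd i hi] at hw; omega
  refine ⟨a, ?_⟩
  rw [ha]
  set T := (Finset.range (n+1)).image r with hT
  have hTB : T ⊆ Bl G (r 0) s.R := by
    intro w hw
    simp only [hT, Finset.mem_image, Finset.mem_range] at hw
    obtain ⟨i, hi, rfl⟩ := hw
    rw [h.mem_Bl, hd i (by omega)]; omega
  have hTo : ∀ w, w ∉ T → ℓ' w = ℓ w := by
    intro w hw
    apply hoff
    rintro i hi rfl
    exact hw (Finset.mem_image_of_mem _ (by simp; omega))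
  have hsum : ∀ F : V → ℕ, ∑ w ∈ T, F w = ∑ i ∈ Finset.range (n+1), F (r i) := by
    intro F
    rw [hT, Finset.sum_image]
    intro i hi k hk he
    simp at hi hk
    exact NB.inj h hr (by omega) (by omega) he
  refine ⟨hv, ?_, ?_⟩
  · rw [← Finset.sum_subset hTB (fun w _ hw => by rw [if_pos (hTo w hw)]), hsum]
    calc _ ≤ ∑ i ∈ Finset.range (n+1), 1 := Finset.sum_le_sum (fun i _ => by split_ifs <;> omega)
      _ ≤ s.m := by simpa using hnm
  · rw [← Finset.sum_sdiff hTB, ← Finset.sum_sdiff hTB (f := fun w => s.wt (ℓ w)), hsum, hsum, add_assoc]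
    refine Nat.add_le_add (le_of_eq (Finset.sum_congr rfl fun w hw => ?_)) ?_
    · rw [hTo w (Finset.mem_sdiff.mp hw).2]
    · rw [Finset.sum_eq_single_of_mem t (by simp; omega)]
      · exact hw
      · intro i hi hit
        simp at hi
        exact hz i (by omega) hit
end


section
variable {V : Type} {G : SimpleGraph V} {C J : ℕ} {ℓ : V → ℕ}

def Ray (G : SimpleGraph V) (ℓ : V → ℕ) (p : ℕ → V) (n : ℕ) : Prop :=
  T6.NB G p n ∧ (∀ i < n, ℓ (p (i+1)) < 4) ∧
  (∀ i < n, ∀ w, G.Adj (p i) w → ℓ w = ℓ (p (i+1)) → w = p (i+1) ∨ (0 < i ∧ w = p (i-1)))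

lemma Ray.prefix {p : ℕ → V} {n k : ℕ} (hp : Ray G ℓ p n) (hk : k ≤ n) : Ray G ℓ p k :=
  ⟨⟨fun i hi => hp.1.1 i (by omega), fun i hi => hp.1.2 i (by omega)⟩,
    fun i hi => hp.2.1 i (by omega), fun i hi => hp.2.2 i (by omega)⟩

lemma Ray.congr {p q : ℕ → V} {n : ℕ} (hp : Ray G ℓ p n) (hq : ∀ i ≤ n, q i = p i) : Ray G ℓ q n := by
  refine ⟨⟨fun i hi => ?_, fun i hi => ?_⟩, fun i hi => ?_, fun i hi w hw he => ?_⟩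
  · rw [hq i (by omega), hq (i+1) (by omega)]; exact hp.1.1 i hi
  · rw [hq i (by omega), hq (i+2) (by omega)]; exact hp.1.2 i hi
  · rw [hq (i+1) (by omega)]; exact hp.2.1 i hi
  · rw [hq i (by omega)] at hw
    rw [hq (i+1) (by omega)] at he ⊢
    rw [hq (i-1) (by omega)]
    exact hp.2.2 i hi w hw he

lemma Ray.move (h : T6 G) (hv : Val G (OKd C) J ℓ) (hJ : 4 < J) {p : ℕ → V} {n : ℕ} (hp : Ray G ℓ p n) :
    ∃ ℓ1, Val G (OKd C) J ℓ1 ∧ ℓ1 (p n) = 4 ∧ (∀ i < n, ℓ1 (p i) = ℓ (p (i+1))) ∧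
      ∀ w, (∀ i ≤ n, w ≠ p i) → ℓ1 w = ℓ w := by
  obtain ⟨ℓ1, h1, h2, h3, _, h5⟩ := path_shift h hv hJ hp.1 le_rfl hp.2.1 (fun i h1 h2 => by omega) hp.2.2
    (fun i h1 h2 => by omega)
  exact ⟨ℓ1, h1, h2, h3, h5⟩

lemma Ray.settle_imp [DecidableEq V] (h : T6 G) {j L : ℕ} {p : ℕ → V} {n : ℕ} (hp : Ray G ℓ p n) (h0 : ℓ (p 0) = 4)
    (hn : n ≤ 2 * L + 2) {ℓ1 : V → ℕ} (h3 : ∀ i < n, ℓ1 (p i) = ℓ (p (i+1)))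
    (h4 : ∀ w, (∀ i ≤ n, w ≠ p i) → ℓ1 w = ℓ w) {c : ℕ} (hc : c ≠ 4)
    (hv : Val G (OKd C) (j+6) (Function.update ℓ1 (p n) c)) : Imp G (ps C j L) ℓ (p 0) := by
  refine imp_path h (s := ps C j L) hv hp.1 le_rfl hn (by simp only [ps]; omega) ?_ ?_ ?_
  · intro w hw
    rw [Function.update_of_ne (hw n le_rfl)]; exact h4 w hw
  · intro i hi hin
    have hne : p i ≠ p n := fun he => hin (T6.NB.inj h hp.1 hi le_rfl he)
    rw [Function.update_of_ne hne, h3 i (by omega)]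
    have := hp.2.1 i (by omega)
    simp only [ps]
    rw [if_neg (by omega), if_neg (by omega)]
  · rw [Function.update_self]
    calc (ps C j L).wt c + 1 ≤ 2 := by
          simp only [ps]; rw [if_neg hc]; split_ifs <;> omega
      _ = (ps C j L).wt (ℓ (p 0)) := by simp [ps, h0]
      _ ≤ _ := Finset.single_le_sum (f := fun i => (ps C j L).wt (ℓ (p i))) (fun _ _ => Nat.zero_le _) (by simp)

lemma Ray.extend (h : T6 G) {j L : ℕ} (hv : Val G (OKd C) (j+6) ℓ) {p : ℕ → V} {n : ℕ} (hp : Ray G ℓ p n)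
    (h0 : ℓ (p 0) = 4) (hn : n ≤ 2 * L + 2) (hI : ¬ Imp G (ps C j L) ℓ (p 0)) :
    ∃ q, Ray G ℓ q (n+1) ∧ q 0 = p 0 := by
  classical
  obtain ⟨ℓ1, h1, h2, h3, h4⟩ := hp.move h hv (by omega)
  have hit : ∀ c < 4, ∃ w, G.Adj (p n) w ∧ ℓ1 w = c := by
    intro c hc
    by_contra hcon
    push Not at hcon
    exact hI (hp.settle_imp h h0 hn h3 h4 (by omega)
      (val_update h1 (by omega) (fun _ w hw => hcon w hw) (fun h5 => by omega)))
  have hoff : ∀ w, G.Adj (p n) w → (0 < n → w ≠ p (n-1)) → ℓ1 w = ℓ w ∧ ∀ i ≤ n, w ≠ p i := by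
    intro w hw hne
    have : ∀ i ≤ n, w ≠ p i := by
      rintro i hi rfl
      have hd := SimpleGraph.dist_eq_one_iff_adj.mpr hw
      rw [SimpleGraph.dist_comm, T6.NB.dist h hp.1 hi le_rfl] at hd
      exact hne (by omega) (by congr 1; omega)
    exact ⟨h4 w this, this⟩
  set N := (h.fin_nb (p n)).toFinset with hN
  have hNc : N.card = 6 := by rw [hN, ← Set.ncard_eq_toFinset_card _ (h.fin_nb (p n))]; exact h.reg _
  have hmem : ∀ w, w ∈ N ↔ G.Adj (p n) w := by intro w; simp [hN]
  obtain ⟨w, hw, hlt, hwp, huniq⟩ : ∃ w, G.Adj (p n) w ∧ ℓ w < 4 ∧ (∀ i ≤ n, w ≠ p i) ∧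
      ∀ w', G.Adj (p n) w' → ℓ w' = ℓ w → w' = w ∨ (0 < n ∧ w' = p (n-1)) := by
    rcases Nat.eq_zero_or_pos n with hn0 | hn0
    · obtain ⟨c, hc, hf⟩ := Finset.exists_card_fiber_lt_of_card_lt_mul (s := N) (t := Finset.range 4) (f := ℓ) (n := 2)
        (by rw [hNc]; simp)
      simp at hc
      obtain ⟨w, hw, hwc⟩ := hit c hc
      obtain ⟨e1, e2⟩ := hoff w hw (by omega)
      refine ⟨w, hw, by omega, e2, fun w' hw' he => Or.inl ?_⟩
      have := Finset.card_le_one.mp (Nat.lt_succ_iff.mp hf)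
      exact this w' (by simp [hmem, hw']; omega) w (by simp [hmem, hw]; omega)
    · have hadj : G.Adj (p n) (p (n-1)) := by
        have := hp.1.1 (n-1) (by omega)
        rw [show n - 1 + 1 = n by omega] at this
        exact this.symm
      have hcol : ℓ (p n) < 4 := by
        have := hp.2.1 (n-1) (by omega)
        rwa [show n - 1 + 1 = n by omega] at this
      obtain ⟨c, hc, hf⟩ := Finset.exists_card_fiber_lt_of_card_lt_mul (s := N.erase (p (n-1)))
        (t := (Finset.range 4).erase (ℓ (p n))) (f := ℓ) (n := 2)
        (by rw [Finset.card_erase_of_mem ((hmem _).2 hadj), Finset.card_erase_of_mem (by simpa using hcol), hNc]; simp)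
      simp at hc
      obtain ⟨w, hw, hwc⟩ := hit c hc.2
      have hwne : w ≠ p (n-1) := by
        rintro rfl
        rw [h3 (n-1) (by omega), show n - 1 + 1 = n by omega] at hwc
        exact hc.1 hwc.symm
      obtain ⟨e1, e2⟩ := hoff w hw (fun _ => hwne)
      refine ⟨w, hw, by omega, e2, fun w' hw' he => ?_⟩
      by_cases hw1 : w' = p (n-1)
      · exact Or.inr ⟨hn0, hw1⟩
      · left
        have := Finset.card_le_one.mp (Nat.lt_succ_iff.mp hf)
        exact this w' (by simp [hmem, hw', hw1]; omega) w (by simp [hmem, hw, hwne]; omega)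
  let q : ℕ → V := fun i => if i ≤ n then p i else w
  have q1 : ∀ i ≤ n, q i = p i := fun i hi => if_pos hi
  have q2 : q (n+1) = w := if_neg (by omega)
  refine ⟨q, ?_, q1 0 (by omega)⟩
  have hq := hp.congr q1
  refine ⟨⟨fun i hi => ?_, fun i hi => ?_⟩, fun i hi => ?_, fun i hi u hu he => ?_⟩
  · rcases Nat.lt_succ_iff_lt_or_eq.mp hi with h' | rfl
    · exact hq.1.1 i h'
    · rw [q2, q1 i le_rfl]; exact hw
  · rcases Nat.lt_or_ge n (i+2) with h' | h'
    · have : i + 2 = n + 1 := by omega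
      rw [this, q2, q1 i (by omega)]
      exact hwp i (by omega)
    · exact hq.1.2 i h'
  · rcases Nat.lt_succ_iff_lt_or_eq.mp hi with h' | rfl
    · exact hq.2.1 i h'
    · rw [q2]; exact hlt
  · rcases Nat.lt_succ_iff_lt_or_eq.mp hi with h' | rfl
    · exact hq.2.2 i h' u hu he
    · rw [q2] at he ⊢
      rw [q1 i le_rfl] at hu
      rw [q1 (i-1) (by omega)]
      exact huniq u hu he

lemma exists_ray (h : T6 G) {j L : ℕ} (hv : Val G (OKd C) (j+6) ℓ) {v : V} (h0 : ℓ v = 4)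
    (hI : ¬ Imp G (ps C j L) ℓ v) : ∀ n ≤ L, ∃ p, Ray G ℓ p n ∧ p 0 = v := by
  intro n
  induction n with
  | zero => intro _; exact ⟨fun _ => v, ⟨⟨by simp, by intro i hi; omega⟩, by simp, by simp⟩, rfl⟩
  | succ n ih =>
    intro hn
    obtain ⟨p, hp, rfl⟩ := ih (by omega)
    exact hp.extend h hv h0 (by omega) hI

lemma Ray.near (h : T6 G) {j L : ℕ} (hv : Val G (OKd C) (j+6) ℓ) {p : ℕ → V} {n : ℕ} (hp : Ray G ℓ p n)
    (h0 : ℓ (p 0) = 4) (hn : n ≤ L) (hI : ¬ Imp G (ps C j L) ℓ (p 0)) (hC : 4 ≤ Dk C j) :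
    (∃ k < j, ∃ w, ℓ w = 5 + k ∧ G.dist (p n) w ≤ 3) ∨ ∃ w, ℓ w = j + 5 ∧ G.dist (p n) w ≤ Dk C j := by
  classical
  obtain ⟨ℓ1, h1, h2, h3, h4⟩ := hp.move h hv (by omega)
  by_contra hcon
  push Not at hcon
  have hoff : ∀ w, 5 ≤ ℓ1 w → ℓ1 w = ℓ w := by
    intro w hw
    apply h4
    rintro i hi rfl
    rcases hi.lt_or_eq with h' | rfl
    · have := hp.2.1 i h'
      rw [h3 i h'] at hw; omega
    · omega
  refine hI (hp.settle_imp h h0 (by omega) h3 h4 (c := j + 5) (by omega) (val_update h1 (by omega) (by omega) ?_))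
  intro _ w _
  constructor
  · intro hw
    have := hcon.2 w (by rw [← hoff w (by omega)]; exact hw)
    simpa using this.le
  · intro hw
    have e := hoff w hw
    have hlt := hv.2 w
    by_cases hj : ℓ w = j + 5
    · have := hcon.2 w hj; omega
    · have := hcon.1 (ℓ w - 5) (by omega) w (by omega); omega

lemma Ray.level (h : T6 G) (hv : Val G (OKd C) J ℓ) {p : ℕ → V} {L : ℕ} (hp : Ray G ℓ p L) (k W : ℕ)
    (hW : W + 6 ≤ Dk C k) (hW0 : 0 < W) (A : Finset ℕ)
    (hA : ∀ i ∈ A, i ≤ L ∧ ∃ w, ℓ w = 5 + k ∧ G.dist (p i) w ≤ 3) : A.card ≤ 7 * (L / W + 1) := by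
  have key : ∀ i ∈ A, ∀ i' ∈ A, i < i' → i / W = i' / W → i % 7 = i' % 7 → False := by
    intro i hi i' hi' hlt e1 e2
    obtain ⟨hiL, w, hw, hd⟩ := hA i hi
    obtain ⟨hiL', w', hw', hd'⟩ := hA i' hi'
    have a1 : i' - i < W := by
      have := Nat.div_add_mod i W
      have := Nat.div_add_mod i' W
      have := Nat.mod_lt i' hW0
      have := Nat.mod_lt i hW0
      rw [e1] at *
      omega
    have a2 : 7 ≤ i' - i := by omega
    have hpd := T6.NB.dist h hp.1 hlt.le hiL'
    have t1 := h.tri (p i) w (p i')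
    have t2 := h.tri w (p i) w'
    have t3 := h.tri (p i) (p i') w'
    rw [G.dist_comm (u := w) (v := p i)] at t2
    rw [G.dist_comm (u := w) (v := p i')] at t1
    by_cases hww : w = w'
    · subst hww; omega
    · have := (hv.1 w w' hww).2.1 k hw hw'
      omega
  have : A.card ≤ (Finset.range (L / W + 1) ×ˢ Finset.range 7).card := by
    apply Finset.card_le_card_of_injOn (fun i => (i / W, i % 7))
    · intro i hi
      have := Nat.div_le_div_right (c := W) (hA i hi).1
      simp only [Finset.coe_product, Set.mem_prod, Finset.mem_coe, Finset.mem_range]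
      omega
    · intro i hi i' hi' he
      simp only [Prod.mk.injEq] at he
      rcases lt_trichotomy i i' with h' | h' | h'
      · exact (key i hi i' hi' h' he.1 he.2).elim
      · exact h'
      · exact (key i' hi' i hi h' he.1.symm he.2.symm).elim
  rw [Finset.card_product, Finset.card_range, Finset.card_range] at this
  omega

lemma sum_bound (j L : ℕ) : 56 * ∑ k ∈ Finset.range j, L / (56 * ((k+1)*(k+2))) ≤ L := by
  have tel : ∀ j : ℕ, ∑ k ∈ Finset.range j, (1:ℚ) / ((k+1)*(k+2)) = 1 - 1 / (j+1) := by
    intro j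
    induction j with
    | zero => simp
    | succ n ih => rw [Finset.sum_range_succ, ih]; push_cast; field_simp; ring
  have : (56:ℚ) * ∑ k ∈ Finset.range j, ((L / (56 * ((k+1)*(k+2))) : ℕ) : ℚ) ≤ L := by
    calc _ ≤ (56:ℚ) * ∑ k ∈ Finset.range j, (L:ℚ) / 56 * (1 / ((k+1)*(k+2))) := by
          gcongr with k hk
          refine Nat.cast_div_le.trans (le_of_eq ?_)
          push_cast; field_simp
      _ = L * (1 - 1 / (j+1)) := by rw [← Finset.mul_sum, tel]; ring
      _ ≤ L * 1 := by gcongr; simp; positivity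
      _ = L := by ring
  exact_mod_cast this

lemma ray_count (h : T6 G) {j L : ℕ} (hC : 112 ≤ C) (hL : 28 * j ≤ L + 1) (hv : Val G (OKd C) (j+6) ℓ) {v : V}
    (h0 : ℓ v = 4) (hI : ¬ Imp G (ps C j L) ℓ v) :
    ∃ p, Ray G ℓ p L ∧ p 0 = v ∧ ∃ A : Finset ℕ, L + 1 ≤ 2 * A.card ∧
      ∀ i ∈ A, i ≤ L ∧ ∃ w, ℓ w = j + 5 ∧ G.dist (p i) w ≤ Dk C j := by
  classical
  obtain ⟨p, hp, rfl⟩ := exists_ray h hv h0 hI L le_rfl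
  have hD : ∀ k, 112 * ((k+1)*(k+2)) ≤ Dk C k := by
    intro k; unfold Dk; rw [mul_assoc]; gcongr
  have hpos : ∀ k, 2 ≤ (k+1)*(k+2) := fun k => by nlinarith
  refine ⟨p, hp, rfl, (Finset.range (L+1)).filter (fun i => ∃ w, ℓ w = j + 5 ∧ G.dist (p i) w ≤ Dk C j), ?_, ?_⟩
  swap
  · intro i hi
    simp only [Finset.mem_filter, Finset.mem_range] at hi
    exact ⟨by omega, hi.2⟩
  set A := (Finset.range (L+1)).filter (fun i => ∃ w, ℓ w = j + 5 ∧ G.dist (p i) w ≤ Dk C j)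
  let B : ℕ → Finset ℕ := fun k => (Finset.range (L+1)).filter (fun i => ∃ w, ℓ w = 5 + k ∧ G.dist (p i) w ≤ 3)
  have hB : ∀ k, (B k).card ≤ 7 * (L / (56 * ((k+1)*(k+2))) + 1) := by
    intro k
    refine hp.level h hv k _ ?_ ?_ (B k) ?_
    · have := hD k; have := hpos k; omega
    · have := hpos k; omega
    · intro i hi
      simp only [B, Finset.mem_filter, Finset.mem_range] at hi
      exact ⟨by omega, hi.2⟩
  have hcov : Finset.range (L+1) ⊆ A ∪ (Finset.range j).biUnion B := by
    intro i hi
    have hi' : i ≤ L := by simpa [Nat.lt_succ_iff] using hi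
    rw [Finset.mem_union, Finset.mem_biUnion]
    rcases (hp.prefix hi').near h hv h0 hi' hI (by have := hD j; have := hpos j; omega) with ⟨k, hk, hw⟩ | hw
    · right; exact ⟨k, by simpa using hk, by simp only [B, Finset.mem_filter]; exact ⟨hi, hw⟩⟩
    · left; simp only [A, Finset.mem_filter]; exact ⟨hi, hw⟩
  have h1 := (Finset.card_le_card hcov).trans (Finset.card_union_le _ _)
  have h2 : ((Finset.range j).biUnion B).card ≤ 7 * ∑ k ∈ Finset.range j, L / (56 * ((k+1)*(k+2))) + 7 * j := by
    calc _ ≤ ∑ k ∈ Finset.range j, (B k).card := Finset.card_biUnion_le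
      _ ≤ ∑ k ∈ Finset.range j, 7 * (L / (56 * ((k+1)*(k+2))) + 1) := Finset.sum_le_sum fun k _ => hB k
      _ = _ := by rw [← Finset.mul_sum, Finset.sum_add_distrib]; simp; ring
  have h3 := sum_bound j L
  rw [Finset.card_range] at h1
  omega

lemma Ray.disj (h : T6 G) {j L : ℕ} (hv : Val G (OKd C) (j+6) ℓ) {p q : ℕ → V} (h0 : ℓ (p 0) = 4) (h0' : ℓ (q 0) = 4)
    (hI : ¬ Imp G (ps C j L) ℓ (p 0)) (hne : p 0 ≠ q 0) :
    ∀ a b, a ≤ L → b ≤ L → Ray G ℓ p a → Ray G ℓ q b → p a = q b → False := by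
  intro a
  induction a with
  | zero =>
    intro b _ _ hp hq he
    rcases b with _ | b
    · exact hne he
    · have := hq.2.1 b (by omega)
      rw [← he] at this; omega
  | succ a ih =>
    intro b ha hb hp hq he
    rcases b with _ | b
    · have := hp.2.1 a (by omega)
      rw [he] at this; omega
    by_cases hab : p a = q b
    · exact ih b (by omega) (by omega) (hp.prefix (by omega)) (hq.prefix (by omega)) hab
    let r : ℕ → V := fun i => if i ≤ a + 1 then p i else q (a + b + 2 - i)
    have r1 : ∀ i ≤ a + 1, r i = p i := fun i hi => if_pos hi
    have r2 : ∀ i, a + 1 ≤ i → i ≤ a + b + 2 → r i = q (a + b + 2 - i) := by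
      intro i hi hi'
      rcases hi.lt_or_eq with h' | rfl
      · exact if_neg (by omega)
      · rw [r1 _ le_rfl, he]; congr 1; omega
    have hr : T6.NB G r (a+b+2) := by
      constructor
      · intro i hi
        rcases Nat.lt_or_ge i (a+1) with h' | h'
        · rw [r1 i (by omega), r1 (i+1) (by omega)]; exact hp.1.1 i h'
        · rw [r2 i h' (by omega), r2 (i+1) (by omega) (by omega)]
          have := hq.1.1 (a + b + 2 - (i+1)) (by omega)
          rw [show a + b + 2 - (i+1) + 1 = a + b + 2 - i by omega] at this
          exact this.symm
      · intro i hi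
        rcases Nat.lt_or_ge i a with h' | h'
        · rw [r1 i (by omega), r1 (i+2) (by omega)]; exact hp.1.2 i (by omega)
        · rcases h'.lt_or_eq with h' | rfl
          · rw [r2 i h' (by omega), r2 (i+2) (by omega) (by omega)]
            have := hq.1.2 (a + b + 2 - (i+2)) (by omega)
            rw [show a + b + 2 - (i+2) + 2 = a + b + 2 - i by omega] at this
            exact this.symm
          · rw [r1 a (by omega), r2 (a+2) (by omega) (by omega), show a + b + 2 - (a+2) = b by omega]
            exact fun e => hab e.symm
    have hl' : ∀ i, a + 1 < i → i ≤ a + b + 2 → ℓ (r (i-1)) < 4 := by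
      intro i hi hi'
      rw [r2 (i-1) (by omega) (by omega), show a + b + 2 - (i-1) = a + b + 2 - i + 1 by omega]
      exact hq.2.1 _ (by omega)
    have hl : ∀ i < a + 1, ℓ (r (i+1)) < 4 := by
      intro i hi
      rw [r1 _ (by omega)]; exact hp.2.1 i hi
    obtain ⟨ℓ1, v1, v2, v3, v4, v5⟩ := path_shift h hv (by omega) hr (t := a+1) (by omega) hl hl'
      (by
        intro i hi w hw hww
        rw [r1 i (by omega)] at hw
        rw [r1 (i+1) (by omega)] at hww ⊢
        rw [r1 (i-1) (by omega)]
        exact hp.2.2 i hi w hw hww)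
      (by
        intro i hi hi' w hw hww
        rw [r2 i (by omega) hi'] at hw
        have e : r (i-1) = q (a + b + 2 - i + 1) := by
          rw [r2 (i-1) (by omega) (by omega)]; congr 1; omega
        rw [e] at hww ⊢
        rcases hq.2.2 _ (by omega) w hw hww with h' | ⟨h1, h'⟩
        · exact Or.inl h'
        · right
          refine ⟨by omega, ?_⟩
          rw [h', r2 (i+1) (by omega) (by omega)]; congr 1)
    have e0 : r 0 = p 0 := r1 0 (by omega)
    have en : r (a+b+2) = q 0 := by rw [r2 _ (by omega) le_rfl]; congr 1; omega
    apply hI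
    rw [← e0]
    refine imp_path h (s := ps C j L) v1 hr (t := a+1) (by omega) (by simp only [ps]; omega) (by simp only [ps]; omega) v5 ?_ ?_
    · intro i hi hit
      have : ℓ1 (r i) < 4 := by
        rcases lt_or_gt_of_ne hit with h' | h'
        · rw [v3 i h']; exact hl i h'
        · rw [v4 i h' hi]; exact hl' i h' hi
      simp only [ps]
      rw [if_neg (by omega), if_neg (by omega)]
    · have e4 : (ps C j L).wt 4 = 2 := by simp [ps]
      rw [v2, e4, Finset.sum_range_succ, en, h0', e4, Finset.sum_range_succ', e0, h0, e4]
      omega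

/-- reachable along a ray -/
def Reach (G : SimpleGraph V) (L : ℕ) (ℓ : V → ℕ) (v w : V) : Prop :=
  ∃ p n, n ≤ L ∧ Ray G ℓ p n ∧ p 0 = v ∧ p n = w

lemma Ray.iso {p : ℕ → V} {n : ℕ} (hp : Ray G ℓ p n) (φ : G ≃g G) : Ray G (ℓ ∘ φ.symm) (φ ∘ p) n := by
  refine ⟨⟨fun i hi => ?_, fun i hi => ?_⟩, fun i hi => ?_, fun i hi w hw he => ?_⟩
  · exact φ.map_rel_iff.2 (hp.1.1 i hi)
  · exact fun e => hp.1.2 i hi (φ.injective e)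
  · simpa using hp.2.1 i hi
  · have h1 : G.Adj (p i) (φ.symm w) := by
      rw [← φ.map_rel_iff]; simpa using hw
    have h2 := hp.2.2 i hi _ h1 (by simpa using he)
    rcases h2 with h2 | ⟨h2, h3⟩
    · left; simp [← h2]
    · right; exact ⟨h2, by simp [← h3]⟩

lemma Reach.iso {L : ℕ} {v w : V} (hr : Reach G L ℓ v w) (φ : G ≃g G) :
    Reach G L (ℓ ∘ φ.symm) (φ v) (φ w) := by
  obtain ⟨p, n, hn, hp, rfl, rfl⟩ := hr
  exact ⟨φ ∘ p, n, hn, hp.iso φ, rfl, rfl⟩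

lemma reach_iff {L : ℕ} {v w : V} : Reach G L ℓ v w ↔ ∃ (l : List V) (n : ℕ), n ≤ L ∧
    Ray G ℓ (fun i => l.getD i v) n ∧ l.getD 0 v = v ∧ l.getD n v = w := by
  constructor
  · rintro ⟨p, n, hn, hp, rfl, rfl⟩
    have e : ∀ i ≤ n, ((List.range (n+1)).map p).getD i (p 0) = p i := by
      intro i hi
      rw [List.getD_eq_getElem _ _ (by simp; omega)]; simp
    exact ⟨(List.range (n+1)).map p, n, hn, hp.congr e, e 0 (by omega), e n le_rfl⟩
  · rintro ⟨l, n, hn, hp, h0, h1⟩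
    exact ⟨_, n, hn, hp, h0, h1⟩

lemma ray_meas [Countable V] {g : (V → ℝ) → V → ℕ} (hg : ∀ v, Measurable (fun x => g x v)) (p : ℕ → V) (n : ℕ) :
    Measurable (fun x => Ray G (g x) p n) := by
  refine Measurable.and measurable_const (Measurable.and ?_ ?_)
  · refine Measurable.forall fun i => Measurable.forall fun _ => ?_
    exact (Measurable.of_discrete (f := fun p : ℕ => p < 4)).comp (hg _)
  · refine Measurable.forall fun i => Measurable.forall fun _ => Measurable.forall fun w => Measurable.forall fun _ => ?_
    exact Measurable.imp (eq_meas (hg _) (hg _)) measurable_const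

lemma reach_meas [Countable V] {g : (V → ℝ) → V → ℕ} (hg : ∀ v, Measurable (fun x => g x v)) (L : ℕ) (v w : V) :
    Measurable (fun x => Reach G L (g x) v w) := by
  simp only [reach_iff]
  refine Measurable.exists fun l => Measurable.exists fun n => Measurable.and measurable_const
    (Measurable.and (ray_meas hg _ _) measurable_const)

lemma Reach.dist_le (h : T6 G) {L : ℕ} {v w : V} (hr : Reach G L ℓ v w) : G.dist v w ≤ L := by
  obtain ⟨p, n, hn, hp, rfl, rfl⟩ := hr
  rw [T6.NB.dist h hp.1 (Nat.zero_le n) le_rfl]; omega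

open Classical in
lemma reach_count (h : T6 G) {j L : ℕ} (hC : 112 ≤ C) (hL : 28 * j ≤ L + 1) (hv : Val G (OKd C) (j+6) ℓ) {v : V}
    (h0 : ℓ v = 4) (hI : ¬ Imp G (ps C j L) ℓ v) :
    L + 1 ≤ 2 * ((Bl G v L).filter (fun w => Reach G L ℓ v w ∧ ∃ u, ℓ u = j + 5 ∧ G.dist w u ≤ Dk C j)).card := by
  obtain ⟨p, hp, rfl, A, hA, hA'⟩ := ray_count h hC hL hv h0 hI
  refine hA.trans (Nat.mul_le_mul_left 2 ?_)
  apply Finset.card_le_card_of_injOn p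
  · intro i hi
    obtain ⟨h1, h2⟩ := hA' i hi
    have hr : Reach G L ℓ (p 0) (p i) := ⟨p, i, h1, hp.prefix h1, rfl, rfl⟩
    simp only [Finset.coe_filter, Set.mem_ofPred_eq, h.mem_Bl]
    exact ⟨hr.dist_le h, hr, h2⟩
  · intro i hi i' hi' he
    exact T6.NB.inj h hp.1 (hA' i hi).1 (hA' i' hi').1 he

lemma reach_disj (h : T6 G) {j L : ℕ} (hv : Val G (OKd C) (j+6) ℓ) {v v' w : V} (h0 : ℓ v = 4) (h0' : ℓ v' = 4)
    (hI : ¬ Imp G (ps C j L) ℓ v) (h1 : Reach G L ℓ v w) (h2 : Reach G L ℓ v' w) : v = v' := by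
  obtain ⟨p, a, ha, hp, rfl, hpw⟩ := h1
  obtain ⟨q, b, hb, hq, rfl, hqw⟩ := h2
  by_contra hne
  exact Ray.disj h hv h0 h0' hI hne a b ha hb hp hq (hpw.trans hqw.symm)
end


section
variable {V : Type} {G : SimpleGraph V} {μ : Measure (V → ℝ)} {C : ℕ}

structure St (G : SimpleGraph V) (C J : ℕ) (f : (V → ℝ) → V → ℕ) : Prop where
  meas : ∀ v, Measurable (fun x => f x v)
  eqv : Eqv G f
  val : ∀ x, Val G (OKd C) J (f x)

lemma lab_meas {g : (V → ℝ) → V → ℕ} (hg : ∀ v, Measurable (fun x => g x v)) (P : ℕ → Prop) (v : V) :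
    Measurable (fun x => P (g x v)) := (Measurable.of_discrete (f := P)).comp (hg v)

lemma St.prob_const (h : Mu G μ) {J : ℕ} {f : (V → ℝ) → V → ℕ} (hf : St G C J f) (P : ℕ → Prop) (u v : V) :
    μ {x | P (f x u)} = μ {x | P (f x v)} :=
  h.const_prob (F := fun x v => P (f x v)) (fun u => lab_meas hf.meas P u)
    (fun φ x v => by show P _ = P _; rw [hf.eqv]) u v

lemma near_prob (h : Mu G μ) {J : ℕ} {g : (V → ℝ) → V → ℕ} (hg : St G C J g) (a D : ℕ) (o : V) :
    μ {x | ∃ u, g x u = a ∧ G.dist o u ≤ D} ≤ 7 ^ D * μ {x | g x o = a} := by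
  calc μ {x | ∃ u, g x u = a ∧ G.dist o u ≤ D} ≤ μ (⋃ u ∈ Bl G o D, {x | g x u = a}) := by
        apply measure_mono
        rintro x ⟨u, h1, h2⟩
        simp only [Set.mem_iUnion]
        exact ⟨u, h.t6.mem_Bl.2 h2, h1⟩
    _ ≤ ∑ u ∈ Bl G o D, μ {x | g x u = a} := measure_biUnion_finset_le _ _
    _ = ∑ u ∈ Bl G o D, μ {x | g x o = a} := Finset.sum_congr rfl fun u _ => hg.prob_const h (fun b => b = a) u o
    _ = (Bl G o D).card * μ {x | g x o = a} := by rw [Finset.sum_const, nsmul_eq_mul]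
    _ ≤ _ := by gcongr; exact_mod_cast h.t6.card_Bl o D

lemma hole_prob [Countable V] (h : Mu G μ) {j L : ℕ} (hC : 112 ≤ C) (hL : 28 * j ≤ L + 1) {g : (V → ℝ) → V → ℕ}
    (hg : St G C (j+6) g) (o : V) :
    (L + 1 : ℕ) * μ {x | g x o = 4 ∧ ¬ Imp G (ps C j L) (g x) o} ≤
      2 * μ {x | ∃ u, g x u = j + 5 ∧ G.dist o u ≤ Dk C j} := by
  classical
  let H : (V → ℝ) → V → Prop := fun x v => g x v = 4 ∧ ¬ Imp G (ps C j L) (g x) v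
  let N : (V → ℝ) → V → Prop := fun x w => ∃ u, g x u = j + 5 ∧ G.dist w u ≤ Dk C j
  let Rc : (V → ℝ) → V → V → Prop := fun x v w => Reach G L (g x) v w
  have mH : ∀ v, Measurable (fun x => H x v) := fun v =>
    (lab_meas hg.meas (fun a => a = 4) v).and (imp_meas hg.meas v).not
  have mN : ∀ v, Measurable (fun x => N x v) := fun v =>
    Measurable.exists fun u => (lab_meas hg.meas (fun a => a = j + 5) u).and measurable_const
  have eI : Eqv G (fun x v => Imp G (ps C j L) (g x) v) :=
    hg.eqv.pred (I := fun ℓ v => Imp G (ps C j L) ℓ v) (fun φ ℓ v hi => Imp.iso h.t6 φ ℓ v hi)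
  have eH : Eqv G H := by
    intro φ x v
    have := eI φ x v
    simp only [H]
    rw [hg.eqv]
    simp only at this
    rw [this]
  have eN : Eqv G N := by
    apply eqv_of_imp
    rintro φ x v ⟨u, h1, h2⟩
    exact ⟨φ u, by rw [hg.eqv]; exact h1, by rw [h.t6.iso_dist]; exact h2⟩
  have eR := eqv_of_imp2 (G := G) (S := Rc) (by
    intro φ x v w hr
    simp only [Rc]
    rw [hg.eqv.comp]; exact Reach.iso hr φ)
  let F : (V → ℝ) → V → V → ℝ≥0∞ := fun x v w => ind (H x v ∧ Rc x v w ∧ N x w)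
  have mF : ∀ u v, Measurable (fun x => F x u v) := fun u v =>
    ind_meas ((mH u).and ((reach_meas hg.meas L u v).and (mN v)))
  have eF : ∀ (φ : G ≃g G) x u v, F (act φ x) (φ u) (φ v) = F x u v := by
    intro φ x u v
    simp only [F]
    rw [eH, eR, eN]
  have := h.mtp mF eF o L
  change _ * μ {x | H x o} ≤ 2 * μ {x | N x o}
  rw [← lint_ind μ (mH o), ← lint_ind μ (mN o), ← lintegral_const_mul _ (ind_meas (mH o)),
    ← lintegral_const_mul _ (ind_meas (mN o))]
  calc _ ≤ ∫⁻ x, 2 * ∑ w ∈ Bl G o L, F x o w ∂μ := by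
        refine lintegral_mono fun x => ?_
        by_cases hx : H x o
        · have hc := reach_count h.t6 hC hL (hg.val x) hx.1 hx.2
          have e : ∑ w ∈ Bl G o L, F x o w =
            (((Bl G o L).filter (fun w => Reach G L (g x) o w ∧ ∃ u, g x u = j + 5 ∧ G.dist w u ≤ Dk C j)).card : ℝ≥0∞) := by
            rw [Finset.card_filter]
            push_cast
            refine Finset.sum_congr rfl fun w _ => ?_
            simp only [F, ind, hx, true_and, Rc, N]
          simp only [e, ind_true hx, mul_one]
          exact_mod_cast hc
        · simp [ind_false hx]
    _ = 2 * ∫⁻ x, ∑ w ∈ Bl G o L, F x o w ∂μ := lintegral_const_mul _ (Finset.measurable_sum _ fun w _ => mF _ _)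
    _ = 2 * ∫⁻ x, ∑ w ∈ Bl G o L, F x w o ∂μ := by rw [this]
    _ = ∫⁻ x, 2 * ∑ w ∈ Bl G o L, F x w o ∂μ := (lintegral_const_mul _ (Finset.measurable_sum _ fun w _ => mF _ _)).symm
    _ ≤ _ := by
        refine lintegral_mono fun x => ?_
        simp only
        gcongr
        by_cases hv : ∃ v ∈ Bl G o L, H x v ∧ Rc x v o
        · obtain ⟨v, hv1, hv2, hv3⟩ := hv
          rw [Finset.sum_eq_single_of_mem v hv1]
          · exact ind_mono fun hh => hh.2.2
          · intro v' _ hne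
            apply ind_false
            rintro ⟨a, b, _⟩
            exact hne (reach_disj h.t6 (hg.val x) a.1 hv2.1 a.2 b hv3)
        · rw [Finset.sum_eq_zero]
          · exact zero_le
          · intro v hv1
            apply ind_false
            rintro ⟨a, b, _⟩
            exact hv ⟨v, hv1, a, b⟩

lemma stage [Countable V] (h : Mu G μ) {j L : ℕ} (hC : 112 ≤ C) (hL : 28 * j ≤ L + 1) {f : (V → ℝ) → V → ℕ}
    (hf : St G C (j+5) f) (o : V) {η : ℝ≥0∞} (hη : η ≠ 0) :
    ∃ g, St G C (j+6) g ∧ μ {x | f x o ≠ g x o} ≤ (2 * L + 3 : ℕ) * (2 * μ {x | f x o = 4}) ∧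
      (L + 1 : ℕ) * μ {x | g x o = 4} ≤ (L + 1 : ℕ) * η + 4 * 7 ^ Dk C j * μ {x | f x o = 4} := by
  have hfi : Fi G (ps C j L) f := ⟨hf.meas, hf.eqv, fun x => ⟨(hf.val x).1, fun w => by
    have := (hf.val x).2 w
    simp only [ps]; omega⟩⟩
  obtain ⟨g, hg, h1, h2, h3⟩ := stage_opt h hfi o hη
  have hg' : St G C (j+6) g := ⟨hg.meas, hg.eqv, hg.val⟩
  have m4 : Measurable (fun x => f x o = 4) := lab_meas hf.meas (fun a => a = 4) o
  have ef : ∫⁻ x, ((ps C j L).wt (f x o) : ℝ≥0∞) ∂μ = 2 * μ {x | f x o = 4} := by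
    rw [← lint_ind μ m4, ← lintegral_const_mul _ (ind_meas m4)]
    congr 1; ext x
    have := (hf.val x).2 o
    by_cases hx : f x o = 4
    · simp [ps, hx, ind_true]
    · rw [ind_false hx]
      simp only [ps]; rw [if_neg hx, if_neg (by omega)]; simp
  rw [ef] at h2 h3
  have mj : Measurable (fun x => g x o = j + 5) := lab_meas hg.meas (fun a => a = j + 5) o
  have hs : μ {x | g x o = j + 5} ≤ 2 * μ {x | f x o = 4} := by
    refine le_trans ?_ h3
    rw [← lint_ind μ mj]
    refine lintegral_mono fun x => ?_
    by_cases hx : g x o = j + 5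
    · rw [ind_true hx]; simp only [ps]; rw [if_neg (by omega), if_pos hx]; simp
    · rw [ind_false hx]; exact zero_le
  refine ⟨g, hg', ?_, ?_⟩
  · exact le_trans le_self_add h2
  · have hh := (hole_prob h hC hL hg' o).trans (mul_le_mul_right (near_prob h hg' (j+5) (Dk C j) o) 2)
    have hsplit : μ {x | g x o = 4} ≤ μ {x | Imp G (ps C j L) (g x) o} +
        μ {x | g x o = 4 ∧ ¬ Imp G (ps C j L) (g x) o} := by
      refine le_trans (measure_mono ?_) (measure_union_le _ _)
      intro x hx
      by_cases hi : Imp G (ps C j L) (g x) o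
      · exact Or.inl hi
      · exact Or.inr ⟨hx, hi⟩
    calc _ ≤ (L + 1 : ℕ) * (μ {x | Imp G (ps C j L) (g x) o} +
        μ {x | g x o = 4 ∧ ¬ Imp G (ps C j L) (g x) o}) := by gcongr
      _ ≤ (L + 1 : ℕ) * η + 2 * (7 ^ Dk C j * (2 * μ {x | f x o = 4})) := by
          rw [mul_add]
          refine add_le_add (by gcongr) (hh.trans (by gcongr))
      _ = _ := by ring
end


def Ex (C j : ℕ) : ℕ := if j = 0 then 0 else 4 * C * (j+3)^2

lemma Ex_mono (C j : ℕ) : Ex C j ≤ Ex C (j+1) := by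
  unfold Ex
  rw [if_neg (by omega : j + 1 ≠ 0)]
  split_ifs
  · omega
  · gcongr; omega

lemma Ex_ge (C j : ℕ) (hC : 112 ≤ C) : j ≤ Ex C j := by
  unfold Ex
  split_ifs
  · omega
  · have : 4 * 112 * (j+3)^2 ≤ 4 * C * (j+3)^2 := by gcongr
    nlinarith

lemma Ex_cost (C j : ℕ) (hC : 112 ≤ C) : Dk C (j+1) + (Ex C (j+2) - Ex C (j+1)) + j ≤ Ex C (j+1) := by
  have e1 : Ex C (j+2) = 4 * C * (j+5)^2 := by unfold Ex; rw [if_neg (by omega)]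
  have e2 : Ex C (j+1) = 4 * C * (j+4)^2 := by unfold Ex; rw [if_neg (by omega)]
  rw [e1, e2]
  have e3 : 4 * C * (j+5)^2 = 4 * C * (j+4)^2 + C * (8*j+36) := by ring
  rw [e3, Nat.add_sub_cancel_left]
  unfold Dk
  nlinarith [Nat.zero_le (C * j), Nat.zero_le (C * j^2), Nat.zero_le j]

lemma sp (n : ℕ) : (7:ℝ≥0∞) ^ n * (7⁻¹) ^ n = 1 := by
  rw [← mul_pow, ENNReal.mul_inv_cancel (by simp) (by simp), one_pow]

section
variable {V : Type} {G : SimpleGraph V} {μ : Measure (V → ℝ)} {C : ℕ}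

lemma stage2 [Countable V] (h : Mu G μ) (j : ℕ) (hC : 112 ≤ C) (o : V) {f : (V → ℝ) → V → ℕ}
    (hf : St G C (j+5) f) (hb : μ {x | f x o = 4} ≤ 7⁻¹ ^ Ex C j) :
    ∃ g, (St G C (j+1+5) g ∧ μ {x | g x o = 4} ≤ 7⁻¹ ^ Ex C (j+1)) ∧
      μ {x | f x o ≠ g x o} ≤ 48 * 7 ^ (Dk C j + (Ex C (j+1) - Ex C j)) * 7⁻¹ ^ Ex C j := by
  set K := Ex C (j+1) - Ex C j with hK
  have hE : Ex C (j+1) = Ex C j + K := by have := Ex_mono C j; omega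
  have hpos : 0 < 7 ^ (Dk C j + K) := by positivity
  obtain ⟨L, hL⟩ : ∃ L, L + 1 = 8 * 7 ^ (Dk C j + K) := ⟨8 * 7 ^ (Dk C j + K) - 1, by omega⟩
  have hD : 112 * (j + 1) ≤ Dk C j := by
    unfold Dk
    calc 112 * (j+1) ≤ C * (j+1) := by gcongr
      _ ≤ C * (j+1) * (j+2) := Nat.le_mul_of_pos_right _ (by omega)
  have hlt : Dk C j + K < 7 ^ (Dk C j + K) := Nat.lt_pow_self (by norm_num)
  obtain ⟨g, g1, g2, g3⟩ := stage h hC (L := L) (by omega) hf o (η := 7⁻¹ ^ Ex C (j+1) * 2⁻¹)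
    (by simp)
  refine ⟨g, ⟨g1, ?_⟩, ?_⟩
  · set b : ℝ≥0∞ := 7⁻¹ ^ Ex C (j+1) with hbdef
    have hab : (7:ℝ≥0∞)⁻¹ ^ Ex C j = 7 ^ K * b := by
      rw [hbdef, hE, pow_add, mul_left_comm, sp, mul_one]
    have hc : ((L + 1 : ℕ) : ℝ≥0∞) = 8 * 7 ^ (Dk C j + K) := by rw [hL]; push_cast; ring
    have h1 : ((L + 1 : ℕ) : ℝ≥0∞) * μ {x | g x o = 4} ≤ ((L + 1 : ℕ) : ℝ≥0∞) * b := by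
      calc _ ≤ _ := g3
        _ ≤ ((L + 1 : ℕ) : ℝ≥0∞) * (b * 2⁻¹) + 4 * 7 ^ Dk C j * (7 ^ K * b) := by
            rw [← hab]; gcongr
        _ = ((L + 1 : ℕ) : ℝ≥0∞) * (b * 2⁻¹) + ((L + 1 : ℕ) : ℝ≥0∞) * (b * 2⁻¹) := by
            congr 1
            rw [hc, pow_add]
            have : (8:ℝ≥0∞) = 4 * 2 := by norm_num
            rw [this]
            have h2 : (2:ℝ≥0∞) * 2⁻¹ = 1 := ENNReal.mul_inv_cancel (by simp) (by simp)
            calc (4:ℝ≥0∞) * 7 ^ Dk C j * (7 ^ K * b) = 4 * 7 ^ Dk C j * (7 ^ K * b) * 1 := by rw [mul_one]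
              _ = _ := by rw [← h2]; ring
        _ = ((L + 1 : ℕ) : ℝ≥0∞) * b := by
            rw [← mul_add, ← mul_add, ENNReal.inv_two_add_inv_two, mul_one]
    exact (ENNReal.mul_le_mul_iff_right (by simp) (by simp)).1 h1
  · calc _ ≤ _ := g2
      _ ≤ ((6 * (L + 1) : ℕ) : ℝ≥0∞) * μ {x | f x o = 4} := by
          rw [← mul_assoc]
          gcongr
          have : (2 * L + 3) * 2 ≤ 6 * (L+1) := by omega
          exact_mod_cast this
      _ ≤ ((6 * (L + 1) : ℕ) : ℝ≥0∞) * 7⁻¹ ^ Ex C j := by gcongr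
      _ = _ := by rw [hL]; push_cast; ring

lemma exists_seq [Countable V] (h : Mu G μ) (hC : 112 ≤ C) (o : V) :
    ∃ F : ℕ → (V → ℝ) → V → ℕ, (∀ j, St G C (j+5) (F j)) ∧ (∀ j, μ {x | F j x o = 4} ≤ 7⁻¹ ^ Ex C j) ∧
      ∀ j, μ {x | F j x o ≠ F (j+1) x o} ≤ 48 * 7 ^ (Dk C j + (Ex C (j+1) - Ex C j)) * 7⁻¹ ^ Ex C j := by
  let S : ℕ → Type := fun j => {f : (V → ℝ) → V → ℕ // St G C (j+5) f ∧ μ {x | f x o = 4} ≤ 7⁻¹ ^ Ex C j}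
  have nx : ∀ j (f : S j), ∃ g : S (j+1),
      μ {x | f.1 x o ≠ g.1 x o} ≤ 48 * 7 ^ (Dk C j + (Ex C (j+1) - Ex C j)) * 7⁻¹ ^ Ex C j := by
    intro j f
    obtain ⟨g, g1, g2⟩ := stage2 h j hC o f.2.1 f.2.2
    exact ⟨⟨g, g1⟩, g2⟩
  choose nx hnx using nx
  have := h.prob
  let f0 : S 0 := ⟨fun _ _ => 4, ⟨fun v => measurable_const, fun φ x v => rfl, fun x =>
    ⟨fun w w' _ => ⟨fun _ _ => le_rfl, fun k hk => by simp only at hk; omega,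
      fun h5 => by simp only at h5; omega⟩, fun w => by simp⟩⟩, by
      simp [Ex]⟩
  let F : ∀ j, S j := fun j => Nat.rec f0 (fun j f => nx j f) j
  exact ⟨fun j => (F j).1, fun j => (F j).2.1, fun j => (F j).2.2, fun j => hnx j (F j)⟩

open Classical in
noncomputable def slim (s : ℕ → ℕ) : ℕ := if h : ∃ a, ∃ N, ∀ n ≥ N, s n = a then h.choose else 4

lemma slim_eq {s : ℕ → ℕ} {a N : ℕ} (h : ∀ n ≥ N, s n = a) : slim s = a := by
  have hh : ∃ a, ∃ N, ∀ n ≥ N, s n = a := ⟨a, N, h⟩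
  unfold slim
  rw [dif_pos hh]
  obtain ⟨M, hM⟩ := hh.choose_spec
  rw [← hM (max M N) (le_max_left _ _), h _ (le_max_right _ _)]

lemma slim_meas : Measurable slim := by
  have key : ∀ a, MeasurableSet {s : ℕ → ℕ | ∃ N, ∀ n ≥ N, s n = a} := by
    intro a
    apply measurableSet_setOfPred.2
    refine Measurable.exists fun N => Measurable.forall fun n => Measurable.forall fun _ => ?_
    exact (Measurable.of_discrete (f := fun b : ℕ => b = a)).comp (measurable_pi_apply n)
  apply measurable_to_countable'
  intro a
  have e : slim ⁻¹' {a} = {s : ℕ → ℕ | ∃ N, ∀ n ≥ N, s n = a} ∪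
      ({s | a = 4} ∩ (⋃ b, {s : ℕ → ℕ | ∃ N, ∀ n ≥ N, s n = b})ᶜ) := by
    ext s
    simp only [Set.mem_preimage, Set.mem_singleton_iff, Set.mem_union, Set.mem_ofPred_eq, Set.mem_inter_iff,
      Set.mem_compl_iff, Set.mem_iUnion]
    constructor
    · intro hs
      by_cases hh : ∃ b, ∃ N, ∀ n ≥ N, s n = b
      · obtain ⟨b, N, hN⟩ := hh
        left
        rw [slim_eq hN] at hs
        exact ⟨N, hs ▸ hN⟩
      · right
        refine ⟨?_, hh⟩
        unfold slim at hs
        rw [dif_neg hh] at hs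
        exact hs.symm
    · rintro (⟨N, hN⟩ | ⟨ha, hh⟩)
      · exact slim_eq hN
      · unfold slim
        rw [dif_neg hh, ha]
  rw [e]
  exact (key a).union ((MeasurableSet.const _).inter (MeasurableSet.iUnion key).compl)

lemma exists_lim [Countable V] (h : Mu G μ) (hC : 112 ≤ C) (o : V) :
    ∃ f : (V → ℝ) → V → ℕ, (∀ v, Measurable (fun x => f x v)) ∧ Eqv G f ∧
      (∀ᵐ x ∂μ, ∀ w w', w ≠ w' → OKd C (G.dist w w') (f x w) (f x w')) ∧ ∀ᵐ x ∂μ, ∀ v, f x v ≠ 4 := by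
  obtain ⟨F, F1, F2, F3⟩ := exists_seq h hC o
  have geo : ∑' n : ℕ, (7:ℝ≥0∞)⁻¹ ^ n ≠ ⊤ := by
    rw [ENNReal.tsum_geometric]
    simp only [ne_eq, ENNReal.inv_eq_top, tsub_eq_zero_iff_le, not_le]
    exact ENNReal.inv_lt_one.2 (by norm_num)
  have q1 : (7:ℝ≥0∞)⁻¹ ≤ 1 := ENNReal.inv_le_one.2 (by norm_num)
  have A : ∀ᵐ x ∂μ, ∀ v, ∃ N, ∀ n ≥ N, F n x v = F N x v := by
    rw [ae_all_iff]
    intro v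
    have hs : ∑' j, μ {x | F (j+1) x v ≠ F (j+2) x v} ≠ ⊤ := by
      refine ne_top_of_le_ne_top (b := ∑' j : ℕ, 48 * (7:ℝ≥0∞)⁻¹ ^ j) ?_ (ENNReal.tsum_le_tsum fun j => ?_)
      · rw [ENNReal.tsum_mul_left]; exact ENNReal.mul_ne_top (by simp) geo
      · have e : μ {x | F (j+1) x v ≠ F (j+2) x v} = μ {x | F (j+1) x o ≠ F (j+2) x o} :=
          h.const_prob (F := fun x v => F (j+1) x v ≠ F (j+2) x v)
            (fun u => ne_meas ((F1 _).meas u) ((F1 _).meas u))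
            (fun φ x v => by
              show (_ ≠ _) = (_ ≠ _)
              rw [(F1 _).eqv, (F1 _).eqv]) v o
        rw [e]
        refine (F3 (j+1)).trans ?_
        rw [mul_assoc]
        gcongr
        set M := Dk C (j+1) + (Ex C (j+1+1) - Ex C (j+1)) with hM
        have hc : M + j ≤ Ex C (j+1) := Ex_cost C j hC
        calc (7:ℝ≥0∞) ^ M * 7⁻¹ ^ Ex C (j+1) ≤ 7 ^ M * 7⁻¹ ^ (M + j) := by
              gcongr 7 ^ M * ?_
              exact pow_le_pow_right_of_le_one' q1 hc
          _ = 7⁻¹ ^ j := by rw [pow_add _ M j, ← mul_assoc, sp, one_mul]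
    filter_upwards [ae_eventually_notMem hs] with x hx
    obtain ⟨N, hN⟩ := Filter.eventually_atTop.1 hx
    refine ⟨N + 1, fun n hn => ?_⟩
    induction n, hn using Nat.le_induction with
    | base => rfl
    | succ n hn ih =>
      have := hN (n-1) (by omega)
      simp only [not_not] at this
      rw [show n - 1 + 1 = n by omega, show n - 1 + 2 = n + 1 by omega] at this
      rw [← this, ih]
  have B : ∀ᵐ x ∂μ, ∀ v, ∃ N, ∀ n ≥ N, F n x v ≠ 4 := by
    rw [ae_all_iff]
    intro v
    have hs : ∑' j, μ {x | F j x v = 4} ≠ ⊤ := by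
      refine ne_top_of_le_ne_top geo (ENNReal.tsum_le_tsum fun j => ?_)
      rw [(F1 j).prob_const h (fun a => a = 4) v o]
      exact (F2 j).trans (pow_le_pow_right_of_le_one' q1 (Ex_ge C j hC))
    filter_upwards [ae_eventually_notMem hs] with x hx
    obtain ⟨N, hN⟩ := Filter.eventually_atTop.1 hx
    exact ⟨N, fun n hn => hN n hn⟩
  refine ⟨fun x v => slim (fun n => F n x v), fun v => ?_, fun φ x v => ?_, ?_, ?_⟩
  · exact slim_meas.comp (measurable_pi_lambda _ fun n => (F1 n).meas v)
  · show slim _ = slim _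
    congr 1; ext n; exact (F1 n).eqv φ x v
  · filter_upwards [A] with x hx w w' hne
    obtain ⟨N, hN⟩ := hx w
    obtain ⟨N', hN'⟩ := hx w'
    rw [slim_eq hN, slim_eq hN', ← hN (max N N') (le_max_left _ _), ← hN' (max N N') (le_max_right _ _)]
    exact ((F1 _).val x).1 w w' hne
  · filter_upwards [A, B] with x hx hx' v
    obtain ⟨N, hN⟩ := hx v
    obtain ⟨N', hN'⟩ := hx' v
    rw [slim_eq hN, ← hN (max N N') (le_max_left _ _)]
    exact hN' _ (le_max_right _ _)
end


section
variable {V : Type} {G : SimpleGraph V} {μ : Measure (V → ℝ)} {C : ℕ}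

lemma level_prob [Countable V] (h : Mu G μ) {f : (V → ℝ) → V → ℕ} (fm : ∀ v, Measurable (fun x => f x v)) (fe : Eqv G f)
    (fo : ∀ᵐ x ∂μ, ∀ w w', w ≠ w' → OKd (2 * C) (G.dist w w') (f x w) (f x w')) (hC : 0 < C) (o : V) (k : ℕ) :
    μ {x | f x o = 5 + k} ≤ ENNReal.ofReal (1 / C * (1 / ((k+1) * (k+2)))) := by
  have := h.prob
  have hpos : 0 < C * ((k+1)*(k+2)) := by positivity
  obtain ⟨r, hr⟩ : ∃ r, r + 1 = C * ((k+1)*(k+2)) := ⟨C * ((k+1)*(k+2)) - 1, by omega⟩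
  have hD : Dk (2*C) k = 2 * (r + 1) := by rw [hr]; unfold Dk; ring
  have h1 : ((r + 1 : ℕ) : ℝ≥0∞) * μ {x | f x o = 5 + k} ≤ 1 := by
    calc ((r + 1 : ℕ) : ℝ≥0∞) * μ {x | f x o = 5 + k} ≤ (Bl G o r).card * μ {x | f x o = 5 + k} := by
          gcongr; exact h.t6.le_card_Bl o r
      _ = ∑ w ∈ Bl G o r, μ {x | f x o = 5 + k} := by rw [Finset.sum_const, nsmul_eq_mul]
      _ = ∑ w ∈ Bl G o r, μ {x | f x w = 5 + k} := by
          refine Finset.sum_congr rfl fun w _ => ?_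
          exact h.const_prob (F := fun x v => f x v = 5 + k) (fun u => lab_meas fm (fun a => a = 5 + k) u)
            (fun φ x v => by show (_ = _) = (_ = _); rw [fe]) o w
      _ = ∑ w ∈ Bl G o r, ∫⁻ x, ind (f x w = 5 + k) ∂μ :=
          Finset.sum_congr rfl fun w _ => (lint_ind μ (lab_meas fm (fun a => a = 5 + k) w)).symm
      _ = ∫⁻ x, ∑ w ∈ Bl G o r, ind (f x w = 5 + k) ∂μ :=
          (lintegral_finsetSum _ fun w _ => ind_meas (lab_meas fm (fun a => a = 5 + k) w)).symm
      _ ≤ ∫⁻ x, 1 ∂μ := by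
          apply lintegral_mono_ae
          filter_upwards [fo] with x hx
          by_cases hw : ∃ w ∈ Bl G o r, f x w = 5 + k
          · obtain ⟨w, hw, hwk⟩ := hw
            rw [Finset.sum_eq_single_of_mem w hw]
            · exact ind_le_one _
            · intro w' hw' hne
              apply ind_false
              intro hk
              have h1 := (hx w' w hne).2.1 k hk hwk
              have h2 := h.t6.tri w' o w
              rw [h.t6.mem_Bl] at hw hw'
              rw [G.dist_comm (u := w') (v := o)] at h2
              omega
          · rw [Finset.sum_eq_zero]
            · exact zero_le
            · intro w hw'
              exact ind_false fun hk => hw ⟨w, hw', hk⟩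
      _ = 1 := by simp
  have h2 : μ {x | f x o = 5 + k} ≤ ((r + 1 : ℕ) : ℝ≥0∞)⁻¹ := by
    rw [ENNReal.le_inv_iff_mul_le, mul_comm]; exact h1
  refine h2.trans (le_of_eq ?_)
  have e : (1 / (C:ℝ) * (1 / ((k+1) * (k+2)))) = (((r+1 : ℕ) : ℝ))⁻¹ := by
    rw [hr]; push_cast; rw [one_div_mul_one_div, one_div]
  rw [e, ENNReal.ofReal_inv_of_pos (by positivity), ENNReal.ofReal_natCast]

lemma red_prob [Countable V] (h : Mu G μ) {f : (V → ℝ) → V → ℕ} (fm : ∀ v, Measurable (fun x => f x v)) (fe : Eqv G f)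
    (fo : ∀ᵐ x ∂μ, ∀ w w', w ≠ w' → OKd (2 * C) (G.dist w w') (f x w) (f x w')) (f4 : ∀ᵐ x ∂μ, ∀ v, f x v ≠ 4)
    (hC : 0 < C) (o : V) : μ {x | 4 ≤ f x o} ≤ ENNReal.ofReal (1 / C) := by
  have tel : ∀ j : ℕ, ∑ k ∈ Finset.range j, (1:ℝ) / ((k+1)*(k+2)) = 1 - 1 / (j+1) := by
    intro j
    induction j with
    | zero => simp
    | succ n ih => rw [Finset.sum_range_succ, ih]; push_cast; field_simp; ring
  calc μ {x | 4 ≤ f x o} ≤ μ (⋃ k, {x | f x o = 5 + k}) := by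
        apply measure_mono_ae
        filter_upwards [f4] with x hx hx4
        have h4 : 4 ≤ f x o := hx4
        have := hx o
        show x ∈ ⋃ k, {x | f x o = 5 + k}
        rw [Set.mem_iUnion]
        exact ⟨f x o - 5, by show f x o = _; omega⟩
    _ ≤ ∑' k, μ {x | f x o = 5 + k} := measure_iUnion_le _
    _ ≤ ∑' k : ℕ, ENNReal.ofReal (1 / C * (1 / ((k+1) * (k+2)))) :=
        ENNReal.tsum_le_tsum fun k => level_prob h fm fe fo hC o k
    _ ≤ _ := by
        apply ENNReal.tsum_le_of_sum_range_le
        intro n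
        rw [← ENNReal.ofReal_sum_of_nonneg (fun i _ => by positivity)]
        apply ENNReal.ofReal_le_ofReal
        rw [← Finset.mul_sum, tel]
        have : (0:ℝ) ≤ 1 / (n+1) := by positivity
        have : (0:ℝ) ≤ 1 / C := by positivity
        nlinarith

lemma comp_fin (h : T6 G) {R : V → Prop} (hR : ∀ u v, R u → R v → u ≠ v → 4 ≤ G.dist u v)
    (S : Set V) (hS : ∀ v ∈ S, R v ∨ ∃ u, G.Adj u v ∧ R u)
    (c : (G.induce S).ConnectedComponent) : c.supp.Finite := by
  have near : ∀ a : S, ∃ r, R r ∧ G.dist r a.1 ≤ 1 := by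
    rintro ⟨a, ha⟩
    rcases hS a ha with ha | ⟨u, hu, hr⟩
    · exact ⟨a, ha, by simp⟩
    · exact ⟨u, hr, (SimpleGraph.dist_eq_one_iff_adj.mpr hu).le⟩
  have step : ∀ a b : S, (G.induce S).Walk a b → ∀ r, R r → G.dist r a.1 ≤ 1 → G.dist r b.1 ≤ 1 := by
    intro a b w
    induction w with
    | nil => intro r _ hd; exact hd
    | @cons u v w' hadj _ ih =>
      intro r hr hd
      apply ih r hr
      obtain ⟨r', hr', hd'⟩ := near v
      have h1 : G.dist u.1 v.1 = 1 := SimpleGraph.dist_eq_one_iff_adj.mpr hadj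
      have h2 := h.tri r u.1 v.1
      have h3 := h.tri r v.1 r'
      rw [G.dist_comm (u := v.1)] at h3
      by_cases he : r = r'
      · rw [he]; exact hd'
      · have := hR r r' hr hr' he
        omega
  obtain ⟨a, ha⟩ := c.exists_rep
  · obtain ⟨r, hr, hd⟩ := near a
    refine Set.Finite.subset ((Bl G r 1).finite_toSet.preimage Subtype.val_injective.injOn) ?_
    intro b hb
    rw [SimpleGraph.ConnectedComponent.mem_supp_iff] at hb
    obtain ⟨w⟩ := (SimpleGraph.ConnectedComponent.eq.1 (hb.trans ha.symm)).symm
    simp only [Set.mem_preimage, Finset.mem_coe, h.mem_Bl]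
    exact step a b w r hr hd
end

/-- For every ε > 0, the 6-regular tree admits an fiid `Fin 5`-labelling (colors `0,1,2,3`
and "red" `4`) such that (1) each vertex is red with probability less than ε, (2) almost
surely each connected component of the subgraph induced on the 1-ball around the red set is
finite, and (3) almost surely the labelling is proper at every non-red vertex. -/
theorem fiid_red_labelling_of_T6_with_finite_red_components
    (V : Type) [Countable V] [Infinite V]
    (G : SimpleGraph V) (hconn : G.Connected) (hacyc : G.IsAcyclic)
    (hreg : ∀ v : V, (G.neighborSet v).ncard = 6)
    (μ : Measure (V → ℝ)) [IsProbabilityMeasure μ]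
    (hμ : ∀ s : Finset V,
      Measure.map (fun (x : V → ℝ) (v : s) => x v) μ
        = Measure.pi (fun _ : s => volume.restrict (Set.Icc (0:ℝ) 1)))
    (ε : ℝ) (hε : 0 < ε) :
    ∃ f : (V → ℝ) → (V → Fin 5),
      Measurable f ∧
      (∀ (φ : G ≃g G) (x : V → ℝ) (v : V),
        f (fun u => x (φ.symm u)) v = f x (φ.symm v)) ∧
      (∀ v : V, μ {x | f x v = 4} < ENNReal.ofReal ε) ∧
      (∀ᵐ x ∂μ,
        ∀ c : (G.induce {v : V | f x v = 4 ∨ ∃ u, G.Adj u v ∧ f x u = 4}).ConnectedComponent,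
          c.supp.Finite) ∧
      (∀ᵐ x ∂μ, ∀ u v : V, G.Adj u v → f x v ≠ 4 → f x u ≠ f x v) := by
  have ht : T6 G := ⟨⟨hconn, hacyc⟩, hreg⟩
  have h : Mu G μ := Mu.mk' ht μ hμ
  have o : V := Classical.arbitrary V
  obtain ⟨N, hN⟩ := exists_nat_one_div_lt hε
  set C := N + 112 with hCdef
  have hC : (1:ℝ) / C < ε := by
    refine lt_of_le_of_lt ?_ hN
    apply one_div_le_one_div_of_le (by positivity)
    rw [hCdef]; push_cast; linarith
  obtain ⟨g, gm, ge, go, g4⟩ := exists_lim (C := 2 * C) h (by omega) o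
  let T : ℕ → Fin 5 := fun a => ⟨min a 4, by omega⟩
  have T4 : ∀ a, T a = 4 ↔ 4 ≤ a := by
    intro a
    simp only [T, Fin.ext_iff]
    show min a 4 = 4 ↔ _
    omega
  refine ⟨fun x v => T (g x v), ?_, ?_, ?_, ?_, ?_⟩
  · exact measurable_pi_lambda _ fun v => (Measurable.of_discrete (f := T)).comp (gm v)
  · intro φ x v
    have := ge φ x (φ.symm v)
    rw [φ.apply_symm_apply] at this
    exact congrArg T this
  · intro v
    refine lt_of_le_of_lt ?_ ((ENNReal.ofReal_lt_ofReal_iff hε).2 hC)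
    simp only [T4]
    exact red_prob h gm ge go g4 (by omega) v
  · filter_upwards [go, g4] with x hx hx4
    refine comp_fin ht (R := fun v => T (g x v) = 4) ?_ _ (fun v hv => hv)
    intro u v hu hv hne
    rw [T4] at hu hv
    have := hx4 u
    have := hx4 v
    exact (hx u v hne).2.2 (by omega) (by omega)
  · filter_upwards [go] with x hx u v hadj hv he
    rw [ne_eq, T4] at hv
    have e : min (g x u) 4 = min (g x v) 4 := congrArg Fin.val he
    have := (hx u v hadj.ne).1 (SimpleGraph.dist_eq_one_iff_adj.mpr hadj) (by omega)
    omega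
end

section
/- There exist R ≥ 0 and a function σ : ℝ → (ℕ × ℕ → ℝ) with σ(0)(4,3) = 1 and σ(0)(t) = 0 for every t ≠ (4,3), such that for every x ∈ [0, R] and every t ∈ T the function x ↦ σ(x)(t) has derivative F_t(σ(x)) at x, and moreover: g(σ(x)) < 0.99999 for every x ∈ [0, R], and Σ_{(d,c) ∈ T} (d − 1)·q_{(d,c)}(σ(R)) < 0.99999. (Numerical proposition for the case (r, p) = (4, 3): the solution of the greedy-coloring ODE stays subcritical until the branching process describing components of the remainder becomes subcritical.) -/
open Finset

/-- The set of possible types when `p`-coloring the `r`-regular tree: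
pairs `(d, c)` with `d ≤ r` uncolored neighbours and `2 ≤ c ≤ p` available colors. -/
def typeSet (r p : ℕ) : Finset (ℕ × ℕ) := Finset.range (r + 1) ×ˢ Finset.Icc 2 p

/-- `q t z`: the normalized degree-biased probability of a type `t`. -/
noncomputable def q (r p : ℕ) (t : ℕ × ℕ) (z : ℕ × ℕ → ℝ) : ℝ :=
  if t ∈ typeSet r p then
    (t.1 : ℝ) * z t / ∑ s ∈ typeSet r p, (s.1 : ℝ) * z s
  else 0

/-- `g z`: the expected growth rate of cascades. -/
noncomputable def g (r p : ℕ) (z : ℕ × ℕ → ℝ) : ℝ :=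
  (2 / (p : ℝ)) * ∑ d ∈ Finset.range (r + 1), ((d : ℝ) - 1) * q r p (d, 2) z

/-- `ΔB t z`: the expected number of vertices of type `t` created along one branch of a
cascade. -/
noncomputable def ΔB (r p : ℕ) (t : ℕ × ℕ) (z : ℕ × ℕ → ℝ) : ℝ :=
  (1 / (1 - g r p z)) *
    (-(q r p t z) + (((t.2 : ℝ) + 1) / (p : ℝ)) * q r p (t.1 + 1, t.2 + 1) z
      + (((p : ℝ) - (t.2 : ℝ)) / (p : ℝ)) * q r p (t.1 + 1, t.2) z)

/-- `Δ s t z`: the expected change in the number of vertices of type `t` caused by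
activating a vertex of type `s`. -/
noncomputable def Δ (r p : ℕ) (s t : ℕ × ℕ) (z : ℕ × ℕ → ℝ) : ℝ :=
  -(if s = t then 1 else 0) + (s.1 : ℝ) * ΔB r p t z

/-- The tuning parameters `p_{(d,c)}`. -/
noncomputable def tune (s : ℕ × ℕ) : ℝ :=
  if s.1 = 1 then (2 : ℝ) ^ (-10 : ℤ) else (2 : ℝ) ^ ((2 : ℤ) - 2 * (s.1 : ℤ))

/-- The vector field of the greedy-coloring ODE, component `t`. -/
noncomputable def Fvec (r p : ℕ) (t : ℕ × ℕ) (z : ℕ × ℕ → ℝ) : ℝ :=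
  ∑ s ∈ typeSet r p, tune s * z s * Δ r p s t z

/-! ### Existence for a truncated system -/

/-- bounded and Lipschitz real functions -/
def BL (f : ℝ × ℝ × ℝ → ℝ) : Prop :=
  (∃ C, 0 ≤ C ∧ ∀ x, |f x| ≤ C) ∧ (∃ K, 0 ≤ K ∧ ∀ x y, |f x - f y| ≤ K * dist x y)

lemma BL.const (c : ℝ) : BL (fun _ => c) :=
  ⟨⟨|c|, abs_nonneg _, fun _ => le_rfl⟩, ⟨0, le_rfl, fun _ _ => by simp⟩⟩

lemma BL.add {f h : ℝ × ℝ × ℝ → ℝ} (hf : BL f) (hh : BL h) : BL (fun x => f x + h x) := by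
  obtain ⟨⟨C, hC, hfC⟩, K, hK, hfK⟩ := hf
  obtain ⟨⟨C', hC', hhC⟩, K', hK', hhK⟩ := hh
  refine ⟨⟨C + C', by positivity, fun x => ?_⟩, K + K', by positivity, fun x y => ?_⟩
  · exact (abs_add_le _ _).trans (add_le_add (hfC x) (hhC x))
  · have : f x + h x - (f y + h y) = (f x - f y) + (h x - h y) := by ring
    rw [this, add_mul]
    exact (abs_add_le _ _).trans (add_le_add (hfK x y) (hhK x y))

lemma BL.mul {f h : ℝ × ℝ × ℝ → ℝ} (hf : BL f) (hh : BL h) : BL (fun x => f x * h x) := by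
  obtain ⟨⟨C, hC, hfC⟩, K, hK, hfK⟩ := hf
  obtain ⟨⟨C', hC', hhC⟩, K', hK', hhK⟩ := hh
  refine ⟨⟨C * C', by positivity, fun x => ?_⟩, C * K' + K * C', by positivity, fun x y => ?_⟩
  · rw [abs_mul]
    exact mul_le_mul (hfC x) (hhC x) (abs_nonneg _) hC
  · have : f x * h x - f y * h y = f x * (h x - h y) + (f x - f y) * h y := by ring
    rw [this]
    refine (abs_add_le _ _).trans ?_
    rw [abs_mul, abs_mul]
    have h1 := mul_le_mul (hfC x) (hhK x y) (abs_nonneg _) hC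
    have h2 := mul_le_mul (hfK x y) (hhC y) (abs_nonneg _) (by positivity)
    nlinarith

lemma BL.max {f : ℝ × ℝ × ℝ → ℝ} (hf : BL f) (c : ℝ) : BL (fun x => max (f x) c) := by
  obtain ⟨⟨C, hC, hfC⟩, K, hK, hfK⟩ := hf
  refine ⟨⟨C + |c|, by positivity, fun x => ?_⟩, K, hK, fun x y => ?_⟩
  · refine (abs_max_le_max_abs_abs).trans ?_
    have := hfC x
    have := abs_nonneg c
    exact max_le (by linarith) (by linarith)
  · exact (abs_max_sub_max_le_abs _ _ _).trans (hfK x y)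

lemma BL.inv {f : ℝ × ℝ × ℝ → ℝ} (hf : BL f) {c : ℝ} (hc : 0 < c) (h : ∀ x, c ≤ f x) :
    BL (fun x => (f x)⁻¹) := by
  obtain ⟨⟨C, hC, hfC⟩, K, hK, hfK⟩ := hf
  have hpos : ∀ x, 0 < f x := fun x => hc.trans_le (h x)
  have hi : ∀ x, |(f x)⁻¹| ≤ c⁻¹ := fun x => by
    rw [abs_of_pos (inv_pos.2 (hpos x))]
    exact inv_anti₀ hc (h x)
  refine ⟨⟨c⁻¹, by positivity, hi⟩, c⁻¹ * c⁻¹ * K, by positivity, fun x y => ?_⟩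
  have : (f x)⁻¹ - (f y)⁻¹ = (f x)⁻¹ * (f y)⁻¹ * (f y - f x) := by
    have := (hpos x).ne'
    have := (hpos y).ne'
    field_simp
  rw [this, abs_mul, abs_mul, abs_sub_comm]
  have h1 := mul_le_mul (hi x) (hi y) (abs_nonneg _) (by positivity)
  have h2 := mul_le_mul h1 (hfK x y) (abs_nonneg _) (by positivity)
  linarith

/-- clamping to `[-1, 1000]` -/
noncomputable def cl (r : ℝ) : ℝ := max (min r 1000) (-1)

lemma cl_eq {r : ℝ} (h1 : -1 ≤ r) (h2 : r ≤ 1000) : cl r = r := by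
  rw [cl, min_eq_left h2, max_eq_left h1]

lemma BL.clamp {f : ℝ × ℝ × ℝ → ℝ} (hf : ∀ x y, |f x - f y| ≤ dist x y) :
    BL (fun x => cl (f x)) := by
  refine ⟨⟨1000, by norm_num, fun x => ?_⟩, 1, by norm_num, fun x y => ?_⟩
  · unfold cl
    rw [abs_le]
    refine ⟨le_trans (by norm_num) (le_max_right _ _), max_le (min_le_right _ _) (by norm_num)⟩
  · unfold cl
    refine (abs_max_sub_max_le_abs _ _ _).trans ?_
    have := abs_min_sub_min_le_max (f x) 1000 (f y) 1000
    simp only [sub_self, abs_zero] at this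
    rw [max_eq_left (abs_nonneg _)] at this
    linarith [hf x y]

noncomputable def AA (u v y : ℝ) : ℝ := 1 / 16 + 3 / 16 * u + 1 / 2 * v + 1 / 1024 * y
noncomputable def DD (u v y : ℝ) : ℝ := 4 + (-1) * u + 2 / 3 * v + y

noncomputable def lamF (z : ℝ × ℝ × ℝ) : ℝ :=
  max (AA (cl z.1) (cl z.2.1) (cl z.2.2)) 0 * (max (DD (cl z.1) (cl z.2.1) (cl z.2.2)) (1 / 10))⁻¹

noncomputable def G1 (z : ℝ × ℝ × ℝ) : ℝ := (-3 / 64) * cl z.1 + lamF z * (cl z.1 + 4)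
noncomputable def G2 (z : ℝ × ℝ × ℝ) : ℝ :=
  (-15 / 64) * cl z.2.1 + lamF z * (2 * cl z.2.1 + cl z.1)
noncomputable def G3 (z : ℝ × ℝ × ℝ) : ℝ :=
  (15 / 1024) * cl z.2.2 + lamF z * (3 * cl z.2.2 + 2 / 3 * cl z.2.1)

lemma BL_c1 : BL (fun z => cl z.1) := BL.clamp fun x y => by
  rw [← Real.dist_eq]; exact le_max_left _ _
lemma BL_c2 : BL (fun z => cl z.2.1) := BL.clamp fun x y => by
  rw [← Real.dist_eq]; exact (le_max_left _ _).trans (le_max_right _ _)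
lemma BL_c3 : BL (fun z => cl z.2.2) := BL.clamp fun x y => by
  rw [← Real.dist_eq]; exact (le_max_right _ _).trans (le_max_right _ _)

lemma BL_lam : BL lamF := by
  unfold lamF AA DD
  refine BL.mul (BL.max ?_ _) (BL.inv (BL.max ?_ _) (c := 1 / 10) (by norm_num)
    (fun _ => le_max_right _ _))
  · exact (((BL.const _).add ((BL.const _).mul BL_c1)).add ((BL.const _).mul BL_c2)).add
      ((BL.const _).mul BL_c3)
  · exact (((BL.const _).add ((BL.const _).mul BL_c1)).add ((BL.const _).mul BL_c2)).add BL_c3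

lemma BL_G1 : BL G1 :=
  ((BL.const _).mul BL_c1).add (BL_lam.mul (BL_c1.add (BL.const _)))
lemma BL_G2 : BL G2 :=
  ((BL.const _).mul BL_c2).add (BL_lam.mul (((BL.const _).mul BL_c2).add BL_c1))
lemma BL_G3 : BL G3 :=
  ((BL.const _).mul BL_c3).add (BL_lam.mul (((BL.const _).mul BL_c3).add ((BL.const _).mul BL_c2)))

lemma BL.continuous {f : ℝ × ℝ × ℝ → ℝ} (hf : BL f) : Continuous f := by
  obtain ⟨-, K, hK, h⟩ := hf
  have : LipschitzWith ⟨K, hK⟩ f := LipschitzWith.of_dist_le_mul fun x y => by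
    rw [Real.dist_eq]; exact h x y
  exact this.continuous

lemma exists_sol : ∃ α : ℝ → ℝ × ℝ × ℝ, α 0 = 0 ∧ Continuous α ∧
    ∀ x ∈ Set.Icc (0 : ℝ) 2000, HasDerivAt α (G1 (α x), G2 (α x), G3 (α x)) x := by
  obtain ⟨⟨C1, hC1, h1⟩, K1, hK1, l1⟩ := BL_G1
  obtain ⟨⟨C2, hC2, h2⟩, K2, hK2, l2⟩ := BL_G2
  obtain ⟨⟨C3, hC3, h3⟩, K3, hK3, l3⟩ := BL_G3
  have h0 : (0 : ℝ) ∈ Set.Icc (-1 : ℝ) 2001 := by constructor <;> norm_num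
  have hP : IsPicardLindelof (fun _ : ℝ => fun z : ℝ × ℝ × ℝ => (G1 z, G2 z, G3 z))
      (⟨0, h0⟩ : Set.Icc (-1 : ℝ) 2001) 0 (Real.toNNReal ((C1 + C2 + C3) * 2001)) 0
      (Real.toNNReal (C1 + C2 + C3)) (Real.toNNReal (K1 + K2 + K3)) := by
    apply IsPicardLindelof.of_time_independent
    · intro z _
      rw [Real.coe_toNNReal _ (by positivity)]
      simp only [Prod.norm_def, Real.norm_eq_abs]
      exact max_le (by linarith [h1 z]) (max_le (by linarith [h2 z]) (by linarith [h3 z]))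
    · apply LipschitzWith.lipschitzOnWith
      apply LipschitzWith.of_dist_le_mul
      intro z z'
      have := l1 z z'
      have := l2 z z'
      have := l3 z z'
      have hd : 0 ≤ dist z z' := dist_nonneg
      have := mul_nonneg hK1 hd
      have := mul_nonneg hK2 hd
      have := mul_nonneg hK3 hd
      rw [Real.coe_toNNReal _ (by positivity), Prod.dist_eq (x := (G1 z, _)), Prod.dist_eq, Real.dist_eq, Real.dist_eq, Real.dist_eq]
      refine max_le ?_ (max_le ?_ ?_) <;> simp only [] <;> nlinarith
    · have : max ((2001 : ℝ) - 0) (0 - -1) = 2001 := by norm_num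
      rw [this, Real.coe_toNNReal _ (by positivity), Real.coe_toNNReal _ (by positivity),
        NNReal.coe_zero]
      linarith
  obtain ⟨α, hα0, hα⟩ := hP.exists_eq_forall_mem_Icc_hasDerivWithinAt₀
  have hle : (-(1/2) : ℝ) ≤ 2000 + 1/2 := by norm_num
  have hc : ContinuousOn α (Set.Icc (-(1/2) : ℝ) (2000 + 1/2)) := fun x hx =>
    ((hα x ⟨by linarith [hx.1], by linarith [hx.2]⟩).continuousWithinAt).mono
      (Set.Icc_subset_Icc (by norm_num) (by norm_num))
  refine ⟨Set.IccExtend hle ((Set.Icc (-(1/2) : ℝ) (2000 + 1/2)).domRestrict α), ?_, ?_, ?_⟩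
  · rw [Set.IccExtend_of_mem _ _ (by constructor <;> norm_num)]
    exact hα0
  · exact (continuousOn_iff_continuous_domRestrict.1 hc).Icc_extend'
  · intro x hx
    have hx' : x ∈ Set.Icc (-(1/2) : ℝ) (2000 + 1/2) := ⟨by linarith [hx.1], by linarith [hx.2]⟩
    have e : Set.IccExtend hle ((Set.Icc (-(1/2) : ℝ) (2000 + 1/2)).domRestrict α) x = α x := by
      rw [Set.IccExtend_of_mem _ _ hx']; rfl
    rw [e]
    have hd := (hα x ⟨by linarith [hx.1], by linarith [hx.2]⟩).hasDerivAt
      (Icc_mem_nhds (by linarith [hx.1]) (by linarith [hx.2]))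
    refine hd.congr_of_eventuallyEq ?_
    filter_upwards [Icc_mem_nhds (show (-(1/2) : ℝ) < x by linarith [hx.1])
      (show x < 2000 + 1/2 by linarith [hx.2])] with s hs
    rw [Set.IccExtend_of_mem _ _ hs]; rfl

/-- The trajectories of the projectivised system, valid as long as it stays in the box. -/
structure Traj (u v y L l : ℝ → ℝ) : Prop where
  cu : Continuous u
  cv : Continuous v
  cy : Continuous y
  cl : Continuous l
  u0 : u 0 = 0
  v0 : v 0 = 0
  y0 : y 0 = 0
  L0 : L 0 = 0
  dL : ∀ x, HasDerivAt L (l x) x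
  l_nonneg : ∀ x, 0 ≤ l x
  l_eq : ∀ x, (-1 ≤ u x ∧ u x ≤ 1000) → (-1 ≤ v x ∧ v x ≤ 1000) → (-1 ≤ y x ∧ y x ≤ 1000) →
    0 ≤ AA (u x) (v x) (y x) → 1 / 10 ≤ DD (u x) (v x) (y x) →
    l x * DD (u x) (v x) (y x) = AA (u x) (v x) (y x)
  du : ∀ x ∈ Set.Icc (0 : ℝ) 2000, (-1 ≤ u x ∧ u x ≤ 1000) → (-1 ≤ v x ∧ v x ≤ 1000) →
    (-1 ≤ y x ∧ y x ≤ 1000) → HasDerivAt u ((-3 / 64) * u x + l x * (u x + 4)) x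
  dv : ∀ x ∈ Set.Icc (0 : ℝ) 2000, (-1 ≤ u x ∧ u x ≤ 1000) → (-1 ≤ v x ∧ v x ≤ 1000) →
    (-1 ≤ y x ∧ y x ≤ 1000) → HasDerivAt v ((-15 / 64) * v x + l x * (2 * v x + u x)) x
  dy : ∀ x ∈ Set.Icc (0 : ℝ) 2000, (-1 ≤ u x ∧ u x ≤ 1000) → (-1 ≤ v x ∧ v x ≤ 1000) →
    (-1 ≤ y x ∧ y x ≤ 1000) →
    HasDerivAt y ((15 / 1024) * y x + l x * (3 * y x + 2 / 3 * v x)) x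

lemma hasDeriv_fst {F : Type*} [NormedAddCommGroup F] [NormedSpace ℝ F] {α : ℝ → ℝ × F}
    {d : ℝ × F} {x : ℝ} (h : HasDerivAt α d x) : HasDerivAt (fun x => (α x).1) d.1 x := by
  have := (ContinuousLinearMap.fst ℝ ℝ F).hasFDerivAt.comp_hasDerivAt x h
  exact this

lemma hasDeriv_snd {F : Type*} [NormedAddCommGroup F] [NormedSpace ℝ F] {α : ℝ → ℝ × F}
    {d : ℝ × F} {x : ℝ} (h : HasDerivAt α d x) : HasDerivAt (fun x => (α x).2) d.2 x := by
  have := (ContinuousLinearMap.snd ℝ ℝ F).hasFDerivAt.comp_hasDerivAt x h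
  exact this

lemma exists_traj : ∃ u v y L l : ℝ → ℝ, Traj u v y L l := by
  obtain ⟨α, h0, hc, hd⟩ := exists_sol
  have hl : Continuous (fun x => lamF (α x)) := BL_lam.continuous.comp hc
  refine ⟨fun x => (α x).1, fun x => (α x).2.1, fun x => (α x).2.2,
    fun x => ∫ s in (0 : ℝ)..x, lamF (α s), fun x => lamF (α x), ?_⟩
  constructor
  · fun_prop
  · fun_prop
  · fun_prop
  · exact hl
  · simp [h0]
  · simp [h0]
  · simp [h0]
  · simp
  · intro x
    exact intervalIntegral.integral_hasDerivAt_right (hl.intervalIntegrable _ _)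
      (hl.stronglyMeasurableAtFilter _ _) hl.continuousAt
  · intro x
    unfold lamF
    have : (0 : ℝ) < max (DD (cl (α x).1) (cl (α x).2.1) (cl (α x).2.2)) (1 / 10) :=
      lt_of_lt_of_le (by norm_num) (le_max_right _ _)
    exact mul_nonneg (le_max_right _ _) (inv_nonneg.2 this.le)
  · intro x h1 h2 h3 hA hD
    simp only [lamF, cl_eq h1.1 h1.2, cl_eq h2.1 h2.2, cl_eq h3.1 h3.2]
    rw [max_eq_left hA, max_eq_left hD, mul_assoc, inv_mul_cancel₀, mul_one]
    linarith
  · intro x hx h1 h2 h3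
    have : HasDerivAt (fun x => (α x).1) (G1 (α x)) x :=
      hasDeriv_fst (hd x hx)
    simpa only [G1, cl_eq h1.1 h1.2] using this
  · intro x hx h1 h2 h3
    have : HasDerivAt (fun x => (α x).2.1) (G2 (α x)) x :=
      hasDeriv_fst (hasDeriv_snd (hd x hx))
    simpa only [G2, cl_eq h1.1 h1.2, cl_eq h2.1 h2.2] using this
  · intro x hx h1 h2 h3
    have : HasDerivAt (fun x => (α x).2.2) (G3 (α x)) x :=
      hasDeriv_snd (hasDeriv_snd (hd x hx))
    simpa only [G3, cl_eq h2.1 h2.2, cl_eq h3.1 h3.2] using this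

/-! ### Invariants -/

lemma first_hit {f : ℝ → ℝ} (hf : Continuous f) {a b c : ℝ} (hab : a ≤ b) (ha : f a < c)
    (hb : c ≤ f b) : ∃ s ∈ Set.Icc a b, f s = c ∧ ∀ r ∈ Set.Ico a s, f r < c := by
  let S := Set.Icc a b ∩ {x | c ≤ f x}
  have hS : IsClosed S := isClosed_Icc.inter (isClosed_le continuous_const hf)
  have hne : S.Nonempty := ⟨b, ⟨hab, le_rfl⟩, hb⟩
  have hbd : BddBelow S := ⟨a, fun x hx => hx.1.1⟩
  have hs : sInf S ∈ S := hS.csInf_mem hne hbd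
  have hlt : ∀ r ∈ Set.Ico a (sInf S), f r < c := by
    intro r hr
    by_contra hcon
    exact absurd (csInf_le hbd (show r ∈ S from ⟨⟨hr.1, hr.2.le.trans hs.1.2⟩, not_lt.1 hcon⟩))
      (not_le.2 hr.2)
  refine ⟨sInf S, hs.1, le_antisymm ?_ hs.2, hlt⟩
  by_contra hcon
  push Not at hcon
  obtain ⟨s', hs', he⟩ := intermediate_value_Icc hs.1.1 hf.continuousOn
    (show c ∈ Set.Icc (f a) (f (sInf S)) from ⟨ha.le, hcon.le⟩)
  have : s' ≠ sInf S := fun h => by rw [h] at he; linarith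
  have := hlt s' ⟨hs'.1, lt_of_le_of_ne hs'.2 this⟩
  linarith

lemma bootstrap {Q W : ℝ → Prop} {a b : ℝ} (hQ : IsOpen {x | Q x}) (hW : IsClosed {x | W x})
    (hQW : ∀ x, Q x → W x) (ha : Q a)
    (h : ∀ t ∈ Set.Icc a b, (∀ s ∈ Set.Icc a t, W s) → Q t) : ∀ t ∈ Set.Icc a b, Q t := by
  by_contra hcon
  push Not at hcon
  let S := Set.Icc a b ∩ {x | Q x}ᶜ
  have hS : IsClosed S := isClosed_Icc.inter hQ.isClosed_compl
  have hne : S.Nonempty := by obtain ⟨t, ht, hn⟩ := hcon; exact ⟨t, ht, hn⟩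
  have hbd : BddBelow S := ⟨a, fun x hx => hx.1.1⟩
  have hs : sInf S ∈ S := hS.csInf_mem hne hbd
  have hlt : ∀ r ∈ Set.Ico a (sInf S), W r := by
    intro r hr
    apply hQW
    by_contra hc
    exact absurd (csInf_le hbd (show r ∈ S from ⟨⟨hr.1, hr.2.le.trans hs.1.2⟩, hc⟩))
      (not_le.2 hr.2)
  have hne' : a ≠ sInf S := fun he => hs.2 (by rw [← he]; exact ha)
  have hcl : closure (Set.Ico a (sInf S)) ⊆ {x | W x} := hW.closure_subset_iff.2 hlt
  rw [closure_Ico hne'] at hcl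
  exact hs.2 (h _ hs.1 hcl)

lemma Traj.compare {u v y L l : ℝ → ℝ} (T : Traj u v y L l) {a b : ℝ} {f f' : ℝ → ℝ} (p r : ℝ)
    (ha : 0 ≤ f a) (hd : ∀ x ∈ Set.Icc a b, HasDerivAt f (f' x) x)
    (h : ∀ x ∈ Set.Icc a b, (p + r * l x) * f x ≤ f' x) : ∀ x ∈ Set.Icc a b, 0 ≤ f x := by
  have hE : ∀ x, HasDerivAt (fun x => Real.exp (-(p * x + r * L x)))
      (Real.exp (-(p * x + r * L x)) * (-(p * 1 + r * l x))) x := fun x =>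
    ((((hasDerivAt_id x).const_mul p).add ((T.dL x).const_mul r)).neg).exp
  have hP : ∀ x ∈ Set.Icc a b, HasDerivAt (fun x => f x * Real.exp (-(p * x + r * L x)))
      (f' x * Real.exp (-(p * x + r * L x)) +
        f x * (Real.exp (-(p * x + r * L x)) * (-(p * 1 + r * l x)))) x := fun x hx =>
    (hd x hx).mul (hE x)
  have hm : MonotoneOn (fun x => f x * Real.exp (-(p * x + r * L x))) (Set.Icc a b) := by
    refine monotoneOn_of_hasDerivWithinAt_nonneg (convex_Icc a b)
      (fun x hx => (hP x hx).continuousAt.continuousWithinAt)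
      (fun x hx => (hP x (interior_subset hx)).hasDerivWithinAt) ?_
    intro x hx
    have h1 := h x (interior_subset hx)
    have h2 := Real.exp_pos (-(p * x + r * L x))
    nlinarith
  intro x hx
  have h1 := hm ⟨le_rfl, hx.1.trans hx.2⟩ hx hx.1
  have h2 := Real.exp_pos (-(p * x + r * L x))
  have h3 := Real.exp_pos (-(p * a + r * L a))
  have h4 : 0 ≤ f x * Real.exp (-(p * x + r * L x)) := le_trans (mul_nonneg ha h3.le) h1
  exact nonneg_of_mul_nonneg_left h4 h2

/-- conditions under which the system is untruncated -/
def Box (u v y : ℝ) : Prop := (-1 ≤ u ∧ u ≤ 1000) ∧ (-1 ≤ v ∧ v ≤ 1000) ∧ (-1 ≤ y ∧ y ≤ 1000)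

section
variable {u v y L l : ℝ → ℝ}

lemma Traj.u_nonneg (T : Traj u v y L l) {a b : ℝ} (ha : 0 ≤ a) (hb : b ≤ 2000)
    (hB : ∀ x ∈ Set.Icc a b, Box (u x) (v x) (y x)) (h0 : 0 ≤ u a) :
    ∀ x ∈ Set.Icc a b, 0 ≤ u x := by
  refine T.compare (-3 / 64) 1 h0 (fun x hx => T.du x ⟨ha.trans hx.1, hx.2.trans hb⟩
    (hB x hx).1 (hB x hx).2.1 (hB x hx).2.2) (fun x hx => ?_)
  have := T.l_nonneg x
  linarith

lemma Traj.v_le (T : Traj u v y L l) {a b : ℝ} (ha : 0 ≤ a) (hb : b ≤ 2000)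
    (hB : ∀ x ∈ Set.Icc a b, Box (u x) (v x) (y x)) (h0 : v a ≤ u a ^ 2 / 8) :
    ∀ x ∈ Set.Icc a b, v x ≤ u x ^ 2 / 8 := by
  intro x hx
  have := T.compare (f := fun x => u x ^ 2 / 8 - v x) (-15 / 64) 2 (sub_nonneg.2 h0)
    (fun x hx => by
      have hx' : x ∈ Set.Icc (0 : ℝ) 2000 := ⟨ha.trans hx.1, hx.2.trans hb⟩
      obtain ⟨h1, h2, h3⟩ := hB x hx
      exact (((T.du x hx' h1 h2 h3).pow 2).div_const 8).sub (T.dv x hx' h1 h2 h3))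
    (fun x hx => by
      have := sq_nonneg (u x)
      simp only [Nat.cast_ofNat]
      nlinarith) x hx
  linarith

lemma Traj.v_ge (T : Traj u v y L l) {a b : ℝ} (ha : 0 ≤ a) (hb : b ≤ 2000)
    (hB : ∀ x ∈ Set.Icc a b, Box (u x) (v x) (y x)) (hu : ∀ x ∈ Set.Icc a b, 0 ≤ u x)
    (hl : ∀ x ∈ Set.Icc a b, u x ≤ 14 * l x) (h0 : u a ^ 2 / 10 ≤ v a) :
    ∀ x ∈ Set.Icc a b, u x ^ 2 / 10 ≤ v x := by
  intro x hx
  have := T.compare (f := fun x => v x - u x ^ 2 / 10) (-15 / 64) 2 (sub_nonneg.2 h0)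
    (fun x hx => by
      have hx' : x ∈ Set.Icc (0 : ℝ) 2000 := ⟨ha.trans hx.1, hx.2.trans hb⟩
      obtain ⟨h1, h2, h3⟩ := hB x hx
      exact (T.dv x hx' h1 h2 h3).sub (((T.du x hx' h1 h2 h3).pow 2).div_const 10))
    (fun x hx => by
      have h1 := mul_nonneg (hu x hx) (sub_nonneg.2 (hl x hx))
      have h2 := mul_nonneg (hu x hx) (T.l_nonneg x)
      simp only [Nat.cast_ofNat]
      nlinarith) x hx
  linarith

lemma Traj.y_le (T : Traj u v y L l) {a b : ℝ} (ha : 0 ≤ a) (hb : b ≤ 2000)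
    (hB : ∀ x ∈ Set.Icc a b, Box (u x) (v x) (y x)) (hu : ∀ x ∈ Set.Icc a b, 0 ≤ u x)
    (hl : ∀ x ∈ Set.Icc a b, u x ≤ 14 * l x) (hv : ∀ x ∈ Set.Icc a b, v x ≤ u x ^ 2 / 8)
    (h0 : y a ≤ 0.0086 * u a ^ 3) :
    ∀ x ∈ Set.Icc a b, y x ≤ 0.0086 * u x ^ 3 := by
  intro x hx
  have := T.compare (f := fun x => 0.0086 * u x ^ 3 - y x) (15 / 1024) 3 (sub_nonneg.2 h0)
    (fun x hx => by
      have hx' : x ∈ Set.Icc (0 : ℝ) 2000 := ⟨ha.trans hx.1, hx.2.trans hb⟩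
      obtain ⟨h1, h2, h3⟩ := hB x hx
      exact (((T.du x hx' h1 h2 h3).pow 3).const_mul 0.0086).sub (T.dy x hx' h1 h2 h3))
    (fun x hx => by
      have h1 := mul_nonneg (sq_nonneg (u x)) (sub_nonneg.2 (hl x hx))
      have h2 := mul_nonneg (sq_nonneg (u x)) (T.l_nonneg x)
      have h3 := mul_nonneg (T.l_nonneg x) (sub_nonneg.2 (hv x hx))
      simp only [Nat.cast_ofNat]
      norm_num
      nlinarith) x hx
  linarith

lemma Traj.y_ge (T : Traj u v y L l) {a b : ℝ} (ha : 0 ≤ a) (hb : b ≤ 2000)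
    (hB : ∀ x ∈ Set.Icc a b, Box (u x) (v x) (y x)) (hu : ∀ x ∈ Set.Icc a b, 0 ≤ u x)
    (hv : ∀ x ∈ Set.Icc a b, u x ^ 2 / 10 ≤ v x)
    (h0 : 0.0055 * u a ^ 3 ≤ y a) :
    ∀ x ∈ Set.Icc a b, 0.0055 * u x ^ 3 ≤ y x := by
  intro x hx
  have := T.compare (f := fun x => y x - 0.0055 * u x ^ 3) (15 / 1024) 3 (sub_nonneg.2 h0)
    (fun x hx => by
      have hx' : x ∈ Set.Icc (0 : ℝ) 2000 := ⟨ha.trans hx.1, hx.2.trans hb⟩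
      obtain ⟨h1, h2, h3⟩ := hB x hx
      exact (T.dy x hx' h1 h2 h3).sub (((T.du x hx' h1 h2 h3).pow 3).const_mul 0.0055))
    (fun x hx => by
      have h1 := pow_nonneg (hu x hx) 3
      have h2 := mul_nonneg (sq_nonneg (u x)) (T.l_nonneg x)
      have h3 := mul_nonneg (T.l_nonneg x) (sub_nonneg.2 (hv x hx))
      simp only [Nat.cast_ofNat]
      norm_num
      nlinarith) x hx
  linarith

lemma Traj.v_ge2 (T : Traj u v y L l) {a b : ℝ} (ha : 0 ≤ a) (hb : b ≤ 2000)
    (hB : ∀ x ∈ Set.Icc a b, Box (u x) (v x) (y x)) (hu : ∀ x ∈ Set.Icc a b, 9 ≤ u x)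
    (hl : ∀ x ∈ Set.Icc a b, 1 ≤ 8 * l x) (h0 : 0.9 * u a ≤ v a) :
    ∀ x ∈ Set.Icc a b, 0.9 * u x ≤ v x := by
  intro x hx
  have := T.compare (f := fun x => v x - 0.9 * u x) (-15 / 64) 2 (sub_nonneg.2 h0)
    (fun x hx => by
      have hx' : x ∈ Set.Icc (0 : ℝ) 2000 := ⟨ha.trans hx.1, hx.2.trans hb⟩
      obtain ⟨h1, h2, h3⟩ := hB x hx
      exact (T.dv x hx' h1 h2 h3).sub ((T.du x hx' h1 h2 h3).const_mul 0.9))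
    (fun x hx => by
      have h1 := mul_nonneg (sub_nonneg.2 (hu x hx)) (sub_nonneg.2 (hl x hx))
      have h2 := mul_nonneg (sub_nonneg.2 (hu x hx)) (T.l_nonneg x)
      have := hl x hx
      norm_num
      nlinarith) x hx
  linarith

lemma Traj.y_ge2 (T : Traj u v y L l) {a b : ℝ} (ha : 0 ≤ a) (hb : b ≤ 2000)
    (hB : ∀ x ∈ Set.Icc a b, Box (u x) (v x) (y x)) (hu : ∀ x ∈ Set.Icc a b, 9 ≤ u x)
    (hv : ∀ x ∈ Set.Icc a b, 0.9 * u x ≤ v x) (h0 : 0.049 * u a ^ 2 ≤ y a) :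
    ∀ x ∈ Set.Icc a b, 0.049 * u x ^ 2 ≤ y x := by
  intro x hx
  have := T.compare (f := fun x => y x - 0.049 * u x ^ 2) (15 / 1024) 3 (sub_nonneg.2 h0)
    (fun x hx => by
      have hx' : x ∈ Set.Icc (0 : ℝ) 2000 := ⟨ha.trans hx.1, hx.2.trans hb⟩
      obtain ⟨h1, h2, h3⟩ := hB x hx
      exact (T.dy x hx' h1 h2 h3).sub (((T.du x hx' h1 h2 h3).pow 2).const_mul 0.049))
    (fun x hx => by
      have h1 := sq_nonneg (u x)
      have h2 := mul_nonneg (sq_nonneg (u x)) (T.l_nonneg x)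
      have h3 := mul_nonneg (T.l_nonneg x) (sub_nonneg.2 (hv x hx))
      have h4 := mul_nonneg (T.l_nonneg x) (sub_nonneg.2 (hu x hx))
      have h5 := T.l_nonneg x
      simp only [Nat.cast_ofNat]
      norm_num
      nlinarith) x hx
  linarith

/-- linear growth of `u` -/
lemma Traj.u_growth (T : Traj u v y L l) {a b c : ℝ} (ha : 0 ≤ a) (hb : b ≤ 2000)
    (hB : ∀ x ∈ Set.Icc a b, Box (u x) (v x) (y x))
    (h : ∀ x ∈ Set.Icc a b, c ≤ (-3 / 64) * u x + l x * (u x + 4)) :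
    ∀ x ∈ Set.Icc a b, u a + c * (x - a) ≤ u x := by
  intro x hx
  have := T.compare (f := fun x => u x - (u a + c * (x - a))) (a := a) (b := b) 0 0
    (by simp)
    (fun x hx => by
      have hx' : x ∈ Set.Icc (0 : ℝ) 2000 := ⟨ha.trans hx.1, hx.2.trans hb⟩
      obtain ⟨h1, h2, h3⟩ := hB x hx
      exact (T.du x hx' h1 h2 h3).sub
        ((((hasDerivAt_id x).sub_const a).const_mul c).const_add (u a)))
    (fun x hx => by
      have h1 := h x hx
      linarith) x hx
  linarith

def W1 (u v y : ℝ) : Prop := -1 ≤ u ∧ -1 ≤ v ∧ v ≤ 1000 ∧ -1 ≤ y ∧ y ≤ 1000 ∧ 0 ≤ AA u v y ∧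
  1 / 10 ≤ DD u v y ∧ u * DD u v y ≤ 14 * AA u v y
def Q1 (u v y : ℝ) : Prop := -1 < u ∧ -1 < v ∧ v < 1000 ∧ -1 < y ∧ y < 1000 ∧ 0 < AA u v y ∧
  1 / 10 < DD u v y ∧ u * DD u v y < 14 * AA u v y
def W2 (u v y : ℝ) : Prop := -1 ≤ u ∧ u ≤ 1000 ∧ -1 ≤ v ∧ v ≤ 1000 ∧ -1 ≤ y ∧ y ≤ 1000 ∧
  0 ≤ AA u v y ∧ 1 / 10 ≤ DD u v y ∧ DD u v y ≤ 8 * AA u v y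
def Q2 (u v y : ℝ) : Prop := -1 < u ∧ u < 1000 ∧ -1 < v ∧ v < 1000 ∧ -1 < y ∧ y < 1000 ∧
  0 < AA u v y ∧ 1 / 10 < DD u v y ∧ DD u v y < 8 * AA u v y

def Inv1 (u v y : ℝ) : Prop := 0 ≤ u ∧ u ^ 2 / 10 ≤ v ∧ v ≤ u ^ 2 / 8 ∧
  0.0055 * u ^ 3 ≤ y ∧ y ≤ 0.0086 * u ^ 3
def Inv2 (u v y : ℝ) : Prop := 9 ≤ u ∧ 0.9 * u ≤ v ∧ v ≤ u ^ 2 / 8 ∧ 0.049 * u ^ 2 ≤ y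

lemma Q1_of_Inv1 {u v y : ℝ} (h : Inv1 u v y) (hu : u ≤ 9) : Q1 u v y ∧ 1 / 5 ≤ DD u v y ∧
    DD u v y ≤ 18 := by
  obtain ⟨h0, h1, h2, h3, h4⟩ := h
  have hs : u ^ 2 ≤ 81 := by nlinarith
  have hc : u ^ 3 ≤ 729 := by nlinarith
  have hc0 : 0 ≤ u ^ 3 := by positivity
  have hv0 : 0 ≤ v := by nlinarith [sq_nonneg u]
  have hy0 : 0 ≤ y := by linarith
  unfold Q1 AA DD
  refine ⟨⟨by linarith, by linarith, by linarith, by linarith, by linarith, by linarith, ?_, ?_⟩,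
    ?_, by linarith⟩
  · nlinarith [sq_nonneg (u - 7.5)]
  · have e1 : 0 ≤ (7 - 2 / 3 * u) * (v - u ^ 2 / 10) :=
      mul_nonneg (by linarith) (by linarith)
    have e2 : 0 ≤ u * (0.0086 * u ^ 3 - y) := mul_nonneg h0 (by linarith)
    have e3 : 0 ≤ u ^ 3 * (9 - u) := mul_nonneg hc0 (by linarith)
    have e4 : 0 ≤ u ^ 2 * (9 - u) := mul_nonneg (sq_nonneg u) (by linarith)
    norm_num at e2
    nlinarith [sq_nonneg (u - 1)]
  · nlinarith [sq_nonneg (u - 7.5)]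

lemma Q2_of_Inv2 {u v y : ℝ} (h : Inv2 u v y) (hy : y ≤ 8.01 + 3.01 * u) :
    Q2 u v y ∧ 1 / 5 ≤ DD u v y ∧ u ≤ 65 := by
  obtain ⟨h0, h1, h2, h3⟩ := h
  have hu : u ≤ 65 := by
    by_contra hc
    push Not at hc
    nlinarith
  have hs : u ^ 2 ≤ 4225 := by nlinarith
  unfold Q2 AA DD
  refine ⟨⟨by linarith, by linarith, by linarith, by linarith, by nlinarith, by linarith,
    by nlinarith, ?_, by nlinarith⟩, ?_, hu⟩ <;> nlinarith

lemma Traj.phase1_aux (T : Traj u v y L l) {b : ℝ} (hb : b ≤ 2000)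
    (hu : ∀ x ∈ Set.Icc 0 b, u x ≤ 9) (hW : ∀ x ∈ Set.Icc 0 b, W1 (u x) (v x) (y x)) :
    ∀ x ∈ Set.Icc 0 b, Inv1 (u x) (v x) (y x) ∧ u x ≤ 14 * l x := by
  have hB : ∀ x ∈ Set.Icc 0 b, Box (u x) (v x) (y x) := fun x hx => by
    obtain ⟨h1, h2, h3, h4, h5, -⟩ := hW x hx
    exact ⟨⟨h1, by linarith [hu x hx]⟩, ⟨h2, h3⟩, h4, h5⟩
  have hl : ∀ x ∈ Set.Icc 0 b, u x ≤ 14 * l x := fun x hx => by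
    obtain ⟨-, -, -, -, -, h6, h7, h8⟩ := hW x hx
    obtain ⟨b1, b2, b3⟩ := hB x hx
    have := T.l_eq x b1 b2 b3 h6 h7
    rw [← this] at h8
    by_contra hc
    push Not at hc
    nlinarith
  have h1 := T.u_nonneg le_rfl hb hB T.u0.ge
  have h2 := T.v_le le_rfl hb hB (by rw [T.u0, T.v0]; norm_num)
  have h3 := T.v_ge le_rfl hb hB h1 hl (by rw [T.u0, T.v0]; norm_num)
  have h4 := T.y_le le_rfl hb hB h1 hl h2 (by rw [T.u0, T.y0]; norm_num)
  have h5 := T.y_ge le_rfl hb hB h1 h3 (by rw [T.u0, T.y0]; norm_num)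
  exact fun x hx => ⟨⟨h1 x hx, h3 x hx, h2 x hx, h5 x hx, h4 x hx⟩, hl x hx⟩

lemma Traj.phase1 (T : Traj u v y L l) {b : ℝ} (hb : b ≤ 2000)
    (hu : ∀ x ∈ Set.Icc 0 b, u x ≤ 9) :
    ∀ x ∈ Set.Icc 0 b, Inv1 (u x) (v x) (y x) ∧ u x ≤ 14 * l x := by
  have cu := T.cu
  have cv := T.cv
  have cy := T.cy
  have hQ : ∀ t ∈ Set.Icc 0 b, Q1 (u t) (v t) (y t) := by
    refine bootstrap (W := fun t => W1 (u t) (v t) (y t)) ?_ ?_ ?_ ?_ ?_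
    · unfold Q1 AA DD
      repeat' apply IsOpen.and
      all_goals apply isOpen_lt <;> fun_prop
    · unfold W1 AA DD
      repeat' apply IsClosed.and
      all_goals apply isClosed_le <;> fun_prop
    · rintro x ⟨h1, h2, h3, h4, h5, h6, h7, h8⟩
      exact ⟨h1.le, h2.le, h3.le, h4.le, h5.le, h6.le, h7.le, h8.le⟩
    · rw [T.u0, T.v0, T.y0]; unfold Q1 AA DD; norm_num
    · intro t ht hW
      exact (Q1_of_Inv1 (T.phase1_aux (ht.2.trans hb) (fun x hx => hu x ⟨hx.1, hx.2.trans ht.2⟩)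
        hW t ⟨ht.1, le_rfl⟩).1 (hu t ht)).1
  refine T.phase1_aux hb hu fun x hx => ?_
  obtain ⟨h1, h2, h3, h4, h5, h6, h7, h8⟩ := hQ x hx
  exact ⟨h1.le, h2.le, h3.le, h4.le, h5.le, h6.le, h7.le, h8.le⟩

lemma Traj.hit9 (T : Traj u v y L l) : ∃ x₁ ∈ Set.Icc (0 : ℝ) 1000, u x₁ = 9 ∧
    ∀ x ∈ Set.Icc 0 x₁, u x ≤ 9 := by
  have hex : ∃ x ∈ Set.Icc (0 : ℝ) 1000, 9 ≤ u x := by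
    by_contra hc
    push Not at hc
    have hu : ∀ x ∈ Set.Icc (0 : ℝ) 1000, u x ≤ 9 := fun x hx => (hc x hx).le
    have h1 := T.phase1 (by norm_num) hu
    have hQ := fun x hx => Q1_of_Inv1 (h1 x hx).1 (hu x hx)
    have hB : ∀ x ∈ Set.Icc (0 : ℝ) 1000, Box (u x) (v x) (y x) := fun x hx => by
      obtain ⟨⟨h1, h2, h3, h4, h5, -⟩, -⟩ := hQ x hx
      exact ⟨⟨h1.le, by linarith [hu x hx]⟩, ⟨h2.le, h3.le⟩, h4.le, h5.le⟩
    have h2 := T.u_growth (c := 0.01) le_rfl (by norm_num) hB (fun x hx => by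
      obtain ⟨b1, b2, b3⟩ := hB x hx
      obtain ⟨⟨-, -, -, -, -, h6, h7, -⟩, -, h9⟩ := hQ x hx
      have e := T.l_eq x b1 b2 b3 h6.le h7.le
      obtain ⟨⟨i1, i2, -, i4, -⟩, i6⟩ := h1 x hx
      have hA : 1 / 16 ≤ AA (u x) (v x) (y x) := by
        unfold AA
        have := pow_nonneg i1 3
        have := pow_nonneg i1 2
        linarith
      have hl0 := T.l_nonneg x
      have hl : 1 / 16 ≤ 18 * l x := by nlinarith
      nlinarith [mul_nonneg hl0 i1]) 1000 ⟨by norm_num, le_rfl⟩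
    have h3 := hu 1000 ⟨by norm_num, le_rfl⟩
    rw [T.u0] at h2
    linarith
  obtain ⟨b, hb, hb9⟩ := hex
  obtain ⟨s, hs, e, hlt⟩ := first_hit T.cu hb.1 (by rw [T.u0]; norm_num) hb9
  refine ⟨s, ⟨hs.1, hs.2.trans hb.2⟩, e, fun x hx => ?_⟩
  rcases hx.2.eq_or_lt with h | h
  · rw [h, e]
  · exact (hlt x ⟨hx.1, h⟩).le

lemma Traj.phase2_aux (T : Traj u v y L l) {a b : ℝ} (ha : 0 ≤ a) (hb : b ≤ 2000)
    (h0 : Inv2 (u a) (v a) (y a)) (hW : ∀ x ∈ Set.Icc a b, W2 (u x) (v x) (y x)) :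
    ∀ x ∈ Set.Icc a b, Inv2 (u x) (v x) (y x) ∧ u a + 0.5 * (x - a) ≤ u x := by
  have hB : ∀ x ∈ Set.Icc a b, Box (u x) (v x) (y x) := fun x hx => by
    obtain ⟨h1, h1', h2, h3, h4, h5, -⟩ := hW x hx
    exact ⟨⟨h1, h1'⟩, ⟨h2, h3⟩, h4, h5⟩
  have hl : ∀ x ∈ Set.Icc a b, 1 ≤ 8 * l x := fun x hx => by
    obtain ⟨-, -, -, -, -, -, h6, h7, h8⟩ := hW x hx
    obtain ⟨b1, b2, b3⟩ := hB x hx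
    have := T.l_eq x b1 b2 b3 h6 h7
    rw [← this] at h8
    by_contra hc
    push Not at hc
    nlinarith
  obtain ⟨i1, i2, i3, i4⟩ := h0
  have h1 := T.u_nonneg ha hb hB (by linarith)
  have h2 := T.v_le ha hb hB i3
  have hg := T.u_growth (c := 0.5) ha hb hB (fun x hx => by
    have := hl x hx
    have := h1 x hx
    nlinarith)
  have hu : ∀ x ∈ Set.Icc a b, 9 ≤ u x := fun x hx => by linarith [hg x hx, hx.1]
  have h3 := T.v_ge2 ha hb hB hu hl i2
  have h4 := T.y_ge2 ha hb hB hu h3 i4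
  exact fun x hx => ⟨⟨hu x hx, h3 x hx, h2 x hx, h4 x hx⟩, hg x hx⟩

lemma Traj.phase2 (T : Traj u v y L l) {a b : ℝ} (ha : 0 ≤ a) (hb : b ≤ 2000)
    (h0 : Inv2 (u a) (v a) (y a)) (hy : ∀ x ∈ Set.Icc a b, y x ≤ 8.01 + 3.01 * u x) :
    ∀ x ∈ Set.Icc a b, Inv2 (u x) (v x) (y x) ∧ u a + 0.5 * (x - a) ≤ u x := by
  have cu := T.cu
  have cv := T.cv
  have cy := T.cy
  rcases lt_or_ge b a with hab | hab
  · intro x hx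
    linarith [hx.1, hx.2]
  have hQ : ∀ t ∈ Set.Icc a b, Q2 (u t) (v t) (y t) := by
    refine bootstrap (W := fun t => W2 (u t) (v t) (y t)) ?_ ?_ ?_ ?_ ?_
    · unfold Q2 AA DD
      repeat' apply IsOpen.and
      all_goals apply isOpen_lt <;> fun_prop
    · unfold W2 AA DD
      repeat' apply IsClosed.and
      all_goals apply isClosed_le <;> fun_prop
    · rintro x ⟨h1, h1', h2, h3, h4, h5, h6, h7, h8⟩
      exact ⟨h1.le, h1'.le, h2.le, h3.le, h4.le, h5.le, h6.le, h7.le, h8.le⟩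
    · exact (Q2_of_Inv2 h0 (hy a ⟨le_rfl, hab⟩)).1
    · intro t ht hW
      exact (Q2_of_Inv2 (T.phase2_aux ha (ht.2.trans hb) h0 hW t ⟨ht.1, le_rfl⟩).1
        (hy t ht)).1
  refine T.phase2_aux ha hb h0 fun x hx => ?_
  obtain ⟨h1, h1', h2, h3, h4, h5, h6, h7, h8⟩ := hQ x hx
  exact ⟨h1.le, h1'.le, h2.le, h3.le, h4.le, h5.le, h6.le, h7.le, h8.le⟩

/-- everything we need about the trajectory -/
lemma Traj.final (T : Traj u v y L l) : ∃ R ∈ Set.Icc (0 : ℝ) 2000,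
    (∀ x ∈ Set.Icc 0 R, (0 ≤ u x ∧ u x ≤ 65) ∧ (0 ≤ v x ∧ v x ≤ u x ^ 2 / 8) ∧
      (0 ≤ y x ∧ y x ≤ 204) ∧ 1 / 5 ≤ DD (u x) (v x) (y x)) ∧ y R = 8.01 + 3.01 * u R := by
  obtain ⟨x₁, hx₁, e9, hle⟩ := T.hit9
  have hp := T.phase1 (hx₁.2.trans (by norm_num)) hle
  have hI1 := (hp x₁ ⟨hx₁.1, le_rfl⟩).1
  have hI2 : Inv2 (u x₁) (v x₁) (y x₁) := by
    obtain ⟨-, i2, i3, i4, i5⟩ := hI1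
    rw [e9] at *
    exact ⟨le_rfl, by linarith, i3, by linarith⟩
  have hex : ∃ x ∈ Set.Icc x₁ 2000, 0 ≤ y x - (8.01 + 3.01 * u x) := by
    by_contra hc
    push Not at hc
    have h1 : ∀ x ∈ Set.Icc x₁ 2000, y x ≤ 8.01 + 3.01 * u x := fun x hx => by
      linarith [hc x hx]
    have hm : (2000 : ℝ) ∈ Set.Icc x₁ 2000 := ⟨hx₁.2.trans (by norm_num), le_rfl⟩
    obtain ⟨h2, h3⟩ := T.phase2 hx₁.1 le_rfl hI2 h1 2000 hm
    have := (Q2_of_Inv2 h2 (h1 _ hm)).2.2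
    have := hx₁.2
    linarith
  obtain ⟨b, hb, hbb⟩ := hex
  have cu := T.cu
  have cy := T.cy
  obtain ⟨R, hR, e, hlt⟩ := first_hit (f := fun x => y x - (8.01 + 3.01 * u x)) (by fun_prop)
    hb.1 (by
      obtain ⟨-, i2, i3, i4, i5⟩ := hI1
      rw [e9] at *
      linarith) hbb
  have hyR : ∀ x ∈ Set.Icc x₁ R, y x ≤ 8.01 + 3.01 * u x := fun x hx => by
    rcases hx.2.eq_or_lt with h | h
    · rw [h]; linarith
    · linarith [hlt x ⟨hx.1, h⟩]
  have hR2 : R ≤ 2000 := hR.2.trans hb.2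
  have hp2 := T.phase2 hx₁.1 hR2 hI2 hyR
  refine ⟨R, ⟨hx₁.1.trans hR.1, hR2⟩, fun x hx => ?_, by linarith⟩
  rcases le_total x x₁ with h | h
  · have hi := (hp x ⟨hx.1, h⟩).1
    have hu := hle x ⟨hx.1, h⟩
    obtain ⟨-, hD, -⟩ := Q1_of_Inv1 hi hu
    obtain ⟨i1, i2, i3, i4, i5⟩ := hi
    have := pow_nonneg i1 2
    have h3 := pow_nonneg i1 3
    have := pow_le_pow_left₀ i1 hu 3
    exact ⟨⟨i1, by linarith⟩, ⟨by linarith, i3⟩, ⟨by linarith, by linarith⟩, hD⟩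
  · have hi := (hp2 x ⟨h, hx.2⟩).1
    have hy := hyR x ⟨h, hx.2⟩
    obtain ⟨-, hD, hu⟩ := Q2_of_Inv2 hi hy
    obtain ⟨i1, i2, i3, i4⟩ := hi
    have := pow_nonneg (show 0 ≤ u x by linarith) 2
    exact ⟨⟨by linarith, hu⟩, ⟨by linarith, i3⟩, ⟨by linarith, by linarith⟩, hD⟩

end

/-! ### Back to the original system -/

lemma sum_T (f : ℕ × ℕ → ℝ) : ∑ s ∈ typeSet 4 3, f s =
    f (0, 2) + f (0, 3) + f (1, 2) + f (1, 3) + f (2, 2) + f (2, 3) + f (3, 2) + f (3, 3)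
      + f (4, 2) + f (4, 3) := by
  have h : Finset.Icc 2 3 = ({2, 3} : Finset ℕ) := by decide
  rw [typeSet, Finset.sum_product, h]
  simp only [Finset.sum_range_succ, Finset.sum_range_zero]
  simp
  ring

/-- the states of the process -/
def zz (w a b c e : ℝ) (t : ℕ × ℕ) : ℝ :=
  if t = (4, 3) then w else if t = (3, 2) then a else if t = (2, 2) then b else
    if t = (1, 2) then c else if t = (0, 2) then e else 0

lemma sum_S (w a b c e : ℝ) : ∑ s ∈ typeSet 4 3, (s.1 : ℝ) * zz w a b c e s =
    4 * w + 3 * a + 2 * b + c := by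
  rw [sum_T]
  simp [zz]
  ring

lemma q_mem (w a b c e : ℝ) {t : ℕ × ℕ} (ht : t ∈ typeSet 4 3) : q 4 3 t (zz w a b c e) =
    (t.1 : ℝ) * zz w a b c e t / (4 * w + 3 * a + 2 * b + c) := by
  rw [q, if_pos ht, sum_S]

lemma q_not_mem (z : ℕ × ℕ → ℝ) {t : ℕ × ℕ} (ht : t ∉ typeSet 4 3) : q 4 3 t z = 0 := by
  rw [q, if_neg ht]

lemma g_zz (w a b c e : ℝ) : g 4 3 (zz w a b c e) =
    (4 * a + 4 / 3 * b) / (4 * w + 3 * a + 2 * b + c) := by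
  rw [g]
  simp only [Finset.sum_range_succ, Finset.sum_range_zero]
  rw [q_mem _ _ _ _ _ (by decide), q_mem _ _ _ _ _ (by decide), q_mem _ _ _ _ _ (by decide),
    q_mem _ _ _ _ _ (by decide), q_mem _ _ _ _ _ (by decide)]
  simp [zz]
  ring

lemma fin_zz (w a b c e : ℝ) : ∑ t ∈ typeSet 4 3, ((t.1 : ℝ) - 1) * q 4 3 t (zz w a b c e) =
    (12 * w + 6 * a + 2 * b) / (4 * w + 3 * a + 2 * b + c) := by
  have : ∑ t ∈ typeSet 4 3, ((t.1 : ℝ) - 1) * q 4 3 t (zz w a b c e) =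
      ∑ t ∈ typeSet 4 3, ((t.1 : ℝ) - 1) *
        ((t.1 : ℝ) * zz w a b c e t / (4 * w + 3 * a + 2 * b + c)) :=
    Finset.sum_congr rfl fun t ht => by rw [q_mem _ _ _ _ _ ht]
  rw [this, sum_T]
  simp [zz]
  ring

lemma Fvec_eq (z : ℕ × ℕ → ℝ) {t : ℕ × ℕ} (ht : t ∈ typeSet 4 3) : Fvec 4 3 t z =
    -(tune t * z t) + (∑ s ∈ typeSet 4 3, tune s * z s * (s.1 : ℝ)) * ΔB 4 3 t z := by
  unfold Fvec Δ
  have : ∀ s, tune s * z s * (-(if s = t then 1 else 0) + (s.1 : ℝ) * ΔB 4 3 t z) =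
      -(if s = t then tune s * z s else 0) + tune s * z s * (s.1 : ℝ) * ΔB 4 3 t z := by
    intro s
    split_ifs <;> ring
  simp only [this]
  rw [Finset.sum_add_distrib, Finset.sum_neg_distrib, Finset.sum_ite_eq' _ t, if_pos ht,
    Finset.sum_mul]

lemma tune_sum (w a b c e : ℝ) : ∑ s ∈ typeSet 4 3, tune s * zz w a b c e s * (s.1 : ℝ) =
    1 / 16 * w + 3 / 16 * a + 1 / 2 * b + 1 / 1024 * c := by
  rw [sum_T]
  simp [zz, tune]
  norm_num [zpow_neg]
  ring

/-- the vector field, with `m` the rate -/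
lemma Fvec_zz (w a b c e m : ℝ) (hS : 0 < 4 * w + 3 * a + 2 * b + c)
    (hD : 0 < 4 * w - a + 2 / 3 * b + c)
    (hm : m * (4 * w - a + 2 / 3 * b + c) = 1 / 16 * w + 3 / 16 * a + 1 / 2 * b + 1 / 1024 * c)
    (t : ℕ × ℕ) (ht : t ∈ typeSet 4 3) :
    Fvec 4 3 t (zz w a b c e) =
      zz (-(1 / 64 * w) - 4 * m * w) (-(1 / 16 * a) + m * (4 * w - 3 * a))
        (-(1 / 4 * b) + m * (a - 2 * b)) (-(1 / 1024 * c) + m * (2 / 3 * b - c))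
        (-(4 * e) + m * (1 / 3 * c)) t := by
  have hg : 1 - g 4 3 (zz w a b c e) =
      (4 * w - a + 2 / 3 * b + c) / (4 * w + 3 * a + 2 * b + c) := by
    rw [g_zz, eq_div_iff hS.ne', sub_mul, div_mul_cancel₀ _ hS.ne']
    ring
  have key : ∀ X : ℝ, (1 / 16 * w + 3 / 16 * a + 1 / 2 * b + 1 / 1024 * c) *
      (1 / ((4 * w - a + 2 / 3 * b + c) / (4 * w + 3 * a + 2 * b + c)) *
        (X / (4 * w + 3 * a + 2 * b + c))) = m * X := by
    intro X
    rw [← hm]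
    have h1 := hS.ne'
    have h2 := hD.ne'
    generalize 4 * w + 3 * a + 2 * b + c = S at *
    generalize 4 * w - a + 2 / 3 * b + c = D at *
    field_simp
  have ht' : t = (0, 2) ∨ t = (0, 3) ∨ t = (1, 2) ∨ t = (1, 3) ∨ t = (2, 2) ∨ t = (2, 3) ∨
      t = (3, 2) ∨ t = (3, 3) ∨ t = (4, 2) ∨ t = (4, 3) := by
    revert t
    decide
  have hq : -(q 4 3 t (zz w a b c e)) + (((t.2 : ℝ) + 1) / ((3 : ℕ) : ℝ)) *
      q 4 3 (t.1 + 1, t.2 + 1) (zz w a b c e)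
      + ((((3 : ℕ) : ℝ) - (t.2 : ℝ)) / ((3 : ℕ) : ℝ)) * q 4 3 (t.1 + 1, t.2) (zz w a b c e) =
      (zz (- 4 * w) (4 * w - 3 * a) (a - 2 * b) (2 / 3 * b - c) (1 / 3 * c) t) /
        (4 * w + 3 * a + 2 * b + c) := by
    have hs := sum_S w a b c e
    rcases ht' with rfl | rfl | rfl | rfl | rfl | rfl | rfl | rfl | rfl | rfl <;>
      simp only [q, hs] <;> simp [typeSet, zz] <;> ring
  rw [Fvec_eq _ ht, tune_sum, ΔB, hg, hq, key]
  rcases ht' with rfl | rfl | rfl | rfl | rfl | rfl | rfl | rfl | rfl | rfl <;>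
    simp [zz, tune] <;> norm_num [zpow_neg] <;> ring

lemma zz_deriv {w a b c e : ℝ → ℝ} {w' a' b' c' e' x : ℝ} (hw : HasDerivAt w w' x)
    (ha : HasDerivAt a a' x) (hb : HasDerivAt b b' x) (hc : HasDerivAt c c' x)
    (he : HasDerivAt e e' x) (t : ℕ × ℕ) :
    HasDerivAt (fun s => zz (w s) (a s) (b s) (c s) (e s) t) (zz w' a' b' c' e' t) x := by
  unfold zz
  split_ifs
  all_goals first | assumption | exact hasDerivAt_const _ _

/-- **Numerical computation** for `(r, p) = (4, 3)`: the solution of the greedy-coloring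
ODE started from the pure type `(4, 3)` stays subcritical (`g < 0.99999`) up to a time
`R` at which the branching process describing components of the remainder graph is also
subcritical. -/
theorem numerical_computation_T4 :
    ∃ (R : ℝ) (σ : ℝ → ℕ × ℕ → ℝ), 0 ≤ R ∧
      σ 0 (4, 3) = 1 ∧
      (∀ t : ℕ × ℕ, t ≠ (4, 3) → σ 0 t = 0) ∧
      (∀ x ∈ Set.Icc (0 : ℝ) R, ∀ t ∈ typeSet 4 3,
        HasDerivAt (fun y => σ y t) (Fvec 4 3 t (σ x)) x) ∧
      (∀ x ∈ Set.Icc (0 : ℝ) R, g 4 3 (σ x) < 0.99999) ∧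
      (∑ t ∈ typeSet 4 3, ((t.1 : ℝ) - 1) * q 4 3 t (σ R)) < 0.99999 := by
  obtain ⟨u, v, y, L, l, T⟩ := exists_traj
  obtain ⟨R, hR, hx, hend⟩ := T.final
  have cu := T.cu
  have cv := T.cv
  have cy := T.cy
  have cl := T.cl
  have cL : Continuous L := continuous_iff_continuousAt.2 fun x => (T.dL x).continuousAt
  obtain ⟨w, hw⟩ : ∃ w : ℝ → ℝ, w = fun x => Real.exp (-(1 / 64 * x + 4 * L x)) := ⟨_, rfl⟩
  have hwpos : ∀ x, 0 < w x := fun x => by rw [hw]; exact Real.exp_pos _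
  have hw0 : w 0 = 1 := by rw [hw]; simp [T.L0]
  have cw : Continuous w := by rw [hw]; fun_prop
  have dw : ∀ x, HasDerivAt w (w x * (-(1 / 64 * 1 + 4 * l x))) x := fun x => by
    rw [hw]
    exact ((((hasDerivAt_id x).const_mul (1 / 64)).add ((T.dL x).const_mul 4)).neg).exp
  let φ : ℝ → ℝ := fun x => Real.exp (4 * x) * (l x * (1 / 3 * (y x * w x)))
  have cφ : Continuous φ := by fun_prop
  obtain ⟨e, he⟩ : ∃ e : ℝ → ℝ, e = fun x => Real.exp (-(4 * x)) * ∫ s in (0 : ℝ)..x, φ s :=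
    ⟨_, rfl⟩
  have he0 : e 0 = 0 := by rw [he]; simp
  have de : ∀ x, HasDerivAt e (-(4 * e x) + l x * (1 / 3 * (y x * w x))) x := fun x => by
    have h1 : HasDerivAt (fun x => Real.exp (-(4 * x))) (Real.exp (-(4 * x)) * (-(4 * 1))) x :=
      (((hasDerivAt_id x).const_mul 4).neg).exp
    have h2 : HasDerivAt (fun x => ∫ s in (0 : ℝ)..x, φ s) (φ x) x :=
      intervalIntegral.integral_hasDerivAt_right (cφ.intervalIntegrable _ _)
        (cφ.stronglyMeasurableAtFilter _ _) cφ.continuousAt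
    have h3 := h1.mul h2
    have h4 : Real.exp (-(4 * x)) * Real.exp (4 * x) = 1 := by
      rw [← Real.exp_add]; simp
    rw [he]
    refine h3.congr_deriv ?_
    simp only [φ]
    linear_combination (l x * (1 / 3 * (y x * w x))) * h4
  have hSpos : ∀ x ∈ Set.Icc 0 R, 0 < 4 + 3 * u x + 2 * v x + y x := fun x hx' => by
    obtain ⟨⟨a1, -⟩, ⟨a2, -⟩, ⟨a3, -⟩, -⟩ := hx x hx'
    linarith
  have hSe : ∀ x, 4 * w x + 3 * (u x * w x) + 2 * (v x * w x) + y x * w x =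
    w x * (4 + 3 * u x + 2 * v x + y x) := fun x => by ring
  refine ⟨R, fun x => zz (w x) (u x * w x) (v x * w x) (y x * w x) (e x), hR.1, ?_, ?_, ?_, ?_, ?_⟩
  · simp [zz, hw0]
  · intro t ht
    simp [zz, ht, T.u0, T.v0, T.y0, he0]
  · intro x hx' t ht
    obtain ⟨⟨a1, a1'⟩, ⟨a2, a2'⟩, ⟨a3, a3'⟩, hD⟩ := hx x hx'
    have hxm : x ∈ Set.Icc (0 : ℝ) 2000 := ⟨hx'.1, hx'.2.trans hR.2⟩
    have b1 : -1 ≤ u x ∧ u x ≤ 1000 := ⟨by linarith, by linarith⟩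
    have b2 : -1 ≤ v x ∧ v x ≤ 1000 := ⟨by linarith, by nlinarith⟩
    have b3 : -1 ≤ y x ∧ y x ≤ 1000 := ⟨by linarith, by linarith⟩
    have hl := T.l_eq x b1 b2 b3 (by unfold AA; positivity) (by linarith)
    have hwx := hwpos x
    have hDe : 4 * w x - u x * w x + 2 / 3 * (v x * w x) + y x * w x =
      w x * DD (u x) (v x) (y x) := by unfold DD; ring
    rw [Fvec_zz _ _ _ _ _ (l x) (by rw [hSe]; exact mul_pos hwx (hSpos x hx'))
      (by rw [hDe]; exact mul_pos hwx (by linarith))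
      (by rw [hDe]; unfold AA at hl; linear_combination (w x) * hl) t ht]
    refine zz_deriv ((dw x).congr_deriv (by ring))
      (((T.du x hxm b1 b2 b3).mul (dw x)).congr_deriv (by ring))
      (((T.dv x hxm b1 b2 b3).mul (dw x)).congr_deriv (by ring))
      (((T.dy x hxm b1 b2 b3).mul (dw x)).congr_deriv (by ring)) (de x) t
  · intro x hx'
    obtain ⟨⟨a1, a1'⟩, ⟨a2, a2'⟩, ⟨a3, a3'⟩, hD⟩ := hx x hx'
    have hwx := hwpos x
    have hS := hSpos x hx'
    have he : 4 * (u x * w x) + 4 / 3 * (v x * w x) = w x * (4 * u x + 4 / 3 * v x) := by ring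
    simp only [g_zz]
    rw [hSe, he, mul_div_mul_left _ _ hwx.ne', div_lt_iff₀ hS]
    unfold DD at hD
    have : u x ^ 2 ≤ 65 ^ 2 := pow_le_pow_left₀ a1 a1' 2
    linarith
  · have hR' : R ∈ Set.Icc 0 R := ⟨hR.1, le_rfl⟩
    obtain ⟨⟨a1, a1'⟩, ⟨a2, a2'⟩, ⟨a3, a3'⟩, hD⟩ := hx R hR'
    have hwx := hwpos R
    have hS := hSpos R hR'
    have he : 12 * w R + 6 * (u R * w R) + 2 * (v R * w R) =
      w R * (12 + 6 * u R + 2 * v R) := by ring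
    simp only [fin_zz]
    rw [hSe, he, mul_div_mul_left _ _ hwx.ne', div_lt_iff₀ hS, hend]
    nlinarith
end
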